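/- Interior Hessian estimate for σ_k augmented Hessian equations with general H under stronger integrability (a priori form of Theorem 6.1). Let n ≥ 3, let Ω ⊆ ℝⁿ be a domain, let 3 ≤ k ≤ n and p > kn. Let f : Ω×ℝ×ℝⁿ → ℝ be positive and C^{1,1}_loc, and let H : Ω×ℝ×ℝⁿ → Sym_n(ℝ) be C^{1,1}_loc. Fix concentric open balls B_R ⊂ B_{2R} with closure(B_{2R}) ⊂ Ω and a constant M > 0. Then there exists a constant C, depending only on n, k, p, R, f, H and M, such that every u ∈ C²(Ω) satisfying σ_k(A_H[u](x)) = f(x,u(x),∇u(x))^k and λ(A_H[u](x)) ∈ Γ_k^+ for every x ∈ Ω, together with ‖u‖_{W^{2,p}(B_{2R})} ≤ M, obeys sup_{x ∈ B_R} |∇²u(x)| ≤ C. -/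

import Mathlib

open MeasureTheory Metric Set Matrix

noncomputable section

/-- The `k`-th elementary symmetric polynomial of the eigenvalues of an `n × n` real
matrix, defined via the coefficients of the characteristic polynomial. -/
def esymmMat {n : ℕ} (k : ℕ) (A : Matrix (Fin n) (Fin n) ℝ) : ℝ :=
  (-1 : ℝ) ^ k * A.charpoly.coeff (n - k)

/-- `λ(A) ∈ Γ_k^+`, i.e. `σ_j(A) > 0` for all `1 ≤ j ≤ k`. -/
def GammaPlus {n : ℕ} (k : ℕ) (A : Matrix (Fin n) (Fin n) ℝ) : Prop :=
  ∀ j : ℕ, 1 ≤ j → j ≤ k → 0 < esymmMat j A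

/-- The Newton tensors `T_0(A) = I`, `T_j(A) = σ_j(A) I - T_{j-1}(A) A`. -/
def newtonT {n : ℕ} : ℕ → Matrix (Fin n) (Fin n) ℝ → Matrix (Fin n) (Fin n) ℝ
  | 0, _ => 1
  | (j + 1), A => esymmMat (j + 1) A • (1 : Matrix (Fin n) (Fin n) ℝ) - newtonT j A * A

/-- `i`-th partial derivative. -/
def pd {n : ℕ} (i : Fin n) (w : (Fin n → ℝ) → ℝ) (x : Fin n → ℝ) : ℝ :=
  fderiv ℝ w x (Pi.single i 1)

/-- Gradient as a vector. -/
def grad {n : ℕ} (w : (Fin n → ℝ) → ℝ) (x : Fin n → ℝ) : Fin n → ℝ :=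
  fun i => pd i w x

/-- Hessian matrix. -/
def hess {n : ℕ} (w : (Fin n → ℝ) → ℝ) (x : Fin n → ℝ) : Matrix (Fin n) (Fin n) ℝ :=
  Matrix.of fun i j => pd i (pd j w) x

/-- Squared Euclidean norm of a vector. -/
def normSq {n : ℕ} (ξ : Fin n → ℝ) : ℝ := ∑ i, ξ i ^ 2

/-- Euclidean norm of a vector. -/
def vnorm {n : ℕ} (ξ : Fin n → ℝ) : ℝ := Real.sqrt (∑ i, ξ i ^ 2)

/-- Operator norm of a matrix, viewed as a linear map between Euclidean spaces. -/
def matNorm {n : ℕ} (M : Matrix (Fin n) (Fin n) ℝ) : ℝ :=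
  ‖LinearMap.toContinuousLinearMap (Matrix.toEuclideanLin M)‖

/-- Laplacian. -/
def lapl {n : ℕ} (w : (Fin n → ℝ) → ℝ) (x : Fin n → ℝ) : ℝ := ∑ l, pd l (pd l w) x

/-- `W^{2,p}` norm (with classical derivatives) on a set. -/
def W2pNorm {n : ℕ} (p : ℝ) (w : (Fin n → ℝ) → ℝ) (B : Set (Fin n → ℝ)) : ℝ :=
  (∫ x in B, (|w x| ^ p + vnorm (grad w x) ^ p + matNorm (hess w x) ^ p)) ^ (1 / p)

/-- `C^{1,1}_loc` on a set: continuously differentiable with locally Lipschitz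
first derivatives. -/
def C11On {E F : Type*} [NormedAddCommGroup E] [NormedSpace ℝ E]
    [NormedAddCommGroup F] [NormedSpace ℝ F] (f : E → F) (s : Set E) : Prop :=
  ContDiffOn ℝ 1 f s ∧
    ∀ x ∈ s, ∃ (K : NNReal) (t : Set E), t ∈ nhdsWithin x s ∧
      LipschitzOnWith K (fderivWithin ℝ f s) t

/-- First order difference quotient `∇_l^h`. -/
def dq {n : ℕ} (l : Fin n) (h : ℝ) (w : (Fin n → ℝ) → ℝ) (x : Fin n → ℝ) : ℝ :=
  (w (x + h • (Pi.single l 1 : Fin n → ℝ)) - w x) / h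

/-- Second order difference quotient `Δ_{ll}^h`. -/
def ddq {n : ℕ} (l : Fin n) (h : ℝ) (w : (Fin n → ℝ) → ℝ) (x : Fin n → ℝ) : ℝ :=
  (w (x + h • (Pi.single l 1 : Fin n → ℝ)) - 2 * w x + w (x - h • (Pi.single l 1 : Fin n → ℝ))) / h ^ 2

/-- `L^s` seminorm (as an extended real number) of a function on a set. -/
def lpN {n : ℕ} (s : ℝ) (w : (Fin n → ℝ) → ℝ) (S : Set (Fin n → ℝ)) : ENNReal :=
  (∫⁻ x in S, ENNReal.ofReal (|w x| ^ s)) ^ (1 / s)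

end

/-!
By Gårding's inequality `A ↦ σ_k(A)^{1/k}` is concave on the `Γ_k^+` cone, so at every point the
linearised operator `F` of the equation is a supporting functional: applied to a second difference
quotient of the equation it shows that `v = ∑ l, Δ_ll^h u`, which approximates `Δu` and controls
`∇²u`, satisfies `tr (F ∇²v) ≥ -C tr F (|v| + |∇v| + |∇²u|²)`. Moreover `tr F ≤ C |∇²u|^{k-1}` and
`det N ≤ (tr (F N))^n` for `N ≥ 0`. Only `u ∈ C²` is available, which is why difference quotients
replace third and fourth derivatives.

Localise to `w = ρ^{b+2} v` with `ρ = 1 - |x - x₁|² / r²`, let `m = max w` and `θ = 2 / (b + 2)`.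
On the upper contact set of `w` the gradient of `w` is controlled by `w`, so interpolation between
`w ≤ m` and `v ≤ |∇²u|` gives `|det ∇²w| ≤ (C m^{1-θ} |∇²u|^{k+θ})^n`. The
Alexandrov–Bakelman–Pucci estimate then yields `m^n ≤ C m^{n(1-θ)} ∫ |∇²u|^{n(k+θ)}`. For `b` large
`n (k + θ) ≤ p`, the integral is bounded by the `W^{2,p}` norm, and `m` is bounded.
-/

section ElementarySymmetric

variable {ι : Type*}

/-- The elementary symmetric polynomial `σ_k` of the family `x` restricted to the finite index
set `s`. Unlike `Multiset.esymm` it keeps track of the indices, so that a variable can be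
removed by passing to `s.erase i`. -/
noncomputable def esymmOn (s : Finset ι) (k : ℕ) (x : ι → ℝ) : ℝ :=
  ∑ t ∈ s.powersetCard k, ∏ i ∈ t, x i

@[simp] lemma esymmOn_zero (s : Finset ι) (x : ι → ℝ) : esymmOn s 0 x = 1 := by
  simp [esymmOn]

@[simp] lemma esymmOn_one (s : Finset ι) (x : ι → ℝ) : esymmOn s 1 x = ∑ i ∈ s, x i := by
  simp [esymmOn, Finset.powersetCard_one]

lemma esymmOn_empty_succ (k : ℕ) (x : ι → ℝ) : esymmOn (∅ : Finset ι) (k + 1) x = 0 := by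
  rw [esymmOn, Finset.powersetCard_eq_empty.2 (by simp), Finset.sum_empty]

lemma esymmOn_smul (s : Finset ι) (k : ℕ) (t : ℝ) (x : ι → ℝ) :
    esymmOn s k (t • x) = t ^ k * esymmOn s k x := by
  rw [esymmOn, esymmOn, Finset.mul_sum]
  refine Finset.sum_congr rfl fun u hu => ?_
  simp only [Pi.smul_apply, smul_eq_mul, Finset.prod_mul_distrib, Finset.prod_const,
    (Finset.mem_powersetCard.1 hu).2]

variable [DecidableEq ι]

lemma esymmOn_insert {s : Finset ι} {a : ι} (ha : a ∉ s) (k : ℕ) (x : ι → ℝ) :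
    esymmOn (insert a s) (k + 1) x = esymmOn s (k + 1) x + x a * esymmOn s k x := by
  have notMem_of_mem {j : ℕ} {t : Finset ι} (ht : t ∈ s.powersetCard j) : a ∉ t :=
    fun h => ha ((Finset.mem_powersetCard.1 ht).1 h)
  simp only [esymmOn]
  rw [Finset.powersetCard_succ_insert ha, Finset.sum_union, Finset.sum_image, Finset.mul_sum]
  · exact congrArg _ (Finset.sum_congr rfl fun t ht => Finset.prod_insert (notMem_of_mem ht))
  · intro t ht t' ht' h
    rw [← Finset.erase_insert (notMem_of_mem ht), ← Finset.erase_insert (notMem_of_mem ht'), h]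
  · rw [Finset.disjoint_left]
    intro t ht ht'
    obtain ⟨t', -, rfl⟩ := Finset.mem_image.1 ht'
    exact notMem_of_mem ht (Finset.mem_insert_self _ _)

lemma esymmOn_erase {s : Finset ι} {a : ι} (ha : a ∈ s) (k : ℕ) (x : ι → ℝ) :
    esymmOn s (k + 1) x = esymmOn (s.erase a) (k + 1) x + x a * esymmOn (s.erase a) k x := by
  rw [← esymmOn_insert (Finset.notMem_erase a s), Finset.insert_erase ha]

omit [DecidableEq ι] in
lemma coeff_prod_one_add_C_mul_X (s : Finset ι) (x : ι → ℝ) (k : ℕ) :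
    (∏ i ∈ s, (1 + Polynomial.C (x i) * Polynomial.X)).coeff k = esymmOn s k x := by
  classical
  induction s using Finset.induction_on generalizing k with
  | empty => cases k <;> simp [esymmOn_empty_succ, Polynomial.coeff_one]
  | insert a s ha ih =>
    rw [Finset.prod_insert ha, add_mul, one_mul, Polynomial.coeff_add, mul_assoc,
      Polynomial.coeff_C_mul, ih]
    cases k with
    | zero => simp
    | succ k => rw [Polynomial.coeff_X_mul, ih, esymmOn_insert ha]

lemma hasDerivAt_esymmOn_add_smul (s : Finset ι) (x y : ι → ℝ) (k : ℕ) :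
    HasDerivAt (fun t : ℝ => esymmOn s (k + 1) (x + t • y))
      (∑ i ∈ s, y i * esymmOn (s.erase i) k x) 0 := by
  induction s using Finset.induction_on generalizing k with
  | empty => simp [esymmOn_empty_succ, hasDerivAt_const]
  | insert a s ha ih =>
    have erase_insert_comm : ∀ i ∈ s, (insert a s).erase i = insert a (s.erase i) :=
      fun i hi => Finset.erase_insert_of_ne fun h => ha (h ▸ hi)
    have notMem_erase (i : ι) : a ∉ s.erase i := fun h => ha (Finset.mem_of_mem_erase h)
    have hline : HasDerivAt (fun t : ℝ => x a + t * y a) (y a) 0 := by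
      simpa using ((hasDerivAt_id (0 : ℝ)).mul_const (y a)).const_add (x a)
    have hsplit : (fun t : ℝ => esymmOn (insert a s) (k + 1) (x + t • y)) = fun t : ℝ =>
        esymmOn s (k + 1) (x + t • y) + (x a + t * y a) * esymmOn s k (x + t • y) := by
      funext t
      simp [esymmOn_insert ha]
    rw [Finset.sum_insert ha, Finset.erase_insert ha, hsplit,
      Finset.sum_congr rfl fun i hi => by rw [erase_insert_comm i hi]]
    cases k with
    | zero =>
      simp only [esymmOn_zero, mul_one]
      refine ((ih 0).add hline).congr_deriv ?_
      simp [add_comm]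
    | succ k =>
      refine ((ih (k + 1)).add (hline.mul (ih k))).congr_deriv ?_
      simp only [zero_smul, add_zero, zero_mul, esymmOn_insert (notMem_erase _), mul_add,
        Finset.sum_add_distrib, Finset.mul_sum]
      rw [Finset.sum_congr rfl fun i _ => mul_left_comm (x a) (y i) _]
      ring

/-- Euler's identity for homogeneous functions: differentiate `σ_{k+1}((1 + t) x)` at `t = 0`. -/
lemma sum_mul_esymmOn_erase (s : Finset ι) (x : ι → ℝ) (k : ℕ) :
    ∑ i ∈ s, x i * esymmOn (s.erase i) k x = (k + 1) * esymmOn s (k + 1) x := by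
  have hpow : HasDerivAt (fun t : ℝ => (1 + t) ^ (k + 1) * esymmOn s (k + 1) x)
      ((k + 1) * esymmOn s (k + 1) x) 0 := by
    simpa using (((hasDerivAt_id (0 : ℝ)).const_add 1).pow (k + 1)).mul_const
      (esymmOn s (k + 1) x)
  refine (hasDerivAt_esymmOn_add_smul s x x k).unique (hpow.congr_of_eventuallyEq ?_)
  refine .of_forall fun t => ?_
  simp only [← esymmOn_smul, add_smul, one_smul]

end ElementarySymmetric

section NewtonInequality

open Polynomial

lemma splits_derivative {p : ℝ[X]} (hp : p.Splits) : (derivative p).Splits := by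
  by_cases h0 : derivative p = 0
  · rw [h0]
    exact Splits.zero
  have hdeg : p.natDegree ≠ 0 := fun h => h0 (derivative_of_natDegree_zero h)
  rw [splits_iff_card_roots] at hp ⊢
  have h1 := card_roots_le_derivative p
  have h2 := card_roots' (derivative p)
  have h3 := natDegree_derivative_lt hdeg
  omega

lemma two_mul_coeff_zero_mul_coeff_two_le_of_splits {p : ℝ[X]} (hp : p.Splits) :
    2 * (p.coeff 0 * p.coeff 2) ≤ p.coeff 1 ^ 2 := by
  have hmonic (m : Multiset ℝ) : 2 * ((m.map fun a => X - C a).prod.coeff 0 *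
      (m.map fun a => X - C a).prod.coeff 2) ≤ (m.map fun a => X - C a).prod.coeff 1 ^ 2 := by
    induction m using Multiset.induction_on with
    | empty => simp [coeff_one]
    | cons a m ih =>
      rw [Multiset.map_cons, Multiset.prod_cons]
      set q := (m.map fun a => X - C a).prod
      have h0 : ((X - C a) * q).coeff 0 = -(a * q.coeff 0) := by simp
      have h1 : ((X - C a) * q).coeff 1 = q.coeff 0 - a * q.coeff 1 := by
        rw [sub_mul, coeff_sub, coeff_C_mul, coeff_X_mul q 0]
      have h2 : ((X - C a) * q).coeff 2 = q.coeff 1 - a * q.coeff 2 := by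
        rw [sub_mul, coeff_sub, coeff_C_mul, coeff_X_mul q 1]
      rw [h0, h1, h2]
      nlinarith [mul_nonneg (sq_nonneg a) (sub_nonneg.2 ih), sq_nonneg (q.coeff 0)]
  rw [hp.eq_prod_roots]
  simp only [coeff_C_mul]
  nlinarith [mul_nonneg (sq_nonneg p.leadingCoeff) (sub_nonneg.2 (hmonic p.roots))]

/-- Newton's inequality for consecutive coefficients: differentiating lowers the index. -/
lemma coeff_mul_coeff_le_of_splits {p : ℝ[X]} (hp : p.Splits) (k : ℕ) :
    (k + 2) * (p.coeff k * p.coeff (k + 2)) ≤ (k + 1) * p.coeff (k + 1) ^ 2 := by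
  induction k generalizing p with
  | zero => simpa using two_mul_coeff_zero_mul_coeff_two_le_of_splits hp
  | succ k ih =>
    have h := ih (splits_derivative hp)
    simp only [coeff_derivative] at h
    push_cast at h ⊢
    refine le_of_mul_le_mul_left ?_ (by positivity : (0 : ℝ) < (k + 1) * (k + 2))
    calc _ = _ := by ring
      _ ≤ _ := h
      _ = _ := by ring

lemma esymmOn_mul_esymmOn_le_sq {ι : Type*} (s : Finset ι) (x : ι → ℝ) (k : ℕ) :
    esymmOn s k x * esymmOn s (k + 2) x ≤ esymmOn s (k + 1) x ^ 2 := by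
  have hsplits : (∏ i ∈ s, (1 + C (x i) * X) : ℝ[X]).Splits := by
    refine Splits.prod fun i _ => Splits.of_natDegree_le_one ?_
    compute_degree
  have h := coeff_mul_coeff_le_of_splits hsplits k
  simp only [coeff_prod_one_add_C_mul_X] at h
  by_contra! hlt
  nlinarith [sq_nonneg (esymmOn s (k + 1) x), k.cast_nonneg (α := ℝ)]

end NewtonInequality

section GardingCone

variable {ι : Type*}

/-- The Gårding cone `Γ_k` of vectors `x` for which `σ_0, …, σ_k` of the family `x` restricted
to `s` are positive. -/
def gardingCone (s : Finset ι) (k : ℕ) : Set (ι → ℝ) := {x | ∀ j ≤ k, 0 < esymmOn s j x}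

lemma gardingCone_anti (s : Finset ι) : Antitone (gardingCone s) :=
  fun _ _ hlk _ hx j hj => hx j (hj.trans hlk)

lemma mem_gardingCone_zero (s : Finset ι) (x : ι → ℝ) : x ∈ gardingCone s 0 := by
  rintro _ ⟨⟩
  simp

lemma mem_gardingCone_succ {s : Finset ι} {k : ℕ} {x : ι → ℝ} (hx : x ∈ gardingCone s k)
    (hpos : 0 < esymmOn s (k + 1) x) : x ∈ gardingCone s (k + 1) := by
  intro j hj
  rcases hj.lt_or_eq with h | rfl
  · exact hx j (Nat.lt_succ_iff.1 h)
  · exact hpos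

lemma smul_mem_gardingCone {s : Finset ι} {k : ℕ} {t : ℝ} (ht : 0 < t) {x : ι → ℝ}
    (hx : x ∈ gardingCone s k) : t • x ∈ gardingCone s k := by
  intro j hj
  rw [esymmOn_smul]
  exact mul_pos (pow_pos ht j) (hx j hj)

lemma esymmOn_eq_prod_div {s : Finset ι} {x : ι → ℝ} {k : ℕ} (hx : x ∈ gardingCone s k) :
    esymmOn s k x = ∏ j ∈ Finset.range k, esymmOn s (j + 1) x / esymmOn s j x := by
  induction k with
  | zero => simp
  | succ k ih =>
    have hpos := hx k k.le_succ
    rw [Finset.prod_range_succ, ← ih (gardingCone_anti s k.le_succ hx)]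
    field_simp

variable [DecidableEq ι]

lemma mem_gardingCone_erase {s : Finset ι} {a : ι} (ha : a ∈ s) {x : ι → ℝ} {k : ℕ}
    (hx : x ∈ gardingCone s (k + 1)) : x ∈ gardingCone (s.erase a) k := by
  induction k with
  | zero => exact mem_gardingCone_zero _ _
  | succ k ih =>
    have hmem := ih (gardingCone_anti s (by omega) hx)
    refine mem_gardingCone_succ hmem ?_
    have hNewton := esymmOn_mul_esymmOn_le_sq (s.erase a) x k
    have hA := hmem k le_rfl
    have hB := hx (k + 1) (by omega)
    have hD := hx (k + 2) le_rfl
    rw [esymmOn_erase ha] at hB hD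
    set A := esymmOn (s.erase a) k x
    set B := esymmOn (s.erase a) (k + 1) x
    set D := esymmOn (s.erase a) (k + 1 + 1) x
    by_contra! hBneg
    have hxa : 0 < x a := by
      by_contra! hneg
      nlinarith [mul_nonneg_of_nonpos_of_nonpos hneg hBneg]
    nlinarith [hxa, mul_pos hA hD, mul_nonneg (neg_nonneg.2 hBneg) hB.le]

lemma add_esymmOn_erase_div {s : Finset ι} {x : ι → ℝ} {k : ℕ} (hx : x ∈ gardingCone s (k + 1))
    {i : ι} (hi : i ∈ s) :
    x i + esymmOn (s.erase i) (k + 1) x / esymmOn (s.erase i) k x =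
      esymmOn s (k + 1) x / esymmOn (s.erase i) k x := by
  have hpos := mem_gardingCone_erase hi hx k le_rfl
  rw [esymmOn_erase hi]
  field_simp
  ring

lemma add_esymmOn_erase_div_pos {s : Finset ι} {x : ι → ℝ} {k : ℕ}
    (hx : x ∈ gardingCone s (k + 1)) {i : ι} (hi : i ∈ s) :
    0 < x i + esymmOn (s.erase i) (k + 1) x / esymmOn (s.erase i) k x := by
  rw [add_esymmOn_erase_div hx hi]
  exact div_pos (hx _ le_rfl) (mem_gardingCone_erase hi hx k le_rfl)

/-- This expresses the quotient `σ_{k+2} / σ_{k+1}` through the quotients `σ_{k+1} / σ_k` of the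
families with one variable removed, in a form to which convexity of `a² / b` applies. -/
lemma esymmOn_div_eq_sum {s : Finset ι} {x : ι → ℝ} {k : ℕ} (hx : x ∈ gardingCone s (k + 1)) :
    (k + 2) * (esymmOn s (k + 2) x / esymmOn s (k + 1) x) =
      ∑ i ∈ s, (x i - x i ^ 2 /
        (x i + esymmOn (s.erase i) (k + 1) x / esymmOn (s.erase i) k x)) := by
  have hEuler := sum_mul_esymmOn_erase s x (k + 1)
  push_cast at hEuler
  rw [show (k + 2 : ℝ) = k + 1 + 1 by ring, mul_div_assoc', ← hEuler, Finset.sum_div]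
  refine Finset.sum_congr rfl fun i hi => ?_
  have hpos := hx (k + 1) le_rfl
  rw [add_esymmOn_erase_div hx hi, div_div_eq_mul_div]
  field_simp
  rw [esymmOn_erase hi]
  ring

lemma add_sq_div_le_of_add_le {a c P Q S : ℝ} (hP : 0 < P) (hQ : 0 < Q) (hS : P + Q ≤ S) :
    (a + c) ^ 2 / S ≤ a ^ 2 / P + c ^ 2 / Q := by
  calc (a + c) ^ 2 / S ≤ (a + c) ^ 2 / (P + Q) := by gcongr
    _ ≤ a ^ 2 / P + c ^ 2 / Q := by
      rw [div_add_div _ _ hP.ne' hQ.ne', div_le_div_iff₀ (by positivity) (by positivity)]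
      nlinarith [sq_nonneg (a * Q - c * P)]

omit [DecidableEq ι] in
/-- Marcus and Lopes: the quotients `σ_{k+1} / σ_k` are superadditive on the Gårding cone. The
same induction shows that the cone is closed under addition. -/
lemma add_mem_gardingCone_and_esymmOn_div_add_le {s : Finset ι} {k : ℕ} {x y : ι → ℝ}
    (hx : x ∈ gardingCone s (k + 1)) (hy : y ∈ gardingCone s (k + 1)) :
    x + y ∈ gardingCone s (k + 1) ∧
      esymmOn s (k + 1) x / esymmOn s k x + esymmOn s (k + 1) y / esymmOn s k y ≤
        esymmOn s (k + 1) (x + y) / esymmOn s k (x + y) := by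
  classical
  induction k generalizing s with
  | zero =>
    have hadd : esymmOn s 1 (x + y) = esymmOn s 1 x + esymmOn s 1 y := by
      simp [Finset.sum_add_distrib]
    refine ⟨mem_gardingCone_succ (mem_gardingCone_zero _ _) ?_, by simp [hadd]⟩
    rw [zero_add, hadd]
    exact add_pos (hx 1 le_rfl) (hy 1 le_rfl)
  | succ k ih =>
    have hx' := gardingCone_anti s (k + 1).le_succ hx
    have hy' := gardingCone_anti s (k + 1).le_succ hy
    have hxy := (ih hx' hy').1
    have hquot : esymmOn s (k + 2) x / esymmOn s (k + 1) x +
        esymmOn s (k + 2) y / esymmOn s (k + 1) y ≤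
          esymmOn s (k + 2) (x + y) / esymmOn s (k + 1) (x + y) := by
      refine le_of_mul_le_mul_left ?_ (by positivity : (0 : ℝ) < k + 2)
      rw [mul_add, esymmOn_div_eq_sum hx', esymmOn_div_eq_sum hy', esymmOn_div_eq_sum hxy,
        ← Finset.sum_add_distrib]
      refine Finset.sum_le_sum fun i hi => ?_
      have hle := (ih (mem_gardingCone_erase hi hx) (mem_gardingCone_erase hi hy)).2
      have := add_sq_div_le_of_add_le (a := x i) (c := y i)
        (add_esymmOn_erase_div_pos hx' hi) (add_esymmOn_erase_div_pos hy' hi)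
        (S := x i + y i + esymmOn (s.erase i) (k + 1) (x + y) / esymmOn (s.erase i) k (x + y))
        (by linarith)
      simp only [Pi.add_apply]
      linarith
    refine ⟨mem_gardingCone_succ hxy ?_, hquot⟩
    refine (div_pos_iff_of_pos_right (hxy (k + 1) le_rfl)).1 (lt_of_lt_of_le ?_ hquot)
    exact add_pos (div_pos (hx _ le_rfl) (hx' _ le_rfl)) (div_pos (hy _ le_rfl) (hy' _ le_rfl))

omit [DecidableEq ι] in
lemma one_add_sum_le_prod_one_add {s : Finset ι} {r : ι → ℝ} (hr : ∀ i ∈ s, 0 ≤ r i) :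
    1 + ∑ i ∈ s, r i ≤ ∏ i ∈ s, (1 + r i) := by
  classical
  induction s using Finset.induction_on with
  | empty => simp
  | insert a s ha ih =>
    rw [Finset.forall_mem_insert] at hr
    rw [Finset.sum_insert ha, Finset.prod_insert ha]
    nlinarith [ih hr.2, mul_nonneg hr.1 (Finset.sum_nonneg hr.2),
      mul_le_mul_of_nonneg_left (ih hr.2) hr.1]

omit [DecidableEq ι] in
lemma esymmOn_mul_one_add_sum_le {s : Finset ι} {k : ℕ} {x y : ι → ℝ}
    (hx : x ∈ gardingCone s (k + 1)) (hy : y ∈ gardingCone s (k + 1)) :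
    esymmOn s (k + 1) x * (1 + ∑ j ∈ Finset.range (k + 1),
      (esymmOn s (j + 1) y / esymmOn s j y) / (esymmOn s (j + 1) x / esymmOn s j x)) ≤
      esymmOn s (k + 1) (x + y) := by
  have quot_pos {z : ι → ℝ} (hz : z ∈ gardingCone s (k + 1)) {j : ℕ}
      (hj : j ∈ Finset.range (k + 1)) : 0 < esymmOn s (j + 1) z / esymmOn s j z :=
    have hj := Finset.mem_range.1 hj
    div_pos (hz _ (by omega)) (hz _ (by omega))
  set q : (ι → ℝ) → ℕ → ℝ := fun z j => esymmOn s (j + 1) z / esymmOn s j z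
  calc esymmOn s (k + 1) x * (1 + ∑ j ∈ Finset.range (k + 1), q y j / q x j)
      ≤ esymmOn s (k + 1) x * ∏ j ∈ Finset.range (k + 1), (1 + q y j / q x j) :=
        mul_le_mul_of_nonneg_left (one_add_sum_le_prod_one_add fun j hj =>
          (div_pos (quot_pos hy hj) (quot_pos hx hj)).le) (hx _ le_rfl).le
    _ = ∏ j ∈ Finset.range (k + 1), (q x j + q y j) := by
        rw [esymmOn_eq_prod_div hx, ← Finset.prod_mul_distrib]
        refine Finset.prod_congr rfl fun j hj => ?_
        change q x j * (1 + q y j / q x j) = _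
        rw [mul_add, mul_one, mul_div_cancel₀ _ (quot_pos hx hj).ne']
    _ ≤ ∏ j ∈ Finset.range (k + 1), q (x + y) j := by
        refine Finset.prod_le_prod
          (fun j hj => (add_pos (quot_pos hx hj) (quot_pos hy hj)).le) fun j hj => ?_
        have hj := Finset.mem_range.1 hj
        exact (add_mem_gardingCone_and_esymmOn_div_add_le (gardingCone_anti s (by omega) hx)
          (gardingCone_anti s (by omega) hy)).2
    _ = esymmOn s (k + 1) (x + y) :=
        (esymmOn_eq_prod_div (add_mem_gardingCone_and_esymmOn_div_add_le hx hy).1).symm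

lemma esymmOn_mul_sum_div_le_sum {s : Finset ι} {k : ℕ} {x y : ι → ℝ}
    (hx : x ∈ gardingCone s (k + 1)) (hy : y ∈ gardingCone s (k + 1)) :
    esymmOn s (k + 1) x * ∑ j ∈ Finset.range (k + 1),
      (esymmOn s (j + 1) y / esymmOn s j y) / (esymmOn s (j + 1) x / esymmOn s j x) ≤
      ∑ i ∈ s, y i * esymmOn (s.erase i) k x := by
  refine ge_of_tendsto (hasDerivAt_esymmOn_add_smul s x y k).tendsto_slope_zero_right ?_
  filter_upwards [self_mem_nhdsWithin] with t (ht : 0 < t)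
  have h := esymmOn_mul_one_add_sum_le hx (smul_mem_gardingCone ht hy)
  have hquot : ∀ j ∈ Finset.range (k + 1), esymmOn s (j + 1) (t • y) / esymmOn s j (t • y) /
      (esymmOn s (j + 1) x / esymmOn s j x) = t * (esymmOn s (j + 1) y / esymmOn s j y /
      (esymmOn s (j + 1) x / esymmOn s j x)) := by
    intro j _
    rw [esymmOn_smul, esymmOn_smul, pow_succ, mul_assoc,
      mul_div_mul_left _ _ (pow_pos ht j).ne', mul_div_assoc, mul_div_assoc]
  rw [Finset.sum_congr rfl hquot, ← Finset.mul_sum] at h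
  simp only [zero_add, zero_smul, add_zero, smul_eq_mul]
  rw [le_inv_mul_iff₀ ht]
  linarith

lemma garding_inequality {k : ℕ} {s : Finset ι} {x y : ι → ℝ}
    (hx : x ∈ gardingCone s (k + 1)) (hy : y ∈ gardingCone s (k + 1)) :
    (k + 1) * esymmOn s (k + 1) x *
      (esymmOn s (k + 1) y / esymmOn s (k + 1) x) ^ (1 / (k + 1 : ℝ)) ≤
      ∑ i ∈ s, y i * esymmOn (s.erase i) k x := by
  refine le_trans ?_ (esymmOn_mul_sum_div_le_sum hx hy)
  set r : ℕ → ℝ := fun j =>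
    (esymmOn s (j + 1) y / esymmOn s j y) / (esymmOn s (j + 1) x / esymmOn s j x)
  have hr : ∀ j ∈ Finset.range (k + 1), 0 ≤ r j := fun j hj => by
    have hj := Finset.mem_range.1 hj
    exact (div_pos (div_pos (hy _ (by omega)) (hy _ (by omega)))
      (div_pos (hx _ (by omega)) (hx _ (by omega)))).le
  have hprod : ∏ j ∈ Finset.range (k + 1), r j = esymmOn s (k + 1) y / esymmOn s (k + 1) x := by
    rw [Finset.prod_div_distrib, ← esymmOn_eq_prod_div hx, ← esymmOn_eq_prod_div hy]
  have hAMGM := Real.geom_mean_le_arith_mean (Finset.range (k + 1)) (fun _ => 1) r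
    (fun _ _ => zero_le_one) (by rw [Finset.sum_const, Finset.card_range, nsmul_one]; positivity) hr
  simp only [Real.rpow_one, Finset.sum_const, Finset.card_range, one_mul, nsmul_eq_mul,
    mul_one, hprod, Nat.cast_add, Nat.cast_one] at hAMGM
  rw [le_div_iff₀ (by positivity)] at hAMGM
  rw [one_div, mul_comm ((k : ℝ) + 1), mul_assoc, mul_comm ((k : ℝ) + 1)]
  exact mul_le_mul_of_nonneg_left hAMGM (hx _ le_rfl).le

end GardingCone

section GardingGradient

variable {ι : Type*} [DecidableEq ι]

/-- The gradient of `σ_{k+1}^{1/(k+1)}` at a point `x` of the Gårding cone. -/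
noncomputable def gardingGrad (s : Finset ι) (k : ℕ) (x : ι → ℝ) (i : ι) : ℝ :=
  esymmOn s (k + 1) x ^ (1 / (k + 1 : ℝ)) / ((k + 1) * esymmOn s (k + 1) x) *
    esymmOn (s.erase i) k x

lemma gardingGrad_pos {s : Finset ι} {k : ℕ} {x : ι → ℝ} (hx : x ∈ gardingCone s (k + 1))
    {i : ι} (hi : i ∈ s) : 0 < gardingGrad s k x i := by
  have he := hx (k + 1) le_rfl
  exact mul_pos (by positivity) (mem_gardingCone_erase hi hx k le_rfl)

lemma sum_gardingGrad_mul (s : Finset ι) (k : ℕ) (x y : ι → ℝ) :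
    ∑ i ∈ s, gardingGrad s k x i * y i =
      esymmOn s (k + 1) x ^ (1 / (k + 1 : ℝ)) / ((k + 1) * esymmOn s (k + 1) x) *
        ∑ i ∈ s, y i * esymmOn (s.erase i) k x := by
  rw [Finset.mul_sum]
  exact Finset.sum_congr rfl fun i _ => by rw [gardingGrad]; ring

lemma sum_gardingGrad_mul_self {s : Finset ι} {k : ℕ} {x : ι → ℝ}
    (hx : x ∈ gardingCone s (k + 1)) :
    ∑ i ∈ s, gardingGrad s k x i * x i = esymmOn s (k + 1) x ^ (1 / (k + 1 : ℝ)) := by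
  have he := (hx (k + 1) le_rfl).ne'
  rw [sum_gardingGrad_mul, sum_mul_esymmOn_erase]
  field_simp

lemma esymmOn_rpow_le_sum_gardingGrad_mul {s : Finset ι} {k : ℕ} {x y : ι → ℝ}
    (hx : x ∈ gardingCone s (k + 1)) (hy : y ∈ gardingCone s (k + 1)) :
    esymmOn s (k + 1) y ^ (1 / (k + 1 : ℝ)) ≤ ∑ i ∈ s, gardingGrad s k x i * y i := by
  have hex := hx (k + 1) le_rfl
  have hey := hy (k + 1) le_rfl
  rw [sum_gardingGrad_mul]
  refine le_trans (le_of_eq ?_)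
    (mul_le_mul_of_nonneg_left (garding_inequality hx hy) (by positivity))
  rw [Real.div_rpow hey.le hex.le]
  have := (Real.rpow_pos_of_pos hex (1 / (k + 1 : ℝ))).ne'
  field_simp

omit [DecidableEq ι] in
lemma sum_sq_eq_sq_sum_sub_two_mul_esymmOn_two (s : Finset ι) (x : ι → ℝ) :
    ∑ i ∈ s, x i ^ 2 = (∑ i ∈ s, x i) ^ 2 - 2 * esymmOn s 2 x := by
  classical
  have h := sum_mul_esymmOn_erase s x 1
  have herase : ∀ i ∈ s, x i * esymmOn (s.erase i) 1 x = x i * ∑ j ∈ s, x j - x i ^ 2 := by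
    intro i hi
    rw [esymmOn_one, ← Finset.add_sum_erase _ _ hi]
    ring
  rw [Finset.sum_congr rfl herase, Finset.sum_sub_distrib, ← Finset.sum_mul] at h
  norm_num at h
  linarith

omit [DecidableEq ι] in
lemma abs_le_sum_of_mem_gardingCone_two {s : Finset ι} {x : ι → ℝ} (hx : x ∈ gardingCone s 2)
    {i : ι} (hi : i ∈ s) : |x i| ≤ ∑ j ∈ s, x j := by
  have hsq := sum_sq_eq_sq_sum_sub_two_mul_esymmOn_two s x
  have h1 := hx 1 one_le_two
  have h2 := hx 2 le_rfl
  rw [esymmOn_one] at h1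
  have hle := Finset.single_le_sum (f := fun i => x i ^ 2) (fun i _ => sq_nonneg _) hi
  exact abs_le_of_sq_le_sq (by linarith) h1.le

omit [DecidableEq ι] in
lemma esymmOn_le_two_pow_mul_pow {s : Finset ι} (k : ℕ) {x : ι → ℝ} {T : ℝ} (hT : 0 ≤ T)
    (hx : ∀ i ∈ s, |x i| ≤ T) : esymmOn s k x ≤ 2 ^ s.card * T ^ k := by
  have hprod : ∀ t ∈ s.powersetCard k, ∏ i ∈ t, x i ≤ T ^ k := fun t ht => by
    obtain ⟨hts, hcard⟩ := Finset.mem_powersetCard.1 ht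
    calc ∏ i ∈ t, x i ≤ ∏ i ∈ t, |x i| := (le_abs_self _).trans_eq (Finset.abs_prod _ _)
      _ ≤ ∏ _i ∈ t, T := Finset.prod_le_prod (fun _ _ => abs_nonneg _) fun i hi => hx i (hts hi)
      _ = T ^ k := by rw [Finset.prod_const, hcard]
  calc esymmOn s k x ≤ s.card.choose k * T ^ k := by
        simpa [esymmOn] using Finset.sum_le_sum hprod
    _ ≤ 2 ^ s.card * T ^ k := by
        gcongr
        exact_mod_cast Nat.choose_le_two_pow _ _

lemma sum_gardingGrad_le {s : Finset ι} {k : ℕ} (hk : 1 ≤ k) {x : ι → ℝ}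
    (hx : x ∈ gardingCone s (k + 1)) :
    ∑ i ∈ s, gardingGrad s k x i ≤ s.card * 2 ^ s.card * (∑ i ∈ s, x i) ^ k *
      (esymmOn s (k + 1) x ^ (1 / (k + 1 : ℝ)) / esymmOn s (k + 1) x) := by
  have he := hx (k + 1) le_rfl
  have hx2 : x ∈ gardingCone s 2 := gardingCone_anti s (by omega) hx
  have htr : 0 < ∑ i ∈ s, x i := by simpa using hx2 1 one_le_two
  have hterm : ∀ i ∈ s, gardingGrad s k x i ≤
      esymmOn s (k + 1) x ^ (1 / (k + 1 : ℝ)) / esymmOn s (k + 1) x *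
        (2 ^ s.card * (∑ i ∈ s, x i) ^ k) := fun i hi => by
    have herase : esymmOn (s.erase i) k x ≤ 2 ^ s.card * (∑ i ∈ s, x i) ^ k := by
      refine (esymmOn_le_two_pow_mul_pow k htr.le fun j hj =>
        abs_le_sum_of_mem_gardingCone_two hx2 (Finset.mem_of_mem_erase hj)).trans ?_
      gcongr
      · exact one_le_two
      · exact Finset.erase_subset _ _
    have hpos := mem_gardingCone_erase hi hx k le_rfl
    rw [gardingGrad]
    gcongr
    exact le_mul_of_one_le_left he.le (by norm_cast; omega)
  calc _ ≤ _ := Finset.sum_le_sum hterm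
    _ = _ := by rw [Finset.sum_const, nsmul_eq_mul]; ring

variable [Fintype ι]

omit [DecidableEq ι] in
lemma esymmOn_univ_comp_perm (τ : Equiv.Perm ι) (k : ℕ) (x : ι → ℝ) :
    esymmOn Finset.univ k (x ∘ τ) = esymmOn Finset.univ k x := by
  rw [← coeff_prod_one_add_C_mul_X, ← coeff_prod_one_add_C_mul_X]
  congr 1
  exact Equiv.prod_comp τ fun i => 1 + Polynomial.C (x i) * Polynomial.X

omit [DecidableEq ι] in
lemma comp_perm_mem_gardingCone (τ : Equiv.Perm ι) {k : ℕ} {x : ι → ℝ}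
    (hx : x ∈ gardingCone Finset.univ k) : x ∘ τ ∈ gardingCone Finset.univ k := fun j hj => by
  rw [esymmOn_univ_comp_perm]
  exact hx j hj

omit [DecidableEq ι] [Fintype ι] in
lemma mem_gardingCone_of_pos {s : Finset ι} {k : ℕ} (hk : k ≤ s.card) {x : ι → ℝ}
    (hx : ∀ i, 0 < x i) : x ∈ gardingCone s k := fun _ hj =>
  Finset.sum_pos (fun _ _ => Finset.prod_pos fun i _ => hx i)
    (Finset.powersetCard_nonempty.2 (hj.trans hk))

/-- The `n` cyclic shifts of `{0, …, k - 1}` cover every index exactly `k` times, and the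
product over each of them is a summand of `σ_k`. -/
lemma prod_pow_le_esymmOn_pow {n k : ℕ} (hkn : k ≤ n) {x : Fin n → ℝ} (hx : ∀ i, 0 ≤ x i) :
    (∏ i, x i) ^ k ≤ esymmOn Finset.univ k x ^ n := by
  rcases Nat.eq_zero_or_pos n with rfl | hn
  · obtain rfl : k = 0 := by omega
    simp
  have : NeZero n := ⟨hn.ne'⟩
  have hshift : ∀ j : Fin n, ∏ i : Fin k, x (j + Fin.castLE hkn i) ≤ esymmOn Finset.univ k x := by
    intro j
    have hinj : Function.Injective fun i : Fin k => j + Fin.castLE hkn i :=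
      (add_right_injective j).comp (Fin.castLE_injective hkn)
    rw [← Finset.prod_image (s := Finset.univ) (f := x) (fun a _ b _ h => hinj h)]
    refine Finset.single_le_sum (f := fun t => ∏ i ∈ t, x i)
      (fun t _ => Finset.prod_nonneg fun i _ => hx i) ?_
    rw [Finset.mem_powersetCard, Finset.card_image_of_injective _ hinj]
    exact ⟨Finset.subset_univ _, by simp⟩
  calc (∏ i, x i) ^ k = ∏ i : Fin k, ∏ j : Fin n, x (j + Fin.castLE hkn i) := by
        rw [Finset.prod_congr rfl fun (i : Fin k) _ =>
          show ∏ j, x (j + Fin.castLE hkn i) = ∏ j, x j from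
            Equiv.prod_comp (Equiv.addRight (Fin.castLE hkn i)) x]
        simp
    _ = ∏ j : Fin n, ∏ i : Fin k, x (j + Fin.castLE hkn i) := Finset.prod_comm
    _ ≤ ∏ _j : Fin n, esymmOn Finset.univ k x :=
        Finset.prod_le_prod (fun j _ => Finset.prod_nonneg fun i _ => hx _) fun j _ => hshift j
    _ = _ := by simp

lemma prod_le_esymmOn_rpow_pow {n k : ℕ} (hkn : k + 1 ≤ n) {x : Fin n → ℝ} (hx : ∀ i, 0 < x i) :
    ∏ i, x i ≤ (esymmOn Finset.univ (k + 1) x ^ (1 / (k + 1 : ℝ))) ^ n := by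
  have he : 0 < esymmOn Finset.univ (k + 1) x :=
    mem_gardingCone_of_pos (by simpa using hkn) hx (k + 1) le_rfl
  refine (pow_le_pow_iff_left₀ (n := k + 1) (Finset.prod_pos fun i _ => hx i).le (by positivity)
    (by omega)).1 ((prod_pow_le_esymmOn_pow hkn fun i => (hx i).le).trans_eq ?_)
  have hroot := Real.rpow_inv_natCast_pow he.le (Nat.succ_ne_zero k)
  rw [← pow_mul, mul_comm, pow_mul, one_div, ← Nat.cast_succ, hroot]

end GardingGradient

section OrthogonalDiagonalization

variable {ι : Type*} [Fintype ι] [DecidableEq ι]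

lemma transpose_mem_orthogonalGroup {U : Matrix ι ι ℝ} (hU : U ∈ orthogonalGroup ι ℝ) :
    Uᵀ ∈ orthogonalGroup ι ℝ := by
  rw [mem_orthogonalGroup_iff, transpose_transpose]
  exact (mem_orthogonalGroup_iff' _ _).1 hU

lemma exists_orthogonal_diagonalization {A : Matrix ι ι ℝ} (hA : A.IsSymm) :
    ∃ U ∈ orthogonalGroup ι ℝ, ∃ l : ι → ℝ, A = U * diagonal l * Uᵀ := by
  have hA' : A.IsHermitian := by
    rwa [IsHermitian, conjTranspose_eq_transpose_of_trivial]
  refine ⟨hA'.eigenvectorUnitary, ?_, hA'.eigenvalues, ?_⟩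
  · have h := hA'.eigenvectorUnitary.2
    rw [mem_unitaryGroup_iff, star_eq_conjTranspose,
      conjTranspose_eq_transpose_of_trivial] at h
    exact (mem_orthogonalGroup_iff _ _).2 h
  · have h := hA'.spectral_theorem
    rwa [Unitary.conjStarAlgAut_apply, star_eq_conjTranspose,
      conjTranspose_eq_transpose_of_trivial] at h

lemma trace_conj_diagonal {U : Matrix ι ι ℝ} (hU : U ∈ orthogonalGroup ι ℝ) (l : ι → ℝ) :
    (U * diagonal l * Uᵀ).trace = ∑ i, l i := by
  rw [trace_mul_comm, ← mul_assoc, (mem_orthogonalGroup_iff' _ _).1 hU, one_mul, trace_diagonal]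

lemma det_conj_diagonal {U : Matrix ι ι ℝ} (hU : U ∈ orthogonalGroup ι ℝ) (l : ι → ℝ) :
    (U * diagonal l * Uᵀ).det = ∏ i, l i := by
  rw [det_mul, det_mul, det_diagonal, mul_right_comm, ← det_mul, (mem_orthogonalGroup_iff _ _).1 hU,
    det_one, one_mul]

lemma conj_diagonal_mul_conj_diagonal {U : Matrix ι ι ℝ} (hU : U ∈ orthogonalGroup ι ℝ)
    (a l : ι → ℝ) :
    U * diagonal a * Uᵀ * (U * diagonal l * Uᵀ) = U * diagonal (fun i => a i * l i) * Uᵀ := by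
  rw [← diagonal_mul_diagonal]
  simp only [mul_assoc]
  rw [← mul_assoc Uᵀ U, (mem_orthogonalGroup_iff' _ _).1 hU, one_mul]

lemma nonneg_of_posSemidef_conj_diagonal {U : Matrix ι ι ℝ} (hU : U ∈ orthogonalGroup ι ℝ)
    {l : ι → ℝ} (h : (U * diagonal l * Uᵀ).PosSemidef) (i : ι) : 0 ≤ l i := by
  have hconj := h.conjTranspose_mul_mul_same U
  rw [conjTranspose_eq_transpose_of_trivial, ← mul_assoc, ← mul_assoc,
    (mem_orthogonalGroup_iff' _ _).1 hU, one_mul, mul_assoc,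
    (mem_orthogonalGroup_iff' _ _).1 hU, mul_one, posSemidef_diagonal_iff] at hconj
  exact hconj i

lemma abs_conj_diagonal_apply_le {U : Matrix ι ι ℝ} (hU : U ∈ orthogonalGroup ι ℝ) {l : ι → ℝ}
    {T : ℝ} (hl : ∀ p, |l p| ≤ T) (i j : ι) : |(U * diagonal l * Uᵀ) i j| ≤ T := by
  have hrow : ∀ q, ∑ p, U q p ^ 2 = 1 := fun q => by
    simpa [mul_apply, sq] using
      congrFun (congrFun ((mem_orthogonalGroup_iff _ _).1 hU) q) q
  have hT : 0 ≤ T := (abs_nonneg _).trans (hl i)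
  have happly : (U * diagonal l * Uᵀ) i j = ∑ p, U i p * l p * U j p := by
    rw [mul_apply]
    simp only [mul_diagonal, transpose_apply]
  rw [happly]
  calc |∑ p, U i p * l p * U j p| ≤ ∑ p, |U i p * l p * U j p| := Finset.abs_sum_le_sum_abs _ _
    _ ≤ ∑ p, T / 2 * (U i p ^ 2 + U j p ^ 2) := Finset.sum_le_sum fun p _ => by
        have hamgm := two_mul_le_add_sq |U i p| |U j p|
        rw [sq_abs, sq_abs] at hamgm
        calc |U i p * l p * U j p| = |l p| * (|U i p| * |U j p|) := by
              rw [abs_mul, abs_mul]; ring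
          _ ≤ T * ((U i p ^ 2 + U j p ^ 2) / 2) :=
              mul_le_mul (hl p) (by linarith) (by positivity) hT
          _ = _ := by ring
    _ = T := by rw [← Finset.mul_sum, Finset.sum_add_distrib, hrow, hrow]; ring

lemma trace_conj_diagonal_mul_conj_diagonal (U V : Matrix ι ι ℝ) (a m : ι → ℝ) :
    ((U * diagonal a * Uᵀ) * (V * diagonal m * Vᵀ)).trace =
      ∑ i, ∑ j, a i * (Uᵀ * V) i j ^ 2 * m j := by
  have hcycle : ((U * diagonal a * Uᵀ) * (V * diagonal m * Vᵀ)).trace =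
      (diagonal a * ((Uᵀ * V) * (diagonal m * (Uᵀ * V)ᵀ))).trace := by
    rw [transpose_mul, transpose_transpose, mul_assoc U, mul_assoc U, trace_mul_comm U]
    simp only [mul_assoc]
  rw [hcycle]
  simp only [trace, diag_apply, diagonal_mul, mul_apply (M := Uᵀ * V), transpose_apply,
    Finset.mul_sum]
  refine Finset.sum_congr rfl fun i _ => Finset.sum_congr rfl fun j _ => ?_
  ring

lemma sq_mem_doublyStochastic {U : Matrix ι ι ℝ} (hU : U ∈ orthogonalGroup ι ℝ) :
    (of fun i j => U i j ^ 2) ∈ doublyStochastic ℝ ι := by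
  rw [mem_doublyStochastic_iff_sum]
  refine ⟨fun i j => sq_nonneg _, fun i => ?_, fun j => ?_⟩
  · simpa [mul_apply, sq] using congrFun (congrFun ((mem_orthogonalGroup_iff _ _).1 hU) i) i
  · simpa [mul_apply, sq] using congrFun (congrFun ((mem_orthogonalGroup_iff' _ _).1 hU) j) j

lemma sum_mul_permMatrix_mul (τ : Equiv.Perm ι) (a m : ι → ℝ) :
    ∑ i, ∑ j, a i * τ.permMatrix ℝ i j * m j = ∑ i, a i * m (τ i) := by
  refine Finset.sum_congr rfl fun i _ => ?_
  simp [Equiv.Perm.permMatrix, PEquiv.toMatrix, Equiv.toPEquiv_apply]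

lemma le_sum_of_mem_doublyStochastic {D : Matrix ι ι ℝ} (hD : D ∈ doublyStochastic ℝ ι)
    {a m : ι → ℝ} {c : ℝ} (h : ∀ τ : Equiv.Perm ι, c ≤ ∑ i, a i * m (τ i)) :
    c ≤ ∑ i, ∑ j, a i * D i j * m j := by
  obtain ⟨w, hw0, hw1, rfl⟩ := exists_eq_sum_perm_of_mem_doublyStochastic hD
  calc c = ∑ τ, w τ * c := by rw [← Finset.sum_mul, hw1, one_mul]
    _ ≤ ∑ τ, w τ * ∑ i, ∑ j, a i * τ.permMatrix ℝ i j * m j :=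
        Finset.sum_le_sum fun τ _ => by
          rw [sum_mul_permMatrix_mul]
          exact mul_le_mul_of_nonneg_left (h τ) (hw0 τ)
    _ = _ := by
        simp only [Matrix.sum_apply, Matrix.smul_apply, smul_eq_mul, Finset.mul_sum, Finset.sum_mul]
        rw [Finset.sum_comm]
        refine Finset.sum_congr rfl fun i _ => ?_
        rw [Finset.sum_comm]
        refine Finset.sum_congr rfl fun j _ => Finset.sum_congr rfl fun τ _ => ?_
        ring

lemma le_trace_conj_diagonal_mul_conj_diagonal {U V : Matrix ι ι ℝ}
    (hU : U ∈ orthogonalGroup ι ℝ) (hV : V ∈ orthogonalGroup ι ℝ) {a m : ι → ℝ} {c : ℝ}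
    (h : ∀ τ : Equiv.Perm ι, c ≤ ∑ i, a i * m (τ i)) :
    c ≤ ((U * diagonal a * Uᵀ) * (V * diagonal m * Vᵀ)).trace := by
  rw [trace_conj_diagonal_mul_conj_diagonal]
  exact le_sum_of_mem_doublyStochastic
    (sq_mem_doublyStochastic (mul_mem (transpose_mem_orthogonalGroup hU) hV)) h

end OrthogonalDiagonalization

section SupportFunctional

variable {n : ℕ}

lemma esymmMat_conj_diagonal {U : Matrix (Fin n) (Fin n) ℝ}
    (hU : U ∈ orthogonalGroup (Fin n) ℝ) (l : Fin n → ℝ) {j : ℕ} (hj : j ≤ n) :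
    esymmMat j (U * diagonal l * Uᵀ) = esymmOn Finset.univ j l := by
  have hcharpoly : (U * diagonal l * Uᵀ).charpoly =
      ((Finset.univ.val.map l).map fun t => Polynomial.X - Polynomial.C t).prod := by
    rw [charpoly_mul_comm, ← mul_assoc, (mem_orthogonalGroup_iff' _ _).1 hU, one_mul,
      charpoly_diagonal, Multiset.map_map]
    rfl
  have hcard : Multiset.card ((Finset.univ : Finset (Fin n)).val.map l) = n := by simp
  rw [esymmMat, hcharpoly, Multiset.prod_X_sub_C_coeff _ (by rw [hcard]; omega), hcard,
    Nat.sub_sub_self hj, ← mul_assoc, ← mul_pow, Finset.esymm_map_val]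
  simp [esymmOn]

lemma mem_gardingCone_of_gammaPlus {U : Matrix (Fin n) (Fin n) ℝ}
    (hU : U ∈ orthogonalGroup (Fin n) ℝ) {l : Fin n → ℝ} {k : ℕ} (hkn : k ≤ n)
    (hG : GammaPlus k (U * diagonal l * Uᵀ)) : l ∈ gardingCone Finset.univ k := by
  intro j hj
  rcases Nat.eq_zero_or_pos j with rfl | hj0
  · simp
  · rw [← esymmMat_conj_diagonal hU l (hj.trans hkn)]
    exact hG j hj0 hj

lemma abs_apply_le_trace_of_gammaPlus {k : ℕ} (hk : 2 ≤ k) (hkn : k ≤ n)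
    {A : Matrix (Fin n) (Fin n) ℝ} (hA : A.IsSymm) (hG : GammaPlus k A) (i j : Fin n) :
    |A i j| ≤ A.trace := by
  obtain ⟨U, hU, l, rfl⟩ := exists_orthogonal_diagonalization hA
  have hl := gardingCone_anti _ hk (mem_gardingCone_of_gammaPlus hU hkn hG)
  rw [trace_conj_diagonal hU]
  exact abs_conj_diagonal_apply_le hU
    (fun p => abs_le_sum_of_mem_gardingCone_two hl (Finset.mem_univ p)) i j

/-- The properties, independent of the point of contact, of a matrix `F` for which
`B ↦ tr (F B)` is a supporting linear functional of the concave function `σ_k^{1/k}` on the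
`Γ_k^+` cone of symmetric matrices. -/
structure IsGardingFunctional (k : ℕ) (F : Matrix (Fin n) (Fin n) ℝ) : Prop where
  abs_apply_le_trace (i j : Fin n) : |F i j| ≤ F.trace
  one_le_trace : 1 ≤ F.trace
  rpow_le_trace_mul {B : Matrix (Fin n) (Fin n) ℝ} :
    B.IsSymm → GammaPlus k B → esymmMat k B ^ (1 / k : ℝ) ≤ (F * B).trace
  det_le_trace_mul_pow {N : Matrix (Fin n) (Fin n) ℝ} : N.PosSemidef → N.det ≤ (F * N).trace ^ n

section GardingGrad

variable {k : ℕ} {U : Matrix (Fin n) (Fin n) ℝ} {l : Fin n → ℝ}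

lemma esymmOn_rpow_le_trace_conj_gardingGrad_mul (hU : U ∈ orthogonalGroup (Fin n) ℝ)
    (hl : l ∈ gardingCone Finset.univ (k + 1)) {V : Matrix (Fin n) (Fin n) ℝ}
    (hV : V ∈ orthogonalGroup (Fin n) ℝ) {m : Fin n → ℝ}
    (hm : m ∈ gardingCone Finset.univ (k + 1)) :
    esymmOn Finset.univ (k + 1) m ^ (1 / (k + 1 : ℝ)) ≤
      ((U * diagonal (gardingGrad Finset.univ k l) * Uᵀ) * (V * diagonal m * Vᵀ)).trace := by
  refine le_trace_conj_diagonal_mul_conj_diagonal hU hV fun τ => ?_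
  rw [← esymmOn_univ_comp_perm τ]
  exact esymmOn_rpow_le_sum_gardingGrad_mul hl (comp_perm_mem_gardingCone τ hm)

lemma trace_conj_gardingGrad_mul_nonneg_and_det_le (hkn : k + 1 ≤ n)
    (hU : U ∈ orthogonalGroup (Fin n) ℝ) (hl : l ∈ gardingCone Finset.univ (k + 1))
    {N : Matrix (Fin n) (Fin n) ℝ} (hN : N.PosSemidef) :
    0 ≤ ((U * diagonal (gardingGrad Finset.univ k l) * Uᵀ) * N).trace ∧
      N.det ≤ ((U * diagonal (gardingGrad Finset.univ k l) * Uᵀ) * N).trace ^ n := by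
  have hNs : N.IsSymm := by
    have h := hN.1
    rwa [IsHermitian, conjTranspose_eq_transpose_of_trivial] at h
  obtain ⟨V, hV, m, rfl⟩ := exists_orthogonal_diagonalization hNs
  have hm := nonneg_of_posSemidef_conj_diagonal hV hN
  have hnonneg : 0 ≤ ((U * diagonal (gardingGrad Finset.univ k l) * Uᵀ) *
      (V * diagonal m * Vᵀ)).trace := by
    rw [trace_conj_diagonal_mul_conj_diagonal]
    exact Finset.sum_nonneg fun i _ => Finset.sum_nonneg fun j _ =>
      mul_nonneg (mul_nonneg (gardingGrad_pos hl (Finset.mem_univ i)).le (sq_nonneg _)) (hm j)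
  refine ⟨hnonneg, ?_⟩
  rw [det_conj_diagonal hV]
  by_cases hpos : ∀ i, 0 < m i
  · have hmcone : m ∈ gardingCone Finset.univ (k + 1) := mem_gardingCone_of_pos (by simpa) hpos
    have hroot : 0 ≤ esymmOn Finset.univ (k + 1) m ^ (1 / (k + 1 : ℝ)) :=
      Real.rpow_nonneg (hmcone _ le_rfl).le _
    exact (prod_le_esymmOn_rpow_pow hkn hpos).trans (pow_le_pow_left₀ hroot
      (esymmOn_rpow_le_trace_conj_gardingGrad_mul hU hl hV hmcone) n)
  · obtain ⟨i, hi⟩ := not_forall.1 hpos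
    rw [Finset.prod_eq_zero (Finset.mem_univ i) (le_antisymm (not_lt.1 hi) (hm i))]
    positivity

lemma isGardingFunctional_conj_gardingGrad (hkn : k + 1 ≤ n)
    (hU : U ∈ orthogonalGroup (Fin n) ℝ) (hl : l ∈ gardingCone Finset.univ (k + 1)) :
    IsGardingFunctional (k + 1) (U * diagonal (gardingGrad Finset.univ k l) * Uᵀ) where
  abs_apply_le_trace := by
    rw [trace_conj_diagonal hU]
    have hpos : ∀ i, 0 < gardingGrad Finset.univ k l i := fun i =>
      gardingGrad_pos hl (Finset.mem_univ i)
    exact abs_conj_diagonal_apply_le hU fun p => by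
      rw [abs_of_pos (hpos p)]
      exact Finset.single_le_sum (fun i _ => (hpos i).le) (Finset.mem_univ p)
  one_le_trace := by
    obtain ⟨h0, h1⟩ :=
      trace_conj_gardingGrad_mul_nonneg_and_det_le hkn hU hl (PosSemidef.one (n := Fin n))
    rw [mul_one] at h0 h1
    rw [det_one] at h1
    exact (one_le_pow_iff_of_nonneg h0 (by omega)).1 h1
  rpow_le_trace_mul := fun {B} hB hG => by
    obtain ⟨V, hV, m, rfl⟩ := exists_orthogonal_diagonalization hB
    rw [esymmMat_conj_diagonal hV m hkn, Nat.cast_succ]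
    exact esymmOn_rpow_le_trace_conj_gardingGrad_mul hU hl hV
      (mem_gardingCone_of_gammaPlus hV hkn hG)
  det_le_trace_mul_pow := fun hN => (trace_conj_gardingGrad_mul_nonneg_and_det_le hkn hU hl hN).2

end GardingGrad

lemma exists_isGardingFunctional {k : ℕ} (hk : 2 ≤ k) (hkn : k ≤ n)
    {A : Matrix (Fin n) (Fin n) ℝ} (hA : A.IsSymm) (hG : GammaPlus k A) :
    ∃ F : Matrix (Fin n) (Fin n) ℝ, IsGardingFunctional k F ∧
      (F * A).trace = esymmMat k A ^ (1 / k : ℝ) ∧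
      F.trace ≤ n * 2 ^ n * A.trace ^ (k - 1) * (esymmMat k A ^ (1 / k : ℝ) / esymmMat k A) := by
  obtain ⟨k, rfl⟩ : ∃ m, k = m + 1 := ⟨k - 1, by omega⟩
  obtain ⟨U, hU, l, rfl⟩ := exists_orthogonal_diagonalization hA
  have hl := mem_gardingCone_of_gammaPlus hU hkn hG
  refine ⟨_, isGardingFunctional_conj_gardingGrad hkn hU hl, ?_, ?_⟩
  · rw [conj_diagonal_mul_conj_diagonal hU, trace_conj_diagonal hU,
      esymmMat_conj_diagonal hU l hkn, sum_gardingGrad_mul_self hl, Nat.cast_succ]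
  · rw [trace_conj_diagonal hU, trace_conj_diagonal hU, esymmMat_conj_diagonal hU l hkn,
      Nat.cast_succ, Nat.add_sub_cancel]
    simpa using sum_gardingGrad_le (by omega) hl

end SupportFunctional

section Morrey

lemma le_add_rpow_mul_rpow {p G s : ℝ} (hp : 1 ≤ p) (hG : 0 ≤ G) (hs : 0 < s) :
    G ≤ s + s ^ (1 - p) * G ^ p := by
  rcases le_or_gt G s with h | h
  · have : 0 ≤ s ^ (1 - p) * G ^ p := by positivity
    linarith
  · have hG0 : 0 < G := hs.trans h
    calc G = G ^ (1 - p) * G ^ p := by rw [← Real.rpow_add hG0]; simp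
      _ ≤ s ^ (1 - p) * G ^ p := by
          have := Real.rpow_le_rpow_of_nonpos hs h.le (sub_nonpos.2 hp)
          gcongr
      _ ≤ s + s ^ (1 - p) * G ^ p := le_add_of_nonneg_left hs.le

lemma setLIntegral_enorm_le {α G : Type*} [MeasurableSpace α] [NormedAddCommGroup G] (μ : Measure α)
    {p : ℝ} (hp : 1 ≤ p) (g : α → G) (s : Set α) :
    ∫⁻ y in s, ‖g y‖ₑ ∂μ ≤ μ s + ∫⁻ y in s, ENNReal.ofReal (‖g y‖ ^ p) ∂μ := by
  calc ∫⁻ y in s, ‖g y‖ₑ ∂μ ≤ ∫⁻ y in s, (1 + ENNReal.ofReal (‖g y‖ ^ p)) ∂μ := by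
        refine lintegral_mono fun y => ?_
        have h := le_add_rpow_mul_rpow hp (norm_nonneg (g y)) one_pos
        rw [Real.one_rpow, one_mul] at h
        rw [← ofReal_norm, ← ENNReal.ofReal_one,
          ← ENNReal.ofReal_add zero_le_one (by positivity)]
        exact ENNReal.ofReal_le_ofReal h
    _ = μ s + ∫⁻ y in s, ENNReal.ofReal (‖g y‖ ^ p) ∂μ := by
        rw [lintegral_add_left measurable_const, setLIntegral_one]

open Module (finrank)

variable {E : Type*} [NormedAddCommGroup E] [NormedSpace ℝ E] [FiniteDimensional ℝ E]
  [MeasurableSpace E] [BorelSpace E] (μ : Measure E) [μ.IsAddHaarMeasure]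
  {F : Type*} [NormedAddCommGroup F] [NormedSpace ℝ F]

lemma setLIntegral_comp_add_smul_sub_le {x₀ : E} {ρ : ℝ} {x : E} (hx : x ∈ ball x₀ ρ)
    {φ : E → ENNReal} (hφ : Measurable φ) {t : ℝ} (ht : t ∈ Ioc (0 : ℝ) 1) :
    ∫⁻ y in ball x₀ ρ, φ (x + t • (y - x)) ∂μ ≤
      ENNReal.ofReal ((t ^ finrank ℝ E)⁻¹) * ∫⁻ y in ball x₀ ρ, φ y ∂μ := by
  have hmap : ∀ y ∈ ball x₀ ρ, x + t • (y - x) ∈ ball x₀ ρ := fun y hy =>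
    (convex_ball x₀ ρ).add_smul_sub_mem hx hy ⟨ht.1.le, ht.2⟩
  set ψ := (ball x₀ ρ).indicator φ with hψ
  have hψm : Measurable ψ := hφ.indicator measurableSet_ball
  calc ∫⁻ y in ball x₀ ρ, φ (x + t • (y - x)) ∂μ ≤ ∫⁻ y, ψ (x + t • (y - x)) ∂μ := by
        rw [← lintegral_indicator measurableSet_ball]
        refine lintegral_mono fun y => ?_
        by_cases hy : y ∈ ball x₀ ρ
        · rw [indicator_of_mem hy, hψ, indicator_of_mem (hmap y hy)]
        · rw [indicator_of_notMem hy]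
          exact zero_le
    _ = ∫⁻ y, ψ (x + t • y) ∂μ := lintegral_sub_right_eq_self (fun y => ψ (x + t • y)) x
    _ = ∫⁻ z, ψ (x + z) ∂(Measure.map (t • ·) μ) := by
        rw [lintegral_map (by fun_prop) (by fun_prop)]
    _ = ENNReal.ofReal ((t ^ finrank ℝ E)⁻¹) * ∫⁻ z, ψ (x + z) ∂μ := by
        rw [Measure.map_addHaar_smul μ ht.1.ne', lintegral_smul_measure]
        simp [abs_of_pos ht.1]
    _ = ENNReal.ofReal ((t ^ finrank ℝ E)⁻¹) * ∫⁻ y in ball x₀ ρ, φ y ∂μ := by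
        rw [lintegral_add_left_eq_self ψ x, hψ, lintegral_indicator measurableSet_ball]

omit [FiniteDimensional ℝ E] [MeasurableSpace E] [BorelSpace E] in
lemma enorm_le_enorm_add_lintegral_fderiv {Ω : Set E} (hΩ : IsOpen Ω) {g : E → F}
    (hg : ContDiffOn ℝ 1 g Ω) {x y : E}
    (hseg : ∀ t ∈ Icc (0 : ℝ) 1, x + t • (y - x) ∈ Ω) :
    ‖g x‖ₑ ≤ ‖g y‖ₑ + ∫⁻ t in Ioc (0 : ℝ) 1,
      ENNReal.ofReal (‖y - x‖ * ‖fderiv ℝ g (x + t • (y - x))‖) := by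
  set γ : ℝ → F := fun t => g (x + t • (y - x)) with hγ
  have hγc : ContDiffOn ℝ 1 γ (Icc 0 1) := hg.comp (by fun_prop) hseg
  have hftc := enorm_sub_le_lintegral_deriv_of_contDiffOn_Icc hγc zero_le_one
  have htri : ‖g x‖ₑ ≤ ‖g y‖ₑ + ‖g y - g x‖ₑ := by
    simpa only [sub_sub_cancel] using enorm_sub_le (a := g y) (b := g y - g x)
  simp only [hγ, one_smul, add_sub_cancel, zero_smul, add_zero] at hftc
  refine htri.trans (add_le_add le_rfl (hftc.trans ?_))
  rw [← restrict_Ioc_eq_restrict_Icc]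
  refine setLIntegral_mono' measurableSet_Ioc fun t ht => ?_
  have hg' : HasFDerivAt g (fderiv ℝ g (x + t • (y - x))) (x + t • (y - x)) :=
    ((hg.contDiffAt (hΩ.mem_nhds (hseg t ⟨ht.1.le, ht.2⟩))).differentiableAt
      one_ne_zero).hasFDerivAt
  have hline : HasDerivAt (fun t : ℝ => x + t • (y - x)) (y - x) t := by
    simpa using ((hasDerivAt_id t).smul_const (y - x)).const_add x
  have hderiv : deriv (fun t => g (x + t • (y - x))) t = fderiv ℝ g (x + t • (y - x)) (y - x) :=
    (hg'.comp_hasDerivAt t hline).deriv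
  rw [hderiv, ← ofReal_norm, mul_comm]
  exact ENNReal.ofReal_le_ofReal (ContinuousLinearMap.le_opNorm _ _)

/-- The exponent `-n/p` comes from Young's inequality at the scale `s = t ^ (-n/p)`, which balances
the Jacobian `t ^ (-n)` of the contraction. -/
lemma setLIntegral_comp_add_smul_sub_le_rpow {p : ℝ} (hp : 1 ≤ p) {x₀ : E} {ρ : ℝ} {x : E}
    (hx : x ∈ ball x₀ ρ) {φ : E → ℝ} (hφm : Measurable φ) (hφ : ∀ y, 0 ≤ φ y) {K : ENNReal}
    (hK : ∫⁻ y in ball x₀ ρ, ENNReal.ofReal (φ y ^ p) ∂μ ≤ K) {t : ℝ} (ht : t ∈ Ioc (0 : ℝ) 1) :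
    ∫⁻ y in ball x₀ ρ, ENNReal.ofReal (φ (x + t • (y - x))) ∂μ ≤
      ENNReal.ofReal (t ^ (-(finrank ℝ E / p))) * (μ (ball x₀ ρ) + K) := by
  have ht0 : 0 < t := ht.1
  set s := t ^ (-((finrank ℝ E : ℝ) / p)) with hs
  have hs0 : 0 < s := by positivity
  have hscale : s ^ (1 - p) * (t ^ finrank ℝ E)⁻¹ = s := by
    rw [hs, ← Real.rpow_natCast t, ← Real.rpow_neg ht0.le, ← Real.rpow_mul ht0.le,
      ← Real.rpow_add ht0]
    congr 1
    field_simp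
    ring
  calc ∫⁻ y in ball x₀ ρ, ENNReal.ofReal (φ (x + t • (y - x))) ∂μ
      ≤ ∫⁻ y in ball x₀ ρ, (ENNReal.ofReal s + ENNReal.ofReal (s ^ (1 - p)) *
          ENNReal.ofReal (φ (x + t • (y - x)) ^ p)) ∂μ := by
        refine lintegral_mono fun y => ?_
        have := hφ (x + t • (y - x))
        rw [← ENNReal.ofReal_mul (by positivity),
          ← ENNReal.ofReal_add (by positivity) (by positivity)]
        exact ENNReal.ofReal_le_ofReal (le_add_rpow_mul_rpow hp (hφ _) hs0)
    _ = ENNReal.ofReal s * μ (ball x₀ ρ) + ENNReal.ofReal (s ^ (1 - p)) *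
          ∫⁻ y in ball x₀ ρ, ENNReal.ofReal (φ (x + t • (y - x)) ^ p) ∂μ := by
        rw [lintegral_add_left measurable_const, setLIntegral_const,
          lintegral_const_mul' _ _ ENNReal.ofReal_ne_top]
    _ ≤ ENNReal.ofReal s * μ (ball x₀ ρ) + ENNReal.ofReal (s ^ (1 - p)) *
          (ENNReal.ofReal ((t ^ finrank ℝ E)⁻¹) * K) := by
        gcongr
        refine (setLIntegral_comp_add_smul_sub_le μ hx
          (hφm.pow_const p).ennreal_ofReal ht).trans ?_
        gcongr
    _ = ENNReal.ofReal s * (μ (ball x₀ ρ) + K) := by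
        rw [mul_add, ← mul_assoc, ← ENNReal.ofReal_mul (by positivity), hscale]

lemma lintegral_ofReal_rpow_Ioc_ne_top {r : ℝ} (hr : -1 < r) :
    ∫⁻ t in Ioc (0 : ℝ) 1, ENNReal.ofReal (t ^ r) ≠ ⊤ := by
  have h := (intervalIntegral.intervalIntegrable_rpow' (a := 0) (b := 1) hr).1.2
  rw [hasFiniteIntegral_iff_enorm] at h
  exact ((lintegral_mono fun t => Real.ofReal_le_enorm _).trans_lt h).ne

variable [CompleteSpace F]

lemma measure_ball_mul_enorm_le {p : ℝ} (hp : 1 ≤ p) {x₀ : E} {ρ : ℝ} {K : ENNReal}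
    {g : E → F} {Ω : Set E} (hΩ : IsOpen Ω) (hball : ball x₀ ρ ⊆ Ω) (hg : ContDiffOn ℝ 1 g Ω)
    (hgK : ∫⁻ y in ball x₀ ρ, ENNReal.ofReal (‖g y‖ ^ p) ∂μ ≤ K)
    (hg'K : ∫⁻ y in ball x₀ ρ, ENNReal.ofReal (‖fderiv ℝ g y‖ ^ p) ∂μ ≤ K)
    {x : E} (hx : x ∈ ball x₀ ρ) :
    μ (ball x₀ ρ) * ‖g x‖ₑ ≤ (μ (ball x₀ ρ) + K) + ENNReal.ofReal (2 * ρ) *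
      ((∫⁻ t in Ioc (0 : ℝ) 1, ENNReal.ofReal (t ^ (-(finrank ℝ E / p)))) *
        (μ (ball x₀ ρ) + K)) := by
  set φ : E → ℝ := fun y => ‖fderiv ℝ g y‖
  have hφm : Measurable φ := (measurable_fderiv ℝ g).norm
  have hpointwise : ∀ y ∈ ball x₀ ρ, ‖g x‖ₑ ≤ ‖g y‖ₑ + ∫⁻ t in Ioc (0 : ℝ) 1,
      ENNReal.ofReal (2 * ρ) * ENNReal.ofReal (φ (x + t • (y - x))) := by
    intro y hy
    have hyx : ‖y - x‖ ≤ 2 * ρ := by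
      rw [← dist_eq_norm]
      linarith [dist_triangle_right y x x₀, mem_ball.1 hy, mem_ball.1 hx]
    refine (enorm_le_enorm_add_lintegral_fderiv hΩ hg fun t ht =>
      hball ((convex_ball x₀ ρ).add_smul_sub_mem hx hy ht)).trans ?_
    gcongr with t
    rw [← ENNReal.ofReal_mul ((norm_nonneg _).trans hyx)]
    gcongr
  have hmeas : Measurable (Function.uncurry fun (y : E) (t : ℝ) =>
      ENNReal.ofReal (2 * ρ) * ENNReal.ofReal (φ (x + t • (y - x)))) :=
    (hφm.comp (by fun_prop)).ennreal_ofReal.const_mul _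
  calc μ (ball x₀ ρ) * ‖g x‖ₑ = ∫⁻ _ in ball x₀ ρ, ‖g x‖ₑ ∂μ := by
        rw [setLIntegral_const, mul_comm]
    _ ≤ ∫⁻ y in ball x₀ ρ, (‖g y‖ₑ + ∫⁻ t in Ioc (0 : ℝ) 1,
          ENNReal.ofReal (2 * ρ) * ENNReal.ofReal (φ (x + t • (y - x)))) ∂μ :=
        setLIntegral_mono' measurableSet_ball hpointwise
    _ = (∫⁻ y in ball x₀ ρ, ‖g y‖ₑ ∂μ) + ∫⁻ t in Ioc (0 : ℝ) 1, ∫⁻ y in ball x₀ ρ,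
          ENNReal.ofReal (2 * ρ) * ENNReal.ofReal (φ (x + t • (y - x))) ∂μ := by
        rw [lintegral_add_right _ hmeas.lintegral_prod_right,
          lintegral_lintegral_swap hmeas.aemeasurable]
    _ ≤ (μ (ball x₀ ρ) + K) + ∫⁻ t in Ioc (0 : ℝ) 1, ENNReal.ofReal (2 * ρ) *
          (ENNReal.ofReal (t ^ (-(finrank ℝ E / p))) * (μ (ball x₀ ρ) + K)) := by
        refine add_le_add ((setLIntegral_enorm_le μ hp g _).trans (by gcongr))
          (setLIntegral_mono' measurableSet_Ioc fun t ht => ?_)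
        rw [lintegral_const_mul' _ _ ENNReal.ofReal_ne_top]
        gcongr
        exact setLIntegral_comp_add_smul_sub_le_rpow μ hp hx hφm (fun _ => norm_nonneg _) hg'K ht
    _ = _ := by
        rw [lintegral_const_mul' _ _ ENNReal.ofReal_ne_top, lintegral_mul_const]
        fun_prop

lemma exists_norm_le_of_setLIntegral_rpow_le {p : ℝ} (hp : 1 ≤ p) (hp' : finrank ℝ E < p) (x₀ : E)
    {ρ : ℝ} (hρ : 0 < ρ) {K : ENNReal} (hK : K ≠ ⊤) :
    ∃ C : ℝ, ∀ (g : E → F) (Ω : Set E), IsOpen Ω → ball x₀ ρ ⊆ Ω → ContDiffOn ℝ 1 g Ω →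
      ∫⁻ y in ball x₀ ρ, ENNReal.ofReal (‖g y‖ ^ p) ∂μ ≤ K →
      ∫⁻ y in ball x₀ ρ, ENNReal.ofReal (‖fderiv ℝ g y‖ ^ p) ∂μ ≤ K →
      ∀ x ∈ ball x₀ ρ, ‖g x‖ ≤ C := by
  set W : ENNReal := (μ (ball x₀ ρ) + K) + ENNReal.ofReal (2 * ρ) *
    ((∫⁻ t in Ioc (0 : ℝ) 1, ENNReal.ofReal (t ^ (-(finrank ℝ E / p)))) * (μ (ball x₀ ρ) + K))
  have hexp : (finrank ℝ E : ℝ) / p < 1 := (div_lt_one (by linarith)).2 hp'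
  have hWt : W ≠ ⊤ := by
    have hVK : μ (ball x₀ ρ) + K ≠ ⊤ := ENNReal.add_ne_top.2 ⟨measure_ball_lt_top.ne, hK⟩
    exact ENNReal.add_ne_top.2 ⟨hVK, ENNReal.mul_ne_top ENNReal.ofReal_ne_top
      (ENNReal.mul_ne_top (lintegral_ofReal_rpow_Ioc_ne_top (by linarith)) hVK)⟩
  have hV0 : μ (ball x₀ ρ) ≠ 0 := (measure_ball_pos μ x₀ hρ).ne'
  refine ⟨(W / μ (ball x₀ ρ)).toReal, fun g Ω hΩ hball hg hgK hg'K x hx => ?_⟩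
  have hle : ‖g x‖ₑ ≤ W / μ (ball x₀ ρ) := by
    rw [ENNReal.le_div_iff_mul_le (Or.inl hV0) (Or.inl measure_ball_lt_top.ne), mul_comm]
    exact measure_ball_mul_enorm_le μ hp hΩ hball hg hgK hg'K hx
  simpa using ENNReal.toReal_mono (ENNReal.div_ne_top hWt hV0) hle

end Morrey

section UniformTaylor

lemma exists_forall_dist_lt_of_isCompact {X : Type*} [PseudoMetricSpace X]
    {P : ℝ → X → X → Prop} (hP : ∀ y y', Monotone (P · y y')) {K : Set X} (hK : IsCompact K)
    (hloc : ∀ x ∈ K, ∃ C, ∃ r > 0, ∀ y ∈ ball x r, ∀ y' ∈ ball x r, P C y y') :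
    ∃ δ > 0, ∃ C ≥ 0, ∀ y ∈ K, ∀ y', dist y' y < δ → P C y y' := by
  refine hK.induction_on
    (p := fun T => ∃ δ > 0, ∃ C ≥ 0, ∀ y ∈ T, ∀ y', dist y' y < δ → P C y y') ?_ ?_ ?_ ?_
  · exact ⟨1, one_pos, 0, le_rfl, by simp⟩
  · rintro s t hst ⟨δ, hδ, C, hC, h⟩
    exact ⟨δ, hδ, C, hC, fun y hy => h y (hst hy)⟩
  · rintro s t ⟨δ, hδ, C, hC, h⟩ ⟨δ', hδ', C', -, h'⟩
    refine ⟨min δ δ', lt_min hδ hδ', max C C', le_max_of_le_left hC, ?_⟩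
    rintro y (hy | hy) y' hyy'
    · exact hP y y' (le_max_left _ _) (h y hy y' (hyy'.trans_le (min_le_left _ _)))
    · exact hP y y' (le_max_right _ _) (h' y hy y' (hyy'.trans_le (min_le_right _ _)))
  · intro x hx
    obtain ⟨C, r, hr, h⟩ := hloc x hx
    refine ⟨ball x (r / 2), mem_nhdsWithin_of_mem_nhds (ball_mem_nhds _ (half_pos hr)),
      r / 2, half_pos hr, max C 0, le_max_right _ _, fun y hy y' hyy' => ?_⟩
    have hy'x : dist y' x < r := by
      linarith [dist_triangle y' y x, mem_ball.1 hy]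
    exact hP y y' (le_max_left _ _) (h y (ball_subset_ball (by linarith) hy) y' hy'x)

variable {E F : Type*} [NormedAddCommGroup E] [NormedSpace ℝ E] [NormedAddCommGroup F]
  [NormedSpace ℝ F] {f : E → F} {S K : Set E}

lemma norm_sub_sub_fderiv_le_of_contDiffOn {s : Set E} (hS : IsOpen S) (hf : ContDiffOn ℝ 1 f S)
    (hs : Convex ℝ s) (hsS : s ⊆ S) {y y' : E} (hy : y ∈ s) (hy' : y' ∈ s) {C : ℝ}
    (hC : ∀ z ∈ s, ‖fderiv ℝ f z - fderiv ℝ f y‖ ≤ C) :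
    ‖f y' - f y - fderiv ℝ f y (y' - y)‖ ≤ C * ‖y' - y‖ := by
  refine hs.norm_image_sub_le_of_norm_hasFDerivWithin_le' (fun z hz => ?_) hC hy hy'
  exact ((hf.differentiableOn one_ne_zero).differentiableAt
    (hS.mem_nhds (hsS hz))).hasFDerivAt.hasFDerivWithinAt

lemma exists_norm_sub_sub_fderiv_le_mul_sq (hS : IsOpen S) (hf : C11On f S) (hK : IsCompact K)
    (hKS : K ⊆ S) :
    ∃ δ > 0, ∃ C ≥ 0, ∀ y ∈ K, ∀ y', ‖y' - y‖ < δ →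
      ‖f y' - f y - fderiv ℝ f y (y' - y)‖ ≤ C * ‖y' - y‖ ^ 2 := by
  simp only [← dist_eq_norm_sub (_ : E)]
  refine exists_forall_dist_lt_of_isCompact
    (fun _ _ _ _ h hle => hle.trans (mul_le_mul_of_nonneg_right h (sq_nonneg _))) hK
    fun x hx => ?_
  obtain ⟨L, t, ht, hL⟩ := hf.2 x (hKS hx)
  rw [hS.nhdsWithin_eq (hKS hx)] at ht
  obtain ⟨r, hr, hrt⟩ := Metric.mem_nhds_iff.1 (Filter.inter_mem ht (hS.mem_nhds (hKS hx)))
  refine ⟨L, r, hr, fun y hy y' hy' => ?_⟩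
  have hlip : ∀ z ∈ ball x r ∩ closedBall y (dist y' y),
      ‖fderiv ℝ f z - fderiv ℝ f y‖ ≤ L * dist y' y := by
    rintro z ⟨hz, hzy⟩
    have h := hL.norm_sub_le (hrt hz).1 (hrt hy).1
    rw [fderivWithin_of_isOpen hS (hrt hz).2, fderivWithin_of_isOpen hS (hrt hy).2] at h
    exact h.trans (by gcongr; simpa [dist_eq_norm] using hzy)
  have hle := norm_sub_sub_fderiv_le_of_contDiffOn hS hf.1
    ((convex_ball x r).inter (convex_closedBall _ _)) (fun z hz => (hrt hz.1).2)
    ⟨hy, mem_closedBall_self dist_nonneg⟩ ⟨hy', mem_closedBall.2 le_rfl⟩ hlip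
  rwa [← dist_eq_norm_sub y', mul_assoc, ← sq] at hle

lemma exists_norm_sub_sub_fderiv_le_mul (hS : IsOpen S) (hf : ContDiffOn ℝ 1 f S)
    (hK : IsCompact K) (hKS : K ⊆ S) {ε : ℝ} (hε : 0 < ε) :
    ∃ δ > 0, ∀ y ∈ K, ∀ y', ‖y' - y‖ < δ → y' ∈ S ∧
      ‖f y' - f y - fderiv ℝ f y (y' - y)‖ ≤ ε * ‖y' - y‖ := by
  suffices h : ∃ δ > 0, ∃ C ≥ (0 : ℝ), ∀ y ∈ K, ∀ y', dist y' y < δ → y' ∈ S ∧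
      ‖f y' - f y - fderiv ℝ f y (y' - y)‖ ≤ ε * ‖y' - y‖ by
    obtain ⟨δ, hδ, -, -, h⟩ := h
    exact ⟨δ, hδ, by simpa only [dist_eq_norm] using h⟩
  refine exists_forall_dist_lt_of_isCompact
    (P := fun _ y y' => y' ∈ S ∧ ‖f y' - f y - fderiv ℝ f y (y' - y)‖ ≤ ε * ‖y' - y‖)
    (fun _ _ => monotone_const) hK fun x hx => ?_
  have hcont : ContinuousAt (fderiv ℝ f) x :=
    (hf.continuousOn_fderiv_of_isOpen hS le_rfl).continuousAt (hS.mem_nhds (hKS hx))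
  obtain ⟨r, hr, hrt⟩ := Metric.mem_nhds_iff.1
    (Filter.inter_mem (hcont (ball_mem_nhds _ (half_pos hε))) (hS.mem_nhds (hKS hx)))
  refine ⟨0, r, hr, fun y hy y' hy' => ⟨(hrt hy').2, ?_⟩⟩
  refine norm_sub_sub_fderiv_le_of_contDiffOn hS hf (convex_ball x r) (fun z hz => (hrt hz).2)
    hy hy' fun z hz => ?_
  rw [← dist_eq_norm]
  linarith [dist_triangle_right (fderiv ℝ f z) (fderiv ℝ f y) (fderiv ℝ f x),
    mem_ball.1 (hrt hz).1, mem_ball.1 (hrt hy).1]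

end UniformTaylor

section SecondDifferenceQuotient

lemma abs_add_sub_two_mul_sub_le {φ φ' : ℝ → ℝ} {a ε h : ℝ} (hε : 0 ≤ ε) (hh : 0 ≤ h)
    (hφ : ∀ s, |s| ≤ h → HasDerivAt φ (φ' s) s)
    (ha : ∀ s, |s| ≤ h → |φ' s - φ' 0 - s * a| ≤ ε * |s|) :
    |φ h + φ (-h) - 2 * φ 0 - h ^ 2 * a| ≤ 2 * ε * h ^ 2 := by
  have habs : ∀ s ∈ Icc 0 h, |s| ≤ h := fun s hs => by rw [abs_of_nonneg hs.1]; exact hs.2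
  have hderiv : ∀ s ∈ Icc 0 h, HasDerivWithinAt (fun s => φ s + φ (-s) - s ^ 2 * a)
      (φ' s - φ' (-s) - 2 * s * a) (Icc 0 h) s := by
    intro s hs
    have hneg := (hφ (-s) (by rw [abs_neg]; exact habs s hs)).scomp s (hasDerivAt_neg s)
    refine ((((hφ s (habs s hs)).add hneg).sub
      ((hasDerivAt_pow 2 s).mul_const a)).congr_deriv ?_).hasDerivWithinAt
    simp only [neg_smul, one_smul, Nat.cast_ofNat, Nat.add_one_sub_one, pow_one]
    ring
  have hbound : ∀ s ∈ Icc 0 h, ‖φ' s - φ' (-s) - 2 * s * a‖ ≤ 2 * ε * h := by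
    intro s hs
    have h₁ := ha s (habs s hs)
    have h₂ := ha (-s) (by rw [abs_neg]; exact habs s hs)
    rw [abs_neg] at h₂
    rw [abs_of_nonneg hs.1, abs_le] at h₁ h₂
    have hsh : ε * s ≤ ε * h := mul_le_mul_of_nonneg_left hs.2 hε
    rw [Real.norm_eq_abs, abs_le]
    constructor <;> linarith [h₁.1, h₁.2, h₂.1, h₂.2]
  have key := (convex_Icc 0 h).norm_image_sub_le_of_norm_hasDerivWithin_le hderiv hbound
    (left_mem_Icc.2 hh) (right_mem_Icc.2 hh)
  rw [Real.norm_eq_abs, Real.norm_eq_abs, sub_zero, abs_of_nonneg hh] at key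
  calc |φ h + φ (-h) - 2 * φ 0 - h ^ 2 * a|
      = |φ h + φ (-h) - h ^ 2 * a - (φ 0 + φ (-0) - 0 ^ 2 * a)| := by rw [neg_zero]; ring_nf
    _ ≤ 2 * ε * h * h := key
    _ = 2 * ε * h ^ 2 := by ring

variable {n : ℕ} {u : (Fin n → ℝ) → ℝ}

lemma hasDerivAt_comp_add_smul {E F : Type*} [NormedAddCommGroup E] [NormedSpace ℝ E]
    [NormedAddCommGroup F] [NormedSpace ℝ F] {f : E → F} {z d : E} {s : ℝ}
    (hf : DifferentiableAt ℝ f (z + s • d)) :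
    HasDerivAt (fun s : ℝ => f (z + s • d)) (fderiv ℝ f (z + s • d) d) s := by
  have hline := ((hasDerivAt_id s).smul_const d).const_add z
  rw [one_smul] at hline
  exact hf.hasFDerivAt.comp_hasDerivAt s hline

lemma norm_single_one (l : Fin n) : ‖(Pi.single l 1 : Fin n → ℝ)‖ = 1 := by
  rw [Pi.norm_single, norm_one]

lemma contDiffOn_pd {m : ℕ} {S : Set (Fin n → ℝ)} (hS : IsOpen S)
    (hu : ContDiffOn ℝ (m + 1) u S) (l : Fin n) : ContDiffOn ℝ m (pd l u) S :=
  (hu.fderiv_of_isOpen hS le_rfl).clm_apply contDiffOn_const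

lemma exists_abs_ddq_sub_pd_pd_le {S K : Set (Fin n → ℝ)} (hS : IsOpen S)
    (hu : ContDiffOn ℝ 2 u S) (hK : IsCompact K) (hKS : K ⊆ S) (l : Fin n) {ε : ℝ} (hε : 0 < ε) :
    ∃ δ > 0, ∀ z ∈ K, ∀ h, 0 < h → h < δ → |ddq l h u z - pd l (pd l u) z| ≤ ε := by
  obtain ⟨δ, hδ, hTaylor⟩ :=
    exists_norm_sub_sub_fderiv_le_mul hS (contDiffOn_pd (m := 1) hS hu l) hK hKS (half_pos hε)
  refine ⟨δ, hδ, fun z hz h hh hhδ => ?_⟩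
  set e : Fin n → ℝ := Pi.single l 1 with he
  have hline : ∀ s : ℝ, |s| ≤ h →
      z + s • e ∈ S ∧ |pd l u (z + s • e) - pd l u z - s * pd l (pd l u) z| ≤ ε / 2 * |s| := by
    intro s hs
    have hnorm : ‖z + s • e - z‖ = |s| := by
      rw [add_sub_cancel_left, norm_smul, he, norm_single_one, mul_one, Real.norm_eq_abs]
    have := hTaylor z hz (z + s • e) (by rw [hnorm]; linarith)
    rwa [hnorm, add_sub_cancel_left, map_smul] at this
  have key := abs_add_sub_two_mul_sub_le (φ := fun s => u (z + s • e)) (half_pos hε).le hh.le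
    (fun s hs => hasDerivAt_comp_add_smul ((hu.differentiableOn two_ne_zero).differentiableAt
      (hS.mem_nhds (hline s hs).1)))
    (fun s hs => by rw [zero_smul, add_zero]; exact (hline s hs).2)
  have hquot : ddq l h u z - pd l (pd l u) z =
      (u (z + h • e) + u (z + (-h) • e) - 2 * u (z + (0 : ℝ) • e) - h ^ 2 * pd l (pd l u) z) /
        h ^ 2 := by
    rw [ddq, ← he, neg_smul, zero_smul, add_zero, ← sub_eq_add_neg]
    field_simp
    ring
  rw [hquot, abs_div, abs_of_pos (sq_pos_of_pos hh), div_le_iff₀ (sq_pos_of_pos hh)]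
  linarith

end SecondDifferenceQuotient

section EuclideanNorm

variable {n : ℕ}

lemma vnorm_eq_norm_toLp (x : Fin n → ℝ) :
    vnorm x = ‖(WithLp.toLp 2 x : EuclideanSpace ℝ (Fin n))‖ := by
  simp only [vnorm, EuclideanSpace.norm_eq, Real.norm_eq_abs, sq_abs]

lemma vnorm_nonneg (x : Fin n → ℝ) : 0 ≤ vnorm x := Real.sqrt_nonneg _

lemma vnorm_zero : vnorm (0 : Fin n → ℝ) = 0 := by
  rw [vnorm_eq_norm_toLp, WithLp.toLp_zero, norm_zero]

lemma vnorm_pos {x : Fin n → ℝ} (hx : x ≠ 0) : 0 < vnorm x := by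
  rw [vnorm_eq_norm_toLp, norm_pos_iff]
  simpa using hx

lemma vnorm_add_le (x y : Fin n → ℝ) : vnorm (x + y) ≤ vnorm x + vnorm y := by
  simp only [vnorm_eq_norm_toLp, WithLp.toLp_add]
  exact norm_add_le _ _

lemma vnorm_smul (c : ℝ) (x : Fin n → ℝ) : vnorm (c • x) = |c| * vnorm x := by
  simp only [vnorm_eq_norm_toLp, WithLp.toLp_smul, norm_smul, Real.norm_eq_abs]

lemma vnorm_sq (x : Fin n → ℝ) : vnorm x ^ 2 = normSq x :=
  Real.sq_sqrt (Finset.sum_nonneg fun i _ => sq_nonneg (x i))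

lemma dotProduct_self_eq_vnorm_sq (x : Fin n → ℝ) : x ⬝ᵥ x = vnorm x ^ 2 := by
  rw [vnorm_sq]
  simp only [normSq, dotProduct, sq]

lemma abs_apply_le_vnorm (x : Fin n → ℝ) (i : Fin n) : |x i| ≤ vnorm x := by
  rw [vnorm_eq_norm_toLp]
  exact PiLp.norm_apply_le (WithLp.toLp 2 x : EuclideanSpace ℝ (Fin n)) i

lemma norm_le_vnorm (x : Fin n → ℝ) : ‖x‖ ≤ vnorm x :=
  (pi_norm_le_iff_of_nonneg (vnorm_nonneg x)).2 (abs_apply_le_vnorm x)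

lemma continuous_vnorm : Continuous (vnorm (n := n)) := by
  unfold vnorm
  fun_prop

/-- The closed ball for the Euclidean distance; `closedBall` on `Fin n → ℝ` refers to the sup
norm. -/
def euclideanClosedBall (x₁ : Fin n → ℝ) (r : ℝ) : Set (Fin n → ℝ) := {x | vnorm (x - x₁) ≤ r}

lemma self_mem_euclideanClosedBall (x₁ : Fin n → ℝ) {r : ℝ} (hr : 0 ≤ r) :
    x₁ ∈ euclideanClosedBall x₁ r := by
  rw [euclideanClosedBall, mem_ofPred_eq, sub_self, vnorm_zero]
  exact hr

lemma euclideanClosedBall_subset_closedBall (x₁ : Fin n → ℝ) (r : ℝ) :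
    euclideanClosedBall x₁ r ⊆ closedBall x₁ r := fun x hx => by
  rw [mem_closedBall, dist_eq_norm]
  exact (norm_le_vnorm _).trans hx

lemma isCompact_euclideanClosedBall (x₁ : Fin n → ℝ) (r : ℝ) :
    IsCompact (euclideanClosedBall x₁ r) :=
  Metric.isCompact_of_isClosed_isBounded
    (isClosed_le (continuous_vnorm.comp (continuous_sub_right x₁)) continuous_const)
    (isBounded_closedBall.subset (euclideanClosedBall_subset_closedBall x₁ r))

lemma mem_interior_euclideanClosedBall {x₁ x : Fin n → ℝ} {r : ℝ} (hx : vnorm (x - x₁) < r) :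
    x ∈ interior (euclideanClosedBall x₁ r) :=
  lt_subset_interior_le (continuous_vnorm.comp (continuous_sub_right x₁)) continuous_const hx

lemma vnorm_sub_eq_of_mem_frontier {x₁ x : Fin n → ℝ} {r : ℝ}
    (hx : x ∈ frontier (euclideanClosedBall x₁ r)) : vnorm (x - x₁) = r :=
  frontier_le_subset_eq (continuous_vnorm.comp (continuous_sub_right x₁)) continuous_const hx

end EuclideanNorm

section SecondDerivativeTest

variable {n : ℕ} {w : (Fin n → ℝ) → ℝ} {z ξ : Fin n → ℝ}

lemma fderiv_apply_eq_grad_dotProduct (w : (Fin n → ℝ) → ℝ) (z d : Fin n → ℝ) :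
    fderiv ℝ w z d = grad w z ⬝ᵥ d := by
  conv_lhs => rw [pi_eq_sum_univ' d, map_sum]
  simp only [map_smul, dotProduct, grad, pd, smul_eq_mul, mul_comm]

lemma hess_apply_eq_fderiv_fderiv (hw : DifferentiableAt ℝ (fderiv ℝ w) z) (i j : Fin n) :
    hess w z i j = fderiv ℝ (fderiv ℝ w) z (Pi.single i 1) (Pi.single j 1) := by
  change fderiv ℝ (fun x => fderiv ℝ w x (Pi.single j 1)) z (Pi.single i 1) = _
  rw [fderiv_clm_apply hw (differentiableAt_const _)]
  simp

lemma differentiableAt_fderiv (hw : ContDiffAt ℝ 2 w z) : DifferentiableAt ℝ (fderiv ℝ w) z :=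
  (hw.fderiv_right (m := 1) le_rfl).differentiableAt one_ne_zero

lemma isSymm_hess (hw : ContDiffAt ℝ 2 w z) : (hess w z).IsSymm := by
  ext i j
  rw [transpose_apply, hess_apply_eq_fderiv_fderiv (differentiableAt_fderiv hw),
    hess_apply_eq_fderiv_fderiv (differentiableAt_fderiv hw)]
  exact hw.isSymmSndFDerivAt (by simp) _ _

lemma fderiv_fderiv_apply_self (hw : DifferentiableAt ℝ (fderiv ℝ w) z) (d : Fin n → ℝ) :
    fderiv ℝ (fderiv ℝ w) z d d = d ⬝ᵥ (hess w z *ᵥ d) := by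
  conv_lhs => rw [pi_eq_sum_univ' d]
  simp only [map_sum, map_smul, FunLike.coe_sum, Finset.sum_apply, FunLike.coe_smul,
    Pi.smul_apply, smul_eq_mul, ← hess_apply_eq_fderiv_fderiv hw, dotProduct, mulVec]
  simp only [Finset.mul_sum]
  rw [Finset.sum_comm]
  exact Finset.sum_congr rfl fun i _ => Finset.sum_congr rfl fun j _ => by ring

lemma deriv_deriv_nonpos_of_isLocalMax {φ : ℝ → ℝ} {x : ℝ} (hφ : IsLocalMax φ x)
    (hcont : ContinuousAt φ x) : deriv (deriv φ) x ≤ 0 := by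
  by_contra! hpos
  have hmin : IsLocalMin φ x := isLocalMin_of_deriv_deriv_pos hpos hφ.deriv_eq_zero hcont
  have hconst : φ =ᶠ[nhds x] fun _ => φ x := by
    filter_upwards [hφ, hmin] with s hs hs' using le_antisymm hs hs'
  rw [hconst.deriv.deriv_eq, deriv_const', deriv_const] at hpos
  exact hpos.false

lemma isLocalMax_comp_add_smul (hmax : IsLocalMax (fun x => w x - ξ ⬝ᵥ x) z) (d : Fin n → ℝ) :
    IsLocalMax (fun s : ℝ => w (z + s • d) - s * (ξ ⬝ᵥ d)) 0 := by
  have hline : Filter.Tendsto (fun s : ℝ => z + s • d) (nhds 0) (nhds z) := by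
    have : Continuous fun s : ℝ => z + s • d := by fun_prop
    simpa using this.tendsto 0
  filter_upwards [hline.eventually hmax] with s hs
  simp only [dotProduct_add, dotProduct_smul, smul_eq_mul, zero_smul, add_zero, zero_mul] at hs ⊢
  linarith

lemma grad_eq_of_isLocalMax (hw : DifferentiableAt ℝ w z)
    (hmax : IsLocalMax (fun x => w x - ξ ⬝ᵥ x) z) : grad w z = ξ := by
  refine dotProduct_eq _ _ fun d => ?_
  have hderiv := (hasDerivAt_comp_add_smul (d := d) (s := 0) (by simpa using hw)).sub
    ((hasDerivAt_id (0 : ℝ)).mul_const (ξ ⬝ᵥ d))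
  have hzero := (isLocalMax_comp_add_smul hmax d).hasDerivAt_eq_zero hderiv
  rw [zero_smul, add_zero, fderiv_apply_eq_grad_dotProduct, one_mul] at hzero
  linarith

lemma posSemidef_neg_hess_of_isLocalMax (hw : ContDiffAt ℝ 2 w z)
    (hmax : IsLocalMax (fun x => w x - ξ ⬝ᵥ x) z) : (-hess w z).PosSemidef := by
  refine PosSemidef.of_dotProduct_mulVec_nonneg ?_ fun d => ?_
  · rw [IsHermitian, conjTranspose_eq_transpose_of_trivial, transpose_neg, isSymm_hess hw]
  have hline : Filter.Tendsto (fun s : ℝ => z + s • d) (nhds 0) (nhds z) := by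
    have : Continuous fun s : ℝ => z + s • d := by fun_prop
    simpa using this.tendsto 0
  set φ : ℝ → ℝ := fun s => w (z + s • d) - s * (ξ ⬝ᵥ d)
  have hφ' : ∀ᶠ s in nhds 0, HasDerivAt φ (fderiv ℝ w (z + s • d) d - 1 * (ξ ⬝ᵥ d)) s := by
    filter_upwards [hline.eventually (hw.eventually (by simp))] with s hs
    exact (hasDerivAt_comp_add_smul (hs.differentiableAt two_ne_zero)).sub
      ((hasDerivAt_id s).mul_const _)
  have hφ'' : deriv (deriv φ) 0 = d ⬝ᵥ (hess w z *ᵥ d) := by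
    have hdw : DifferentiableAt ℝ (fderiv ℝ w) (z + (0 : ℝ) • d) := by
      simpa using differentiableAt_fderiv hw
    have hderiv : deriv φ =ᶠ[nhds 0] fun s => fderiv ℝ w (z + s • d) d - 1 * (ξ ⬝ᵥ d) := by
      filter_upwards [hφ'] with s hs using hs.deriv
    rw [hderiv.deriv_eq, (((hasDerivAt_comp_add_smul hdw).clm_apply
      (hasDerivAt_const (0 : ℝ) d)).sub_const _).deriv, map_zero, add_zero, zero_smul, add_zero,
      fderiv_fderiv_apply_self (differentiableAt_fderiv hw)]
  have hle := deriv_deriv_nonpos_of_isLocalMax (isLocalMax_comp_add_smul hmax d)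
    hφ'.self_of_nhds.continuousAt
  rw [star_trivial, neg_mulVec, dotProduct_neg, neg_nonneg, ← hφ'']
  exact hle

end SecondDerivativeTest

section UpperContactSet

variable {n : ℕ} {w : (Fin n → ℝ) → ℝ} {D V : Set (Fin n → ℝ)} {z : Fin n → ℝ}

/-- The points of `D` at which `w` is positive and its tangent hyperplane lies above its graph
over `D`. -/
def upperContactSet (w : (Fin n → ℝ) → ℝ) (D : Set (Fin n → ℝ)) : Set (Fin n → ℝ) :=
  {z | z ∈ D ∧ 0 < w z ∧ ∀ x ∈ D, w x ≤ w z + grad w z ⬝ᵥ (x - z)}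

lemma mem_interior_of_pos (hD : IsClosed D) (hw : ∀ x ∈ frontier D, w x ≤ 0) (hz : z ∈ D)
    (hwz : 0 < w z) : z ∈ interior D := by
  by_contra hzi
  exact hwz.not_ge (hw z (hD.frontier_eq ▸ ⟨hz, hzi⟩))

lemma posSemidef_neg_hess_of_mem_upperContactSet (hw : ContDiffAt ℝ 2 w z)
    (hz : z ∈ upperContactSet w D) (hzi : z ∈ interior D) : (-hess w z).PosSemidef := by
  refine posSemidef_neg_hess_of_isLocalMax (ξ := grad w z) hw ?_
  filter_upwards [mem_interior_iff_mem_nhds.1 hzi] with x hx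
  have := hz.2.2 x hx
  rw [dotProduct_sub] at this
  linarith

lemma inter_frontier_nonempty_of_isPreconnected {X : Type*} [TopologicalSpace X] {s t : Set X}
    (hs : IsPreconnected s) (hst : (s ∩ t).Nonempty) (hst' : (s \ t).Nonempty) :
    (s ∩ frontier t).Nonempty := by
  by_contra! hempty
  have hcover : s ⊆ interior t ∪ (closure t)ᶜ := fun x hx => by
    by_contra hx'
    rw [mem_union, not_or, notMem_compl_iff] at hx'
    exact hempty.subset ⟨hx, hx'.2, hx'.1⟩
  obtain ⟨x, hxs, hxt⟩ := hst
  obtain ⟨y, hys, hyt⟩ := hst'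
  obtain ⟨a, -, ha, ha'⟩ := hs _ _ isOpen_interior isClosed_closure.isOpen_compl hcover
    ⟨x, hxs, (hcover hxs).resolve_right fun h => h (subset_closure hxt)⟩
    ⟨y, hys, (hcover hys).resolve_left fun h => hyt (interior_subset h)⟩
  exact ha' (interior_subset_closure ha)

lemma vnorm_grad_mul_le_of_mem_upperContactSet (hD : IsCompact D)
    (hw : ∀ x ∈ frontier D, 0 ≤ w x) (hz : z ∈ upperContactSet w D) {δ : ℝ}
    (hδ : ∀ x, vnorm (x - z) < δ → x ∈ interior D) : vnorm (grad w z) * δ ≤ w z := by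
  obtain ⟨hzD, hwz, hcontact⟩ := hz
  rcases eq_or_ne (grad w z) 0 with hgrad | hgrad
  · rw [hgrad, vnorm_zero, zero_mul]
    exact hwz.le
  have hpos := vnorm_pos hgrad
  set a := vnorm (grad w z)
  -- Follow the ray of steepest descent of the tangent plane until it leaves `D`.
  set γ : ℝ → Fin n → ℝ := fun s => z + s • (-a⁻¹ • grad w z) with hγ
  have hdist : ∀ s, 0 ≤ s → vnorm (γ s - z) = s := fun s hs => by
    rw [hγ, add_sub_cancel_left, vnorm_smul, vnorm_smul, abs_of_nonneg hs, abs_neg,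
      abs_of_pos (inv_pos.2 hpos), inv_mul_cancel₀ hpos.ne', mul_one]
  obtain ⟨x, ⟨s, hs, rfl⟩, hx⟩ : (γ '' Ici 0 ∩ frontier D).Nonempty := by
    refine inter_frontier_nonempty_of_isPreconnected (isPreconnected_Ici.image γ (by fun_prop))
      ⟨z, ⟨0, self_mem_Ici, by simp [hγ]⟩, hzD⟩ ?_
    obtain ⟨S, hS⟩ := hD.bddAbove_image (f := fun x => vnorm (x - z))
      (continuous_vnorm.comp (continuous_sub_right z)).continuousOn
    refine ⟨γ (max S 0 + 1), ⟨_, mem_Ici.2 (by positivity), rfl⟩, fun hmem => ?_⟩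
    have hle : vnorm (γ (max S 0 + 1) - z) ≤ S := hS ⟨_, hmem, rfl⟩
    rw [hdist _ (by positivity)] at hle
    linarith [le_max_left S 0]
  have hδs : δ ≤ s := by
    by_contra! hlt
    exact hx.2 (hδ _ ((hdist s hs).trans_lt hlt))
  have hle := (hw _ hx).trans (hcontact _ (hD.isClosed.frontier_subset hx))
  rw [hγ, add_sub_cancel_left, dotProduct_smul, dotProduct_smul, dotProduct_self_eq_vnorm_sq,
    smul_eq_mul, smul_eq_mul] at hle
  have : s * (-a⁻¹ * a ^ 2) = -(a * s) := by field_simp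
  nlinarith

lemma measurableSet_upperContactSet (hV : IsOpen V) (hw : ContDiffOn ℝ 1 w V) (hD : IsClosed D)
    (hDV : D ⊆ V) : MeasurableSet (upperContactSet w D) := by
  have hgrad : ContinuousOn (grad w) D :=
    continuousOn_pi.2 fun i => (contDiffOn_pd (m := 0) hV hw i).continuousOn.mono hDV
  have hw := hw.continuousOn.mono hDV
  have hsplit : upperContactSet w D = (D ∩ ⋂ x ∈ D,
      D ∩ (fun z => w x - (w z + grad w z ⬝ᵥ (x - z))) ⁻¹' Iic 0) \ (D ∩ w ⁻¹' Iic 0) := by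
    ext z
    simp only [upperContactSet, mem_ofPred_eq, mem_sdiff, mem_inter_iff, mem_iInter, mem_preimage,
      mem_Iic, sub_nonpos, not_and, not_le]
    exact ⟨fun ⟨hz, hpos, hle⟩ => ⟨⟨hz, fun x hx => ⟨hz, hle x hx⟩⟩, fun _ => hpos⟩,
      fun ⟨⟨hz, hle⟩, hpos⟩ => ⟨hz, hpos hz, fun x hx => (hle x hx).2⟩⟩
  rw [hsplit]
  refine (hD.inter (isClosed_biInter fun x _ => ContinuousOn.preimage_isClosed_of_isClosed
    ?_ hD isClosed_Iic)).measurableSet.diff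
    (hw.preimage_isClosed_of_isClosed hD isClosed_Iic).measurableSet
  refine continuousOn_const.sub (hw.add (continuousOn_finsetSum _ fun i _ => ?_))
  exact (continuousOn_pi.1 hgrad i).mul (by fun_prop)

lemma abs_dotProduct_le (x y : Fin n → ℝ) : |x ⬝ᵥ y| ≤ n * (‖x‖ * ‖y‖) := by
  calc |x ⬝ᵥ y| ≤ ∑ i, |x i * y i| := Finset.abs_sum_le_sum_abs _ _
    _ ≤ ∑ _i : Fin n, ‖x‖ * ‖y‖ := by
        refine Finset.sum_le_sum fun i _ => ?_
        rw [abs_mul]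
        exact mul_le_mul (norm_le_pi_norm x i) (norm_le_pi_norm y i) (abs_nonneg _)
          (norm_nonneg _)
    _ = n * (‖x‖ * ‖y‖) := by simp

variable {y₀ : Fin n → ℝ} {d : ℝ}

lemma ball_subset_image_grad_upperContactSet (hn : 1 ≤ n) (hV : IsOpen V)
    (hw : ContDiffOn ℝ 1 w V) (hD : IsCompact D) (hDV : D ⊆ V)
    (hw0 : ∀ x ∈ frontier D, w x ≤ 0) (hd : 0 < d) (hdiam : ∀ x ∈ D, dist y₀ x ≤ d)
    (hy₀ : y₀ ∈ D) : ball 0 (w y₀ / (n * d)) ⊆ grad w '' upperContactSet w D := by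
  intro ξ hξ
  rw [mem_ball_zero_iff, lt_div_iff₀ (by positivity)] at hξ
  obtain ⟨z, hz, hmax⟩ := hD.exists_isMaxOn ⟨y₀, hy₀⟩
    ((hw.continuousOn.mono hDV).sub (by fun_prop : ContinuousOn (fun x => ξ ⬝ᵥ x) D))
  have hle : ∀ x ∈ D, w x ≤ w z + ξ ⬝ᵥ (x - z) := fun x hx => by
    have : w x - ξ ⬝ᵥ x ≤ w z - ξ ⬝ᵥ z := hmax hx
    rw [dotProduct_sub]
    linarith
  have hwz : 0 < w z := by
    have hdot : ξ ⬝ᵥ (y₀ - z) ≤ n * (‖ξ‖ * d) := by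
      refine (le_abs_self _).trans ((abs_dotProduct_le ξ (y₀ - z)).trans ?_)
      gcongr
      exact (dist_eq_norm y₀ z).symm.trans_le (hdiam z hz)
    linarith [hle y₀ hy₀]
  have hzi := mem_interior_of_pos hD.isClosed hw0 hz hwz
  have hgrad : grad w z = ξ := by
    refine grad_eq_of_isLocalMax ((hw.differentiableOn one_ne_zero).differentiableAt
      (hV.mem_nhds (hDV hz))) ?_
    exact hmax.isLocalMax (mem_interior_iff_mem_nhds.1 hzi)
  exact ⟨z, ⟨hz, hwz, by rwa [hgrad]⟩, hgrad⟩

lemma hasFDerivAt_grad (hw : ContDiffAt ℝ 2 w z) :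
    HasFDerivAt (grad w) (toLin' (hess w z)ᵀ).toContinuousLinearMap z := by
  refine hasFDerivAt_pi'.2 fun j => ?_
  have hj : HasFDerivAt (pd j w) (fderiv ℝ (pd j w) z) z :=
    ((differentiableAt_fderiv hw).clm_apply (differentiableAt_const _)).hasFDerivAt
  refine hj.congr_fderiv (ContinuousLinearMap.ext fun d => ?_)
  rw [fderiv_apply_eq_grad_dotProduct]
  rfl

/-- The Alexandrov–Bakelman–Pucci estimate: the slopes in a small ball are all attained on the
contact set, and the area formula bounds the measure of that ball by the integral of `|det D²w|`. -/
theorem ofReal_pow_le_setLIntegral_abs_det_hess (hn : 1 ≤ n) (hV : IsOpen V)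
    (hw : ContDiffOn ℝ 2 w V) (hD : IsCompact D) (hDV : D ⊆ V)
    (hw0 : ∀ x ∈ frontier D, w x ≤ 0) (hd : 0 < d) (hdiam : ∀ x ∈ D, dist y₀ x ≤ d)
    (hy₀ : y₀ ∈ D) (hpos : 0 < w y₀) :
    ENNReal.ofReal ((2 * w y₀ / (n * d)) ^ n) ≤
      ∫⁻ z in upperContactSet w D, ENNReal.ofReal |(hess w z).det| := by
  have hmeas := measurableSet_upperContactSet hV (hw.of_le one_le_two) hD.isClosed hDV
  calc ENNReal.ofReal ((2 * w y₀ / (n * d)) ^ n)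
      = volume (ball (0 : Fin n → ℝ) (w y₀ / (n * d))) := by
        rw [Real.volume_pi_ball _ (by positivity), Fintype.card_fin, mul_div_assoc]
    _ ≤ volume (grad w '' upperContactSet w D) := measure_mono
        (ball_subset_image_grad_upperContactSet hn hV (hw.of_le one_le_two) hD hDV hw0 hd hdiam hy₀)
    _ ≤ ∫⁻ z in upperContactSet w D,
        ENNReal.ofReal |(toLin' (hess w z)ᵀ).toContinuousLinearMap.det| :=
        addHaar_image_le_lintegral_abs_det_fderiv volume hmeas fun z hz =>
          (hasFDerivAt_grad (hw.contDiffAt (hV.mem_nhds (hDV hz.1)))).hasFDerivWithinAt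
    _ = ∫⁻ z in upperContactSet w D, ENNReal.ofReal |(hess w z).det| := by
        simp only [ContinuousLinearMap.det, LinearMap.coe_toContinuousLinearMap,
          LinearMap.det_toLin', det_transpose]

end UpperContactSet

section MatrixNorm

variable {n : ℕ}

lemma abs_apply_le_matNorm (A : Matrix (Fin n) (Fin n) ℝ) (i j : Fin n) : |A i j| ≤ matNorm A := by
  have hcol : A i j = (toEuclideanLin A).toContinuousLinearMap (EuclideanSpace.single j 1) i := by
    simp [toLpLin_apply]
  rw [hcol]
  refine (PiLp.norm_apply_le (p := 2) (β := fun _ => ℝ) _ i).trans ?_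
  simpa [matNorm] using
    (toEuclideanLin A).toContinuousLinearMap.le_opNorm (EuclideanSpace.single j 1)

lemma matNorm_le_sum_abs (A : Matrix (Fin n) (Fin n) ℝ) : matNorm A ≤ ∑ i, ∑ j, |A i j| := by
  have hrow : ∀ i, 0 ≤ ∑ j, |A i j| := fun i => Finset.sum_nonneg fun j _ => abs_nonneg _
  refine ContinuousLinearMap.opNorm_le_bound _ (Finset.sum_nonneg fun i _ => hrow i) fun x => ?_
  have hentry : ∀ i, |(A *ᵥ x.ofLp) i| ≤ (∑ j, |A i j|) * ‖x‖ := fun i => by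
    rw [mulVec, dotProduct, Finset.sum_mul]
    refine (Finset.abs_sum_le_sum_abs _ _).trans (Finset.sum_le_sum fun j _ => ?_)
    rw [abs_mul]
    gcongr
    exact PiLp.norm_apply_le x j
  rw [LinearMap.coe_toContinuousLinearMap', toLpLin_apply, ← vnorm_eq_norm_toLp, vnorm,
    Finset.sum_mul]
  refine Real.sqrt_le_iff.2
    ⟨Finset.sum_nonneg fun i _ => mul_nonneg (hrow i) (norm_nonneg x), ?_⟩
  calc ∑ i, (A *ᵥ x.ofLp) i ^ 2 ≤ ∑ i, ((∑ j, |A i j|) * ‖x‖) ^ 2 :=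
        Finset.sum_le_sum fun i _ => sq_le_sq' (abs_le.1 (hentry i)).1 (abs_le.1 (hentry i)).2
    _ ≤ (∑ i, (∑ j, |A i j|) * ‖x‖) ^ 2 := Finset.sum_sq_le_sq_sum_of_nonneg
        fun i _ => mul_nonneg (hrow i) (norm_nonneg x)

lemma continuous_matNorm : Continuous (matNorm (n := n)) :=
  (((LinearMap.toContinuousLinearMap :
    _ ≃ₗ[ℝ] (EuclideanSpace ℝ (Fin n) →L[ℝ] EuclideanSpace ℝ (Fin n))).toLinearMap ∘ₗ
      (toEuclideanLin (𝕜 := ℝ)).toLinearMap).continuous_of_finiteDimensional).norm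

end MatrixNorm

section HessianSize

variable {n : ℕ} {u : (Fin n → ℝ) → ℝ} {Ω : Set (Fin n → ℝ)}

/-- The size `1 + ∑ᵢⱼ |∂ᵢ∂ⱼu|` of the Hessian, bounded away from zero so that its powers are
comparable. -/
noncomputable def hessSize (u : (Fin n → ℝ) → ℝ) (z : Fin n → ℝ) : ℝ :=
  1 + ∑ i, ∑ j, |hess u z i j|

lemma abs_hess_apply_add_one_le_hessSize (u : (Fin n → ℝ) → ℝ) (z : Fin n → ℝ) (i j : Fin n) :
    |hess u z i j| + 1 ≤ hessSize u z := by
  rw [hessSize, add_comm]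
  gcongr
  calc |hess u z i j| ≤ ∑ j, |hess u z i j| :=
        Finset.single_le_sum (fun j _ => abs_nonneg (hess u z i j)) (Finset.mem_univ j)
    _ ≤ ∑ i, ∑ j, |hess u z i j| := Finset.single_le_sum (f := fun i => ∑ j, |hess u z i j|)
        (fun i _ => Finset.sum_nonneg fun j _ => abs_nonneg _) (Finset.mem_univ i)

lemma one_le_hessSize (u : (Fin n → ℝ) → ℝ) (z : Fin n → ℝ) : 1 ≤ hessSize u z :=
  le_add_of_nonneg_right <| Finset.sum_nonneg fun _ _ => Finset.sum_nonneg fun _ _ => abs_nonneg _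

lemma matNorm_hess_le_hessSize (u : (Fin n → ℝ) → ℝ) (z : Fin n → ℝ) :
    matNorm (hess u z) ≤ hessSize u z :=
  (matNorm_le_sum_abs _).trans (le_add_of_nonneg_left zero_le_one)

lemma one_add_rpow_le {a p : ℝ} (ha : 0 ≤ a) (hp : 1 ≤ p) :
    (1 + a) ^ p ≤ 2 ^ (p - 1) + 2 ^ (p - 1) * a ^ p := by
  lift a to NNReal using ha
  have := NNReal.rpow_add_le_mul_rpow_add_rpow 1 a hp
  rw [NNReal.one_rpow, mul_add, mul_one] at this
  exact_mod_cast this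

lemma hessSize_rpow_le {p : ℝ} (hp : 1 ≤ p) (u : (Fin n → ℝ) → ℝ) (z : Fin n → ℝ) :
    hessSize u z ^ p ≤
      2 ^ (p - 1) + 2 ^ (p - 1) * (n * n : ℝ) ^ p * matNorm (hess u z) ^ p := by
  have hN : 0 ≤ matNorm (hess u z) := norm_nonneg _
  have hle : hessSize u z ≤ 1 + n * n * matNorm (hess u z) := by
    have hsum : ∑ i, ∑ j, |hess u z i j| ≤ ∑ _i : Fin n, ∑ _j : Fin n, matNorm (hess u z) :=
      Finset.sum_le_sum fun i _ => Finset.sum_le_sum fun j _ => abs_apply_le_matNorm _ i j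
    simp only [Finset.sum_const, Finset.card_univ, Fintype.card_fin, nsmul_eq_mul] at hsum
    rw [hessSize]
    linarith
  calc hessSize u z ^ p ≤ (1 + n * n * matNorm (hess u z)) ^ p :=
        Real.rpow_le_rpow (zero_le_one.trans (one_le_hessSize u z)) hle (by linarith)
    _ ≤ 2 ^ (p - 1) + 2 ^ (p - 1) * (n * n * matNorm (hess u z)) ^ p :=
        one_add_rpow_le (by positivity) hp
    _ = _ := by rw [Real.mul_rpow (by positivity) hN, mul_assoc]

lemma continuousOn_hess (hΩ : IsOpen Ω) (hu : ContDiffOn ℝ 2 u Ω) : ContinuousOn (hess u) Ω :=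
  continuousOn_pi.2 fun i => continuousOn_pi.2 fun j =>
    (contDiffOn_pd (m := 0) hΩ (contDiffOn_pd (m := 1) hΩ hu j) i).continuousOn

lemma continuousOn_hessSize (hΩ : IsOpen Ω) (hu : ContDiffOn ℝ 2 u Ω) :
    ContinuousOn (hessSize u) Ω :=
  continuousOn_const.add <| continuousOn_finsetSum _ fun i _ => continuousOn_finsetSum _ fun j _ =>
    (continuousOn_pi.1 (continuousOn_pi.1 (continuousOn_hess hΩ hu) i) j).abs

end HessianSize

section SobolevBounds

variable {n : ℕ} {p : ℝ} {M : ℝ} {u : (Fin n → ℝ) → ℝ} {Ω B : Set (Fin n → ℝ)}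

/-- The integrand whose integral is the `p`-th power of the norm `W2pNorm p u`. -/
noncomputable def w2pDensity (p : ℝ) (u : (Fin n → ℝ) → ℝ) (x : Fin n → ℝ) : ℝ :=
  |u x| ^ p + vnorm (grad u x) ^ p + matNorm (hess u x) ^ p

lemma abs_rpow_le_w2pDensity (p : ℝ) (u : (Fin n → ℝ) → ℝ) (x : Fin n → ℝ) :
    |u x| ^ p ≤ w2pDensity p u x := by
  rw [w2pDensity, add_assoc]
  exact le_add_of_nonneg_right (add_nonneg (Real.rpow_nonneg (vnorm_nonneg _) p)
    (Real.rpow_nonneg (norm_nonneg _) p))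

lemma vnorm_grad_rpow_le_w2pDensity (p : ℝ) (u : (Fin n → ℝ) → ℝ) (x : Fin n → ℝ) :
    vnorm (grad u x) ^ p ≤ w2pDensity p u x := by
  rw [w2pDensity, add_right_comm]
  exact le_add_of_nonneg_left (add_nonneg (Real.rpow_nonneg (abs_nonneg _) p)
    (Real.rpow_nonneg (norm_nonneg _) p))

lemma matNorm_hess_rpow_le_w2pDensity (p : ℝ) (u : (Fin n → ℝ) → ℝ) (x : Fin n → ℝ) :
    matNorm (hess u x) ^ p ≤ w2pDensity p u x :=
  le_add_of_nonneg_left (add_nonneg (Real.rpow_nonneg (abs_nonneg _) p)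
    (Real.rpow_nonneg (vnorm_nonneg _) p))

lemma w2pDensity_nonneg (p : ℝ) (u : (Fin n → ℝ) → ℝ) (x : Fin n → ℝ) : 0 ≤ w2pDensity p u x :=
  (Real.rpow_nonneg (abs_nonneg _) p).trans (abs_rpow_le_w2pDensity p u x)

lemma continuousOn_w2pDensity (hp : 0 ≤ p) (hΩ : IsOpen Ω) (hu : ContDiffOn ℝ 2 u Ω) :
    ContinuousOn (w2pDensity p u) Ω := by
  have hgrad : ContinuousOn (fun x => vnorm (grad u x)) Ω := continuous_vnorm.comp_continuousOn
    (continuousOn_pi.2 fun i => (contDiffOn_pd (m := 1) hΩ hu i).continuousOn)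
  have hhess : ContinuousOn (fun x => matNorm (hess u x)) Ω :=
    continuous_matNorm.comp_continuousOn (continuousOn_hess hΩ hu)
  exact ((hu.continuousOn.abs.rpow_const fun _ _ => .inr hp).add
    (hgrad.rpow_const fun _ _ => .inr hp)).add (hhess.rpow_const fun _ _ => .inr hp)

lemma setLIntegral_w2pDensity_le (hp : 0 < p) (hΩ : IsOpen Ω) (hu : ContDiffOn ℝ 2 u Ω)
    (hB : Bornology.IsBounded B) (hBΩ : closure B ⊆ Ω) (hM : W2pNorm p u B ≤ M) :
    ∫⁻ x in B, ENNReal.ofReal (w2pDensity p u x) ≤ ENNReal.ofReal (|M| ^ p) := by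
  have hint : IntegrableOn (w2pDensity p u) B :=
    (((continuousOn_w2pDensity hp.le hΩ hu).mono hBΩ).integrableOn_compact
      hB.isCompact_closure).mono_set subset_closure
  rw [← ofReal_integral_eq_lintegral_ofReal hint (.of_forall (w2pDensity_nonneg p u))]
  have h0 : 0 ≤ ∫ x in B, w2pDensity p u x := integral_nonneg (w2pDensity_nonneg p u)
  refine ENNReal.ofReal_le_ofReal ?_
  calc ∫ x in B, w2pDensity p u x = ((∫ x in B, w2pDensity p u x) ^ (1 / p)) ^ p := by
        rw [← Real.rpow_mul h0, one_div_mul_cancel hp.ne', Real.rpow_one]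
    _ ≤ |M| ^ p := Real.rpow_le_rpow (Real.rpow_nonneg h0 _) (hM.trans (le_abs_self M)) hp.le

lemma setLIntegral_ofReal_le_of_le_add_mul {α : Type*} [MeasurableSpace α] {μ : Measure α}
    {s : Set α} (hs : MeasurableSet s) {φ ψ : α → ℝ} {a c : ℝ} (hc : 0 ≤ c) {K : ENNReal}
    (hφ : ∀ x ∈ s, φ x ≤ a + c * ψ x) (hψ : ∫⁻ x in s, ENNReal.ofReal (ψ x) ∂μ ≤ K) :
    ∫⁻ x in s, ENNReal.ofReal (φ x) ∂μ ≤ ENNReal.ofReal a * μ s + ENNReal.ofReal c * K := by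
  calc ∫⁻ x in s, ENNReal.ofReal (φ x) ∂μ
      ≤ ∫⁻ x in s, (ENNReal.ofReal a + ENNReal.ofReal c * ENNReal.ofReal (ψ x)) ∂μ := by
        refine setLIntegral_mono' hs fun x hx => ?_
        rw [← ENNReal.ofReal_mul hc]
        exact (ENNReal.ofReal_le_ofReal (hφ x hx)).trans ENNReal.ofReal_add_le
    _ = ENNReal.ofReal a * μ s + ENNReal.ofReal c * ∫⁻ x in s, ENNReal.ofReal (ψ x) ∂μ := by
        rw [lintegral_add_left measurable_const, setLIntegral_const,
          lintegral_const_mul' _ _ ENNReal.ofReal_ne_top]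
    _ ≤ _ := by gcongr

lemma exists_setLIntegral_hessSize_rpow_le (hp : 1 ≤ p) (hΩ : IsOpen Ω) (hBm : MeasurableSet B)
    (hB : Bornology.IsBounded B) (hBΩ : closure B ⊆ Ω) (M : ℝ) :
    ∃ K : ENNReal, K ≠ ⊤ ∧ ∀ u : (Fin n → ℝ) → ℝ, ContDiffOn ℝ 2 u Ω → W2pNorm p u B ≤ M →
      ∫⁻ x in B, ENNReal.ofReal (hessSize u x ^ p) ≤ K := by
  refine ⟨_, ?_, fun u hu hM => setLIntegral_ofReal_le_of_le_add_mul hBm (by positivity)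
    (fun x _ => (hessSize_rpow_le hp u x).trans (add_le_add_right
      (mul_le_mul_of_nonneg_left (matNorm_hess_rpow_le_w2pDensity p u x) (by positivity)) _))
    (setLIntegral_w2pDensity_le (by linarith) hΩ hu hB hBΩ hM)⟩
  exact ENNReal.add_ne_top.2 ⟨ENNReal.mul_ne_top ENNReal.ofReal_ne_top hB.measure_lt_top.ne,
    ENNReal.mul_ne_top ENNReal.ofReal_ne_top ENNReal.ofReal_ne_top⟩

lemma norm_fderiv_le_sum_abs_pd (w : (Fin n → ℝ) → ℝ) (z : Fin n → ℝ) :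
    ‖fderiv ℝ w z‖ ≤ ∑ i, |pd i w z| := by
  refine ContinuousLinearMap.opNorm_le_bound _ (Finset.sum_nonneg fun i _ => abs_nonneg _)
    fun d => ?_
  rw [fderiv_apply_eq_grad_dotProduct, Real.norm_eq_abs, dotProduct, Finset.sum_mul]
  refine (Finset.abs_sum_le_sum_abs _ _).trans (Finset.sum_le_sum fun i _ => ?_)
  rw [abs_mul]
  exact mul_le_mul_of_nonneg_left (norm_le_pi_norm d i) (abs_nonneg _)

lemma norm_fderiv_rpow_le {w : (Fin n → ℝ) → ℝ} {z : Fin n → ℝ} {a : ℝ} (hp : 0 ≤ p)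
    (ha : ∀ i, |pd i w z| ≤ a) (ha0 : 0 ≤ a) : ‖fderiv ℝ w z‖ ^ p ≤ (n : ℝ) ^ p * a ^ p := by
  rw [← Real.mul_rpow n.cast_nonneg ha0]
  refine Real.rpow_le_rpow (norm_nonneg _) ((norm_fderiv_le_sum_abs_pd w z).trans ?_) hp
  simpa using Finset.sum_le_card_nsmul Finset.univ _ a fun i _ => ha i

lemma exists_abs_le_of_W2pNorm_le (hp : 1 ≤ p) (hnp : n < p) (hΩ : IsOpen Ω) (x₀ : Fin n → ℝ)
    {ρ : ℝ} (hρ : 0 < ρ) (hball : closure (ball x₀ ρ) ⊆ Ω) (M : ℝ) :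
    ∃ K : ℝ, 0 ≤ K ∧ ∀ u : (Fin n → ℝ) → ℝ, ContDiffOn ℝ 2 u Ω → W2pNorm p u (ball x₀ ρ) ≤ M →
      ∀ x ∈ ball x₀ ρ, |u x| ≤ K ∧ ∀ i, |pd i u x| ≤ K := by
  have hp0 : 0 ≤ p := zero_le_one.trans hp
  set c : ℝ := max 1 ((n : ℝ) ^ p)
  have hc : 0 ≤ c := zero_le_one.trans (le_max_left _ _)
  obtain ⟨C, hC⟩ := exists_norm_le_of_setLIntegral_rpow_le (F := ℝ) volume hp
    (by simpa using hnp) x₀ hρ (K := ENNReal.ofReal c * ENNReal.ofReal (|M| ^ p))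
    (ENNReal.mul_ne_top ENNReal.ofReal_ne_top ENNReal.ofReal_ne_top)
  refine ⟨|C|, abs_nonneg C, fun u hu hM x hx => ?_⟩
  have hdom : ∀ φ : (Fin n → ℝ) → ℝ, (∀ y, φ y ≤ c * w2pDensity p u y) →
      ∫⁻ y in ball x₀ ρ, ENNReal.ofReal (φ y) ≤ ENNReal.ofReal c * ENNReal.ofReal (|M| ^ p) :=
    fun φ hφ => by
      simpa using setLIntegral_ofReal_le_of_le_add_mul measurableSet_ball hc (a := 0)
        (fun y _ => (hφ y).trans (zero_add _).ge)
        (setLIntegral_w2pDensity_le (by linarith) hΩ hu isBounded_ball hball hM)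
  have hone : ∀ {a : ℝ} (y), a ≤ w2pDensity p u y → a ≤ c * w2pDensity p u y := fun y ha =>
    ha.trans (le_mul_of_one_le_left (w2pDensity_nonneg p u y) (le_max_left _ _))
  have hnp : ∀ {a : ℝ} (y), a ≤ w2pDensity p u y → (n : ℝ) ^ p * a ≤ c * w2pDensity p u y :=
    fun y ha => (mul_le_mul_of_nonneg_left ha (by positivity)).trans
      (mul_le_mul_of_nonneg_right (le_max_right _ _) (w2pDensity_nonneg p u y))
  have hpd : ∀ y i, |pd i u y| ≤ vnorm (grad u y) := fun y => abs_apply_le_vnorm (grad u y)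
  have hle : ∀ g : (Fin n → ℝ) → ℝ, ContDiffOn ℝ 1 g Ω →
      (∀ y, ‖g y‖ ^ p ≤ c * w2pDensity p u y) →
      (∀ y, ‖fderiv ℝ g y‖ ^ p ≤ c * w2pDensity p u y) → |g x| ≤ |C| := fun g hg h0 h1 =>
    (hC g Ω hΩ (subset_closure.trans hball) hg (hdom _ h0) (hdom _ h1) x hx).trans (le_abs_self C)
  refine ⟨hle u (hu.of_le one_le_two) (fun y => hone y (abs_rpow_le_w2pDensity p u y)) fun y => ?_,
    fun i => hle (pd i u) (contDiffOn_pd (m := 1) hΩ hu i) (fun y => ?_) fun y => ?_⟩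
  · exact (norm_fderiv_rpow_le hp0 (hpd y) (vnorm_nonneg _)).trans
      (hnp y (vnorm_grad_rpow_le_w2pDensity p u y))
  · exact hone y ((Real.rpow_le_rpow (abs_nonneg _) (hpd y i) hp0).trans
      (vnorm_grad_rpow_le_w2pDensity p u y))
  · exact (norm_fderiv_rpow_le hp0 (fun j => abs_apply_le_matNorm (hess u y) j i)
      (norm_nonneg _)).trans (hnp y (matNorm_hess_rpow_le_w2pDensity p u y))

end SobolevBounds

section DiscreteLaplacian

variable {n : ℕ} {Ω K : Set (Fin n → ℝ)} {u : (Fin n → ℝ) → ℝ} {h : ℝ} {z : Fin n → ℝ}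

/-- The second order central difference approximation `∑ₗ Δₗₗʰ w` of the Laplacian. -/
noncomputable def discreteLaplacian (h : ℝ) (w : (Fin n → ℝ) → ℝ) (z : Fin n → ℝ) : ℝ :=
  ∑ l, ddq l h w z

/-- The points at which the second difference quotients with step `h` only involve values at points
of `Ω`. -/
def shrunk (Ω : Set (Fin n → ℝ)) (h : ℝ) : Set (Fin n → ℝ) :=
  {z | z ∈ Ω ∧ ∀ l : Fin n, z + h • Pi.single l 1 ∈ Ω ∧ z - h • Pi.single l 1 ∈ Ω}

lemma isOpen_shrunk (hΩ : IsOpen Ω) (h : ℝ) : IsOpen (shrunk Ω h) := by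
  simp only [shrunk, ofPred_and, ofPred_forall]
  exact hΩ.inter (isOpen_iInter_of_finite fun l =>
    (hΩ.preimage (by fun_prop)).inter (hΩ.preimage (by fun_prop)))

lemma eventually_subset_shrunk (hΩ : IsOpen Ω) (hK : IsCompact K) (hKΩ : K ⊆ Ω) :
    ∀ᶠ h : ℝ in nhdsWithin 0 (Ioi 0), K ⊆ shrunk Ω h := by
  obtain ⟨δ, hδ, hthick⟩ := hK.exists_thickening_subset_open hΩ hKΩ
  filter_upwards [Ioo_mem_nhdsGT hδ] with h hh z hz
  refine ⟨hKΩ hz, fun l => ?_⟩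
  constructor <;> refine hthick (mem_thickening_iff.2 ⟨z, hz, ?_⟩)
  · rw [dist_self_add_left, norm_smul, norm_single_one, Real.norm_of_nonneg hh.1.le, mul_one]
    exact hh.2
  · rw [dist_self_sub_left, norm_smul, norm_single_one, Real.norm_of_nonneg hh.1.le, mul_one]
    exact hh.2

lemma contDiffOn_discreteLaplacian (h : ℝ) {m : ℕ} (hu : ContDiffOn ℝ m u Ω) :
    ContDiffOn ℝ m (discreteLaplacian h u) (shrunk Ω h) := by
  unfold discreteLaplacian ddq
  refine ContDiffOn.sum fun l _ => ContDiffOn.div_const (ContDiffOn.add (ContDiffOn.sub ?_ ?_) ?_) _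
  · exact hu.comp (ContDiff.contDiffOn (by fun_prop)) fun z hz => (hz.2 l).1
  · exact contDiffOn_const.mul (hu.mono fun z hz => hz.1)
  · exact hu.comp (ContDiff.contDiffOn (by fun_prop)) fun z hz => (hz.2 l).2

lemma pd_discreteLaplacian (hΩ : IsOpen Ω) (hu : ContDiffOn ℝ 1 u Ω) (hz : z ∈ shrunk Ω h)
    (i : Fin n) : pd i (discreteLaplacian h u) z = discreteLaplacian h (pd i u) z := by
  have hd : ∀ y ∈ Ω, HasFDerivAt u (fderiv ℝ u y) y := fun y hy =>
    ((hu.differentiableOn one_ne_zero).differentiableAt (hΩ.mem_nhds hy)).hasFDerivAt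
  have hddq : ∀ l, HasFDerivAt (ddq l h u) ((h ^ 2)⁻¹ • (fderiv ℝ u (z + h • Pi.single l 1) -
      (2 : ℝ) • fderiv ℝ u z + fderiv ℝ u (z - h • Pi.single l 1))) z := fun l => by
    have hplus := (hd _ (hz.2 l).1).comp z ((hasFDerivAt_id z).add_const _)
    have hminus := (hd _ (hz.2 l).2).comp z ((hasFDerivAt_id z).sub_const _)
    exact ((hplus.sub ((hd z hz.1).const_mul 2)).add hminus).mul_const _
  have hsum := HasFDerivAt.fun_sum (u := Finset.univ) fun l _ => hddq l
  change fderiv ℝ (fun y => ∑ l, ddq l h u y) z _ = _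
  rw [hsum.fderiv, FunLike.coe_sum, Finset.sum_apply]
  exact Finset.sum_congr rfl fun l _ => (div_eq_inv_mul _ _).symm

lemma hess_discreteLaplacian (hΩ : IsOpen Ω) (hu : ContDiffOn ℝ 2 u Ω) (hz : z ∈ shrunk Ω h)
    (i j : Fin n) :
    hess (discreteLaplacian h u) z i j = discreteLaplacian h (fun x => hess u x i j) z := by
  have hpd : pd j (discreteLaplacian h u) =ᶠ[nhds z] discreteLaplacian h (pd j u) := by
    filter_upwards [(isOpen_shrunk hΩ h).mem_nhds hz] with y hy
    exact pd_discreteLaplacian hΩ (hu.of_le one_le_two) hy j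
  calc hess (discreteLaplacian h u) z i j = pd i (discreteLaplacian h (pd j u)) z :=
        DFunLike.congr_fun hpd.fderiv_eq _
    _ = discreteLaplacian h (fun x => hess u x i j) z :=
        pd_discreteLaplacian hΩ (contDiffOn_pd (m := 1) hΩ hu j) hz i

lemma discreteLaplacian_sub (w w' : (Fin n → ℝ) → ℝ) :
    discreteLaplacian h (fun x => w x - w' x) z =
      discreteLaplacian h w z - discreteLaplacian h w' z := by
  simp only [discreteLaplacian, ddq, ← Finset.sum_sub_distrib]
  exact Finset.sum_congr rfl fun l _ => by ring

lemma discreteLaplacian_const_mul (c : ℝ) (w : (Fin n → ℝ) → ℝ) :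
    discreteLaplacian h (fun x => c * w x) z = c * discreteLaplacian h w z := by
  simp only [discreteLaplacian, ddq, Finset.mul_sum]
  exact Finset.sum_congr rfl fun l _ => by ring

lemma discreteLaplacian_sum {ι : Type*} (s : Finset ι) (w : ι → (Fin n → ℝ) → ℝ) :
    discreteLaplacian h (fun x => ∑ i ∈ s, w i x) z = ∑ i ∈ s, discreteLaplacian h (w i) z := by
  simp only [discreteLaplacian, ddq]
  rw [Finset.sum_comm]
  refine Finset.sum_congr rfl fun l _ => ?_
  rw [← Finset.sum_div, Finset.sum_add_distrib, Finset.sum_sub_distrib, Finset.mul_sum]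

lemma discreteLaplacian_trace_mul (F : Matrix (Fin n) (Fin n) ℝ)
    (A : (Fin n → ℝ) → Matrix (Fin n) (Fin n) ℝ) :
    discreteLaplacian h (fun x => (F * A x).trace) z =
      (F * of fun i j => discreteLaplacian h (fun x => A x i j) z).trace := by
  simp only [trace, diag_apply, mul_apply, discreteLaplacian_sum, discreteLaplacian_const_mul,
    of_apply]

lemma discreteLaplacian_le_of_touching {φ ψ : (Fin n → ℝ) → ℝ} (hle : ∀ x ∈ Ω, φ x ≤ ψ x)
    (heq : φ z = ψ z) (hz : z ∈ shrunk Ω h) :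
    discreteLaplacian h φ z ≤ discreteLaplacian h ψ z := by
  refine Finset.sum_le_sum fun l _ => ?_
  rw [ddq, ddq, heq]
  gcongr
  exacts [hle _ (hz.2 l).1, hle _ (hz.2 l).2]

lemma eventually_abs_discreteLaplacian_sub_lapl_le (hΩ : IsOpen Ω) (hu : ContDiffOn ℝ 2 u Ω)
    (hK : IsCompact K) (hKΩ : K ⊆ Ω) :
    ∀ᶠ h : ℝ in nhdsWithin 0 (Ioi 0), ∀ z ∈ K, |discreteLaplacian h u z - lapl u z| ≤ 1 := by
  have hddq : ∀ᶠ h : ℝ in nhdsWithin 0 (Ioi 0), ∀ l : Fin n, ∀ z ∈ K,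
      |ddq l h u z - pd l (pd l u) z| ≤ 1 / n := by
    refine Filter.eventually_all.2 fun l => ?_
    have : 0 < n := l.pos
    obtain ⟨δ, hδ, hclose⟩ := exists_abs_ddq_sub_pd_pd_le hΩ hu hK hKΩ l (ε := 1 / n)
      (by positivity)
    filter_upwards [Ioo_mem_nhdsGT hδ] with h hh z hz using hclose z hz h hh.1 hh.2
  filter_upwards [hddq] with h hh z hz
  rw [discreteLaplacian, lapl, ← Finset.sum_sub_distrib]
  calc |∑ l, (ddq l h u z - pd l (pd l u) z)| ≤ ∑ _l : Fin n, 1 / (n : ℝ) :=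
        (Finset.abs_sum_le_sum_abs _ _).trans (Finset.sum_le_sum fun l _ => hh l z hz)
    _ ≤ 1 := by
        rw [Finset.sum_const, Finset.card_univ, Fintype.card_fin, nsmul_eq_mul, mul_one_div]
        exact div_self_le_one _

end DiscreteLaplacian

section CompositionWithJet

variable {n : ℕ} {Ω K : Set (Fin n → ℝ)} {u : (Fin n → ℝ) → ℝ} {h : ℝ} {z : Fin n → ℝ}

/-- The first order jet `(x, u(x), ∇u(x))` at which the data of the equation are evaluated. -/
noncomputable def oneJet (u : (Fin n → ℝ) → ℝ) (x : Fin n → ℝ) : (Fin n → ℝ) × ℝ × (Fin n → ℝ) :=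
  (x, u x, grad u x)

/-- The one-jets over `K` of functions that are bounded by `B` together with their first
derivatives. -/
def jetBox (K : Set (Fin n → ℝ)) (B : ℝ) : Set ((Fin n → ℝ) × ℝ × (Fin n → ℝ)) :=
  K ×ˢ (Icc (-B) B ×ˢ closedBall 0 B)

lemma isCompact_jetBox (hK : IsCompact K) (B : ℝ) : IsCompact (jetBox K B) :=
  hK.prod (isCompact_Icc.prod (isCompact_closedBall 0 B))

lemma jetBox_subset (hKΩ : K ⊆ Ω) (B : ℝ) : jetBox K B ⊆ Ω ×ˢ (univ ×ˢ univ) := fun _ hy =>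
  ⟨hKΩ hy.1, mem_univ _, mem_univ _⟩

lemma oneJet_mem_jetBox {B : ℝ} (hz : z ∈ K) (hu : |u z| ≤ B) (hgrad : ∀ i, |pd i u z| ≤ B) :
    oneJet u z ∈ jetBox K B := by
  refine ⟨hz, abs_le.1 hu, ?_⟩
  rw [mem_closedBall_zero_iff]
  exact (pi_norm_le_iff_of_nonneg ((abs_nonneg _).trans hu)).2 hgrad

lemma eventually_abs_add_smul_sub_le {ψ : (Fin n → ℝ) → ℝ} (hΩ : IsOpen Ω)
    (hψ : ContDiffOn ℝ 1 ψ Ω) (hK : IsCompact K) (hKΩ : K ⊆ Ω) :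
    ∀ᶠ h : ℝ in nhdsWithin 0 (Ioi 0), ∀ z ∈ K, ∀ (l : Fin n) (s : ℝ), |s| = h →
      |ψ (z + s • Pi.single l 1) - ψ z| ≤ h * (|pd l ψ z| + 1) := by
  obtain ⟨δ, hδ, htaylor⟩ := exists_norm_sub_sub_fderiv_le_mul hΩ hψ hK hKΩ one_pos
  filter_upwards [Ioo_mem_nhdsGT hδ] with h hh z hz l s hs
  have hnorm : ‖z + s • Pi.single l 1 - z‖ = h := by
    rw [add_sub_cancel_left, norm_smul, norm_single_one, mul_one, Real.norm_eq_abs, hs]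
  have hle := (htaylor z hz _ (hnorm.trans_lt hh.2)).2
  rw [hnorm, add_sub_cancel_left, map_smul, smul_eq_mul, one_mul, Real.norm_eq_abs] at hle
  calc |ψ (z + s • Pi.single l 1) - ψ z|
      ≤ |s * pd l ψ z| + |ψ (z + s • Pi.single l 1) - ψ z - s * pd l ψ z| := by
        linarith [abs_sub_abs_le_abs_sub (ψ (z + s • Pi.single l 1) - ψ z) (s * pd l ψ z)]
    _ ≤ h * |pd l ψ z| + h := add_le_add (by rw [abs_mul, hs]) hle
    _ = h * (|pd l ψ z| + 1) := by ring

lemma eventually_norm_oneJet_sub_le (hΩ : IsOpen Ω) (hu : ContDiffOn ℝ 2 u Ω) (hK : IsCompact K)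
    (hKΩ : K ⊆ Ω) {B : ℝ} (hB : 0 ≤ B) (hgrad : ∀ z ∈ K, ∀ i, |pd i u z| ≤ B) :
    ∀ᶠ h : ℝ in nhdsWithin 0 (Ioi 0), ∀ z ∈ K, ∀ (l : Fin n) (s : ℝ), |s| = h →
      ‖oneJet u (z + s • Pi.single l 1) - oneJet u z‖ ≤ h * ((B + 2) * hessSize u z) := by
  have hpd := Filter.eventually_all.2 fun i : Fin n =>
    eventually_abs_add_smul_sub_le hΩ (contDiffOn_pd (m := 1) hΩ hu i) hK hKΩ
  filter_upwards [eventually_abs_add_smul_sub_le hΩ (hu.of_le one_le_two) hK hKΩ, hpd,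
    self_mem_nhdsWithin] with h hu' hpd' (hh : 0 < h) z hz l s hs
  have hg : 1 ≤ hessSize u z := one_le_hessSize u z
  have hBg : B + 2 ≤ (B + 2) * hessSize u z := le_mul_of_one_le_right (by positivity) hg
  refine max_le ?_ (max_le ?_ ((pi_norm_le_iff_of_nonneg (by positivity)).2 fun i => ?_))
  · change ‖z + s • Pi.single l 1 - z‖ ≤ _
    rw [add_sub_cancel_left, norm_smul, norm_single_one, Real.norm_eq_abs, hs]
    gcongr
    linarith
  · refine (hu' z hz l s hs).trans ?_
    gcongr
    linarith [hgrad z hz l]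
  · refine (hpd' i z hz l s hs).trans ?_
    gcongr
    exact (abs_hess_apply_add_one_le_hessSize u z l i).trans
      (le_mul_of_one_le_left (by positivity) (by linarith))

lemma abs_secondDifference_sub_le {E : Type*} [NormedAddCommGroup E] [NormedSpace ℝ E]
    {φ : E → ℝ} {L : E →L[ℝ] ℝ} {y y₁ y₂ : E} {ε : ℝ} (h : ℝ)
    (h₁ : |φ y₁ - φ y - L (y₁ - y)| ≤ ε) (h₂ : |φ y₂ - φ y - L (y₂ - y)| ≤ ε) :
    |(φ y₁ - 2 * φ y + φ y₂) / h ^ 2 - L ((h ^ 2)⁻¹ • (y₁ - (2 : ℝ) • y + y₂))| ≤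
      2 * ε / h ^ 2 := by
  have hsplit : (φ y₁ - 2 * φ y + φ y₂) / h ^ 2 - L ((h ^ 2)⁻¹ • (y₁ - (2 : ℝ) • y + y₂)) =
      ((φ y₁ - φ y - L (y₁ - y)) + (φ y₂ - φ y - L (y₂ - y))) / h ^ 2 := by
    simp only [map_smul, map_add, map_sub, smul_eq_mul]
    ring
  rw [hsplit, abs_div, abs_of_nonneg (sq_nonneg h)]
  gcongr
  linarith [abs_add_le (φ y₁ - φ y - L (y₁ - y)) (φ y₂ - φ y - L (y₂ - y))]

lemma smul_secondDifference_oneJet (l : Fin n) (h : ℝ) (u : (Fin n → ℝ) → ℝ) (z : Fin n → ℝ) :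
    (h ^ 2)⁻¹ • (oneJet u (z + h • Pi.single l 1) - (2 : ℝ) • oneJet u z +
      oneJet u (z - h • Pi.single l 1)) = (0, ddq l h u z, fun i => ddq l h (pd i u) z) := by
  refine Prod.ext ?_ (Prod.ext (div_eq_inv_mul _ _).symm
    (funext fun i => (div_eq_inv_mul _ _).symm))
  change (h ^ 2)⁻¹ • (z + h • Pi.single l 1 - (2 : ℝ) • z + (z - h • Pi.single l 1)) = 0
  rw [two_smul, smul_eq_zero]
  exact .inr (by abel)

lemma abs_discreteLaplacian_comp_oneJet_sub_le {φ : ((Fin n → ℝ) × ℝ × (Fin n → ℝ)) → ℝ}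
    {L : ((Fin n → ℝ) × ℝ × (Fin n → ℝ)) →L[ℝ] ℝ} {ε : ℝ}
    (hφ : ∀ (l : Fin n) (s : ℝ), |s| = |h| →
      |φ (oneJet u (z + s • Pi.single l 1)) - φ (oneJet u z) -
        L (oneJet u (z + s • Pi.single l 1) - oneJet u z)| ≤ ε) :
    |discreteLaplacian h (fun x => φ (oneJet u x)) z -
      L (0, discreteLaplacian h u z, fun i => discreteLaplacian h (pd i u) z)| ≤
      n * (2 * ε / h ^ 2) := by
  have hsum : ((0, discreteLaplacian h u z, fun i => discreteLaplacian h (pd i u) z) :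
      (Fin n → ℝ) × ℝ × (Fin n → ℝ)) =
      ∑ l, (0, ddq l h u z, fun i => ddq l h (pd i u) z) := by
    simp only [Prod.ext_iff, Prod.fst_sum, Prod.snd_sum, Finset.sum_const_zero, true_and]
    refine ⟨rfl, funext fun i => ?_⟩
    rw [Finset.sum_apply]
    rfl
  have hterm : ∀ l, |ddq l h (fun x => φ (oneJet u x)) z -
      L (0, ddq l h u z, fun i => ddq l h (pd i u) z)| ≤ 2 * ε / h ^ 2 := fun l => by
    have hminus := hφ l (-h) (abs_neg h)
    rw [neg_smul, ← sub_eq_add_neg] at hminus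
    rw [← smul_secondDifference_oneJet]
    exact abs_secondDifference_sub_le h (hφ l h rfl) hminus
  rw [hsum, map_sum, discreteLaplacian, ← Finset.sum_sub_distrib]
  refine (Finset.abs_sum_le_sum_abs _ _).trans ((Finset.sum_le_card_nsmul _ _ _
    fun l _ => hterm l).trans ?_)
  rw [Finset.card_univ, Fintype.card_fin, nsmul_eq_mul]

lemma norm_zero_prod_le (a : ℝ) (b : Fin n → ℝ) :
    ‖((0 : Fin n → ℝ), a, b)‖ ≤ |a| + ∑ i, |b i| := by
  have hb : 0 ≤ ∑ i, |b i| := Finset.sum_nonneg fun i _ => abs_nonneg _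
  rw [Prod.norm_mk, Prod.norm_mk, norm_zero]
  refine max_le (by positivity) (max_le (le_add_of_nonneg_right hb)
    ((pi_norm_le_iff_of_nonneg (by positivity)).2 fun i => ?_))
  exact (Finset.single_le_sum (fun i _ => abs_nonneg (b i)) (Finset.mem_univ i)).trans
    (le_add_of_nonneg_left (abs_nonneg a))

lemma eventually_mul_hessSize_lt (hΩ : IsOpen Ω) (hu : ContDiffOn ℝ 2 u Ω) (hK : IsCompact K)
    (hKΩ : K ⊆ Ω) {c δ : ℝ} (hc : 0 < c) (hδ : 0 < δ) :
    ∀ᶠ h : ℝ in nhdsWithin 0 (Ioi 0), ∀ z ∈ K, h * (c * hessSize u z) < δ := by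
  obtain ⟨G, hG⟩ := hK.exists_bound_of_continuousOn ((continuousOn_hessSize hΩ hu).mono hKΩ)
  have hstep : Ioo (0 : ℝ) (δ / (c * (|G| + 1))) ∈ nhdsWithin (0 : ℝ) (Ioi 0) :=
    Ioo_mem_nhdsGT (by positivity)
  filter_upwards [hstep] with h ⟨hh, hhδ⟩ z hz
  have hgG : hessSize u z ≤ |G| + 1 := by
    linarith [le_abs_self G, (Real.le_norm_self _).trans (hG z hz)]
  calc h * (c * hessSize u z) ≤ h * (c * (|G| + 1)) := by gcongr
    _ < δ := (lt_div_iff₀ (by positivity)).1 hhδ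

/-- The first order Taylor terms of `φ` along the jet add up to `L (0, Δʰu, Δʰ∇u)`, and the
quadratic remainders are of size `‖jet increment‖² / h² ≲ |D²u|²`. -/
theorem exists_eventually_abs_discreteLaplacian_comp_oneJet_le (hΩ : IsOpen Ω) (hK : IsCompact K)
    (hKΩ : K ⊆ Ω) {φ : ((Fin n → ℝ) × ℝ × (Fin n → ℝ)) → ℝ}
    (hφ : C11On φ (Ω ×ˢ (univ ×ˢ univ))) {B : ℝ} (hB : 0 ≤ B) :
    ∃ Λ : ℝ, 0 ≤ Λ ∧ ∀ u : (Fin n → ℝ) → ℝ, ContDiffOn ℝ 2 u Ω →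
      (∀ x ∈ K, |u x| ≤ B ∧ ∀ i, |pd i u x| ≤ B) →
      ∀ᶠ h : ℝ in nhdsWithin 0 (Ioi 0), ∀ z ∈ K,
        |discreteLaplacian h (fun x => φ (oneJet u x)) z| ≤
          Λ * (|discreteLaplacian h u z| + ∑ i, |discreteLaplacian h (pd i u) z| +
            hessSize u z ^ 2) := by
  have hS : IsOpen (Ω ×ˢ ((univ : Set ℝ) ×ˢ (univ : Set (Fin n → ℝ)))) :=
    hΩ.prod (isOpen_univ.prod isOpen_univ)
  have hbox := isCompact_jetBox hK B
  obtain ⟨δ, hδ, C, hC, htaylor⟩ :=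
    exists_norm_sub_sub_fderiv_le_mul_sq hS hφ hbox (jetBox_subset hKΩ B)
  obtain ⟨D, hD⟩ := hbox.exists_bound_of_continuousOn
    ((hφ.1.continuousOn_fderiv_of_isOpen hS le_rfl).mono (jetBox_subset hKΩ B))
  refine ⟨|D| + n * (2 * C * (B + 2) ^ 2), by positivity, fun u hu hb => ?_⟩
  filter_upwards [eventually_norm_oneJet_sub_le hΩ hu hK hKΩ hB fun z hz => (hb z hz).2,
    eventually_mul_hessSize_lt hΩ hu hK hKΩ (by linarith : 0 < B + 2) hδ,
    self_mem_nhdsWithin] with h hjet hsmall hh z hz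
  set g := hessSize u z
  have hzbox : oneJet u z ∈ jetBox K B := oneJet_mem_jetBox hz (hb z hz).1 (hb z hz).2
  have hh : 0 < h := hh
  set L := fderiv ℝ φ (oneJet u z)
  have hrem := abs_discreteLaplacian_comp_oneJet_sub_le (φ := φ) (L := L) (h := h)
    (ε := C * (h * ((B + 2) * g)) ^ 2) fun l s hs => by
      have hinc := hjet z hz l s (hs.trans (abs_of_pos hh))
      exact (htaylor _ hzbox _ (hinc.trans_lt (hsmall z hz))).trans (by gcongr)
  set T := |discreteLaplacian h u z| + ∑ i, |discreteLaplacian h (pd i u) z|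
  have hL : |L (0, discreteLaplacian h u z, fun i => discreteLaplacian h (pd i u) z)| ≤ |D| * T :=
    (L.le_opNorm _).trans (mul_le_mul ((hD _ hzbox).trans (le_abs_self D))
      (norm_zero_prod_le _ _) (norm_nonneg _) (abs_nonneg _))
  have _ : 0 ≤ T := add_nonneg (abs_nonneg _) (Finset.sum_nonneg fun i _ => abs_nonneg _)
  have hε : n * (2 * (C * (h * ((B + 2) * g)) ^ 2) / h ^ 2) =
      n * (2 * C * (B + 2) ^ 2) * g ^ 2 := by
    field_simp
  have hsplit := abs_sub_abs_le_abs_sub (discreteLaplacian h (fun x => φ (oneJet u x)) z)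
    (L (0, discreteLaplacian h u z, fun i => discreteLaplacian h (pd i u) z))
  calc |discreteLaplacian h (fun x => φ (oneJet u x)) z|
      ≤ |D| * T + n * (2 * C * (B + 2) ^ 2) * g ^ 2 := by linarith
    _ ≤ (|D| + n * (2 * C * (B + 2) ^ 2)) * (T + g ^ 2) := by
        have hcross : 0 ≤ |D| * g ^ 2 + n * (2 * C * (B + 2) ^ 2) * T := by positivity
        linarith

end CompositionWithJet

section AugmentedHessian

variable {n k : ℕ} {Ω K : Set (Fin n → ℝ)} {u : (Fin n → ℝ) → ℝ} {z : Fin n → ℝ} {b : ℝ}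
  {f : ((Fin n → ℝ) × ℝ × (Fin n → ℝ)) → ℝ}
  {H : ((Fin n → ℝ) × ℝ × (Fin n → ℝ)) → Matrix (Fin n) (Fin n) ℝ}

/-- The augmented Hessian `A_H[u] = ∇²u − H[u]`. -/
noncomputable def augHess (H : ((Fin n → ℝ) × ℝ × (Fin n → ℝ)) → Matrix (Fin n) (Fin n) ℝ)
    (u : (Fin n → ℝ) → ℝ) (x : Fin n → ℝ) : Matrix (Fin n) (Fin n) ℝ :=
  hess u x - H (oneJet u x)

/-- `u` solves `σ_k(A_H[u]) = f[u]^k` on `Ω` and is admissible, i.e. `λ(A_H[u]) ∈ Γ_k^+`. -/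
def IsAdmissibleSolution (k : ℕ) (f : ((Fin n → ℝ) × ℝ × (Fin n → ℝ)) → ℝ)
    (H : ((Fin n → ℝ) × ℝ × (Fin n → ℝ)) → Matrix (Fin n) (Fin n) ℝ) (Ω : Set (Fin n → ℝ))
    (u : (Fin n → ℝ) → ℝ) : Prop :=
  ∀ x ∈ Ω, esymmMat k (augHess H u x) = f (oneJet u x) ^ k ∧ GammaPlus k (augHess H u x)

lemma oneJet_mem (hz : z ∈ Ω) : oneJet u z ∈ Ω ×ˢ (univ ×ˢ univ) :=
  ⟨hz, mem_univ _, mem_univ _⟩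

lemma isSymm_augHess (hΩ : IsOpen Ω) (hu : ContDiffOn ℝ 2 u Ω)
    (hHsymm : ∀ y ∈ Ω ×ˢ (univ ×ˢ univ), (H y).IsSymm) (hz : z ∈ Ω) : (augHess H u z).IsSymm :=
  (isSymm_hess (hu.contDiffAt (hΩ.mem_nhds hz))).sub (hHsymm _ (oneJet_mem hz))

lemma IsAdmissibleSolution.rpow_esymmMat_augHess (hsol : IsAdmissibleSolution k f H Ω u)
    (hk : k ≠ 0) (hfpos : ∀ y ∈ Ω ×ˢ (univ ×ˢ univ), 0 < f y) (hz : z ∈ Ω) :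
    esymmMat k (augHess H u z) ^ (1 / k : ℝ) = f (oneJet u z) := by
  rw [(hsol z hz).1, one_div, Real.pow_rpow_inv_natCast (hfpos _ (oneJet_mem hz)).le hk]

lemma abs_trace_le {A : Matrix (Fin n) (Fin n) ℝ} (hA : ∀ i j, |A i j| ≤ b) : |A.trace| ≤ n * b :=
  (Finset.abs_sum_le_sum_abs _ _).trans
    ((Finset.sum_le_card_nsmul _ _ _ fun i _ => hA i i).trans_eq (by simp))

lemma lapl_add_one_le_hessSize (u : (Fin n → ℝ) → ℝ) (z : Fin n → ℝ) :
    lapl u z + 1 ≤ hessSize u z := by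
  rw [add_comm, hessSize, lapl]
  gcongr with i
  exact (le_abs_self _).trans (Finset.single_le_sum (f := fun j => |hess u z i j|)
    (fun j _ => abs_nonneg _) (Finset.mem_univ i))

lemma abs_trace_augHess_sub_lapl_le (hH : ∀ i j, |H (oneJet u z) i j| ≤ b) :
    |(augHess H u z).trace - lapl u z| ≤ n * b := by
  have htrace : (augHess H u z).trace - lapl u z = -(H (oneJet u z)).trace := by
    rw [augHess, trace_sub]
    exact sub_sub_cancel_left _ _
  rw [htrace, abs_neg]
  exact abs_trace_le hH

lemma trace_augHess_le (hb : 0 ≤ b) (hH : ∀ i j, |H (oneJet u z) i j| ≤ b) :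
    (augHess H u z).trace ≤ (1 + n * b) * hessSize u z := by
  have hnb : n * b ≤ n * b * hessSize u z :=
    le_mul_of_one_le_right (by positivity) (one_le_hessSize u z)
  linarith [(abs_le.1 (abs_trace_augHess_sub_lapl_le hH)).2, lapl_add_one_le_hessSize u z]

lemma hessSize_le_of_gammaPlus (hk : 2 ≤ k) (hkn : k ≤ n) (hA : (augHess H u z).IsSymm)
    (hG : GammaPlus k (augHess H u z)) (hH : ∀ i j, |H (oneJet u z) i j| ≤ b) :
    hessSize u z ≤ 1 + n ^ 2 * (lapl u z + (n + 1) * b) := by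
  have hentry : ∀ i j, |hess u z i j| ≤ lapl u z + (n + 1) * b := fun i j => by
    have haug := abs_apply_le_trace_of_gammaPlus hk hkn hA hG i j
    have htri : |hess u z i j| ≤ |augHess H u z i j| + |H (oneJet u z) i j| := by
      simpa [augHess] using abs_add_le (augHess H u z i j) (H (oneJet u z) i j)
    linarith [hH i j, (abs_le.1 (abs_trace_augHess_sub_lapl_le hH)).2]
  calc hessSize u z ≤ 1 + ∑ _i : Fin n, ∑ _j : Fin n, (lapl u z + (n + 1) * b) := by
        unfold hessSize
        gcongr with i _ j
        exact hentry i j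
    _ = 1 + n ^ 2 * (lapl u z + (n + 1) * b) := by
        simp only [Finset.sum_const, Finset.card_univ, Fintype.card_fin, nsmul_eq_mul]
        ring

lemma IsGardingFunctional.abs_trace_mul_le {F N : Matrix (Fin n) (Fin n) ℝ}
    (hF : IsGardingFunctional k F) : |(F * N).trace| ≤ F.trace * ∑ i, ∑ j, |N i j| := by
  rw [Finset.sum_comm, Finset.mul_sum]
  refine (Finset.abs_sum_le_sum_abs _ _).trans (Finset.sum_le_sum fun i _ => ?_)
  rw [Finset.mul_sum, diag_apply, mul_apply]
  refine (Finset.abs_sum_le_sum_abs _ _).trans (Finset.sum_le_sum fun j _ => ?_)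
  rw [abs_mul]
  exact mul_le_mul_of_nonneg_right (hF.abs_apply_le_trace i j) (abs_nonneg _)

end AugmentedHessian

section Linearisation

variable {n k : ℕ} {Ω K : Set (Fin n → ℝ)} {u : (Fin n → ℝ) → ℝ} {z : Fin n → ℝ}
  {f : ((Fin n → ℝ) × ℝ × (Fin n → ℝ)) → ℝ}
  {H : ((Fin n → ℝ) × ℝ × (Fin n → ℝ)) → Matrix (Fin n) (Fin n) ℝ}

-- Concavity of `σ_k^{1/k}`: `tr (F A_H[u])` touches `f[u]` from above at `z`.
lemma discreteLaplacian_comp_oneJet_le_trace_mul {h : ℝ} (hk : k ≠ 0) (hΩ : IsOpen Ω)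
    (hfpos : ∀ y ∈ Ω ×ˢ (univ ×ˢ univ), 0 < f y)
    (hHsymm : ∀ y ∈ Ω ×ˢ (univ ×ˢ univ), (H y).IsSymm) (hu : ContDiffOn ℝ 2 u Ω)
    (hsol : IsAdmissibleSolution k f H Ω u) (hz : z ∈ shrunk Ω h)
    {F : Matrix (Fin n) (Fin n) ℝ} (hF : IsGardingFunctional k F)
    (hFz : (F * augHess H u z).trace = f (oneJet u z)) :
    discreteLaplacian h (fun x => f (oneJet u x)) z ≤
      (F * hess (discreteLaplacian h u) z).trace -
        (F * of fun i j => discreteLaplacian h (fun x => H (oneJet u x) i j) z).trace := by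
  have hle : ∀ x ∈ Ω, f (oneJet u x) ≤ (F * augHess H u x).trace := fun x hx => by
    rw [← hsol.rpow_esymmMat_augHess hk hfpos hx]
    exact hF.rpow_le_trace_mul (isSymm_augHess hΩ hu hHsymm hx) (hsol x hx).2
  refine (discreteLaplacian_le_of_touching hle hFz.symm hz).trans_eq ?_
  rw [discreteLaplacian_trace_mul, ← trace_sub, ← mul_sub]
  congr 2
  ext i j
  simp only [augHess, of_apply, Matrix.sub_apply, discreteLaplacian_sub,
    hess_discreteLaplacian hΩ hu hz]

lemma exists_abs_apply_le_of_isCompact {α : Type*} [TopologicalSpace α] {s : Set α}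
    (hs : IsCompact s) {G : α → Matrix (Fin n) (Fin n) ℝ}
    (hG : ∀ i j, ContinuousOn (fun y => G y i j) s) :
    ∃ b : ℝ, 0 ≤ b ∧ ∀ y ∈ s, ∀ i j, |G y i j| ≤ b := by
  have hcont : ContinuousOn (fun y i j => G y i j) s :=
    continuousOn_pi.2 fun i => continuousOn_pi.2 fun j => hG i j
  obtain ⟨b, hb⟩ := hs.exists_bound_of_continuousOn hcont
  exact ⟨|b|, abs_nonneg b, fun y hy i j => (norm_le_pi_norm (fun j => G y i j) j).trans
    ((norm_le_pi_norm (fun i j => G y i j) i).trans ((hb y hy).trans (le_abs_self b)))⟩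

lemma exists_abs_apply_oneJet_le (hK : IsCompact K) (hKΩ : K ⊆ Ω)
    (hH : ∀ i j, C11On (fun y => H y i j) (Ω ×ˢ (univ ×ˢ univ))) (B : ℝ) :
    ∃ b : ℝ, 0 ≤ b ∧ ∀ u : (Fin n → ℝ) → ℝ, (∀ x ∈ K, |u x| ≤ B ∧ ∀ i, |pd i u x| ≤ B) →
      ∀ z ∈ K, ∀ i j, |H (oneJet u z) i j| ≤ b := by
  obtain ⟨b, hb, hle⟩ := exists_abs_apply_le_of_isCompact (isCompact_jetBox hK B) (G := H)
    fun i j => (hH i j).1.continuousOn.mono (jetBox_subset hKΩ B)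
  exact ⟨b, hb, fun u huB z hz => hle _ (oneJet_mem_jetBox hz (huB z hz).1 (huB z hz).2)⟩

lemma exists_discreteLaplacian_hessSize_bounds (hk : 2 ≤ k) (hkn : k ≤ n) (hΩ : IsOpen Ω)
    (hH : ∀ i j, C11On (fun y => H y i j) (Ω ×ˢ (univ ×ˢ univ)))
    (hHsymm : ∀ y ∈ Ω ×ˢ (univ ×ˢ univ), (H y).IsSymm) (hK : IsCompact K) (hKΩ : K ⊆ Ω) (B : ℝ) :
    ∃ Λ : ℝ, 1 ≤ Λ ∧ ∀ u : (Fin n → ℝ) → ℝ, ContDiffOn ℝ 2 u Ω →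
      IsAdmissibleSolution k f H Ω u → (∀ x ∈ K, |u x| ≤ B ∧ ∀ i, |pd i u x| ≤ B) →
      ∀ᶠ h : ℝ in nhdsWithin 0 (Ioi 0), ∀ z ∈ K, discreteLaplacian h u z ≤ hessSize u z ∧
        hessSize u z ≤ Λ + n ^ 2 * discreteLaplacian h u z := by
  obtain ⟨b, hb, hHb⟩ := exists_abs_apply_oneJet_le hK hKΩ hH B
  have hΛ : 0 ≤ (n : ℝ) ^ 2 * (1 + (n + 1) * b) := by positivity
  refine ⟨1 + n ^ 2 * (1 + (n + 1) * b), by linarith, fun u hu hsol huB => ?_⟩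
  filter_upwards [eventually_abs_discreteLaplacian_sub_lapl_le hΩ hu hK hKΩ] with h hclose z hz
  obtain ⟨hlower, hupper⟩ := abs_le.1 (hclose z hz)
  refine ⟨by linarith [lapl_add_one_le_hessSize u z], ?_⟩
  have hsize := hessSize_le_of_gammaPlus hk hkn (isSymm_augHess hΩ hu hHsymm (hKΩ hz))
    (hsol z (hKΩ hz)).2 (hHb u huB z hz)
  calc hessSize u z ≤ 1 + n ^ 2 * (lapl u z + (n + 1) * b) := hsize
    _ ≤ 1 + n ^ 2 * (discreteLaplacian h u z + 1 + (n + 1) * b) := by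
        gcongr
        linarith
    _ = 1 + n ^ 2 * (1 + (n + 1) * b) + n ^ 2 * discreteLaplacian h u z := by ring

lemma div_pow_le_inv_pow {c y : ℝ} (hk : k ≠ 0) (hc : 0 < c) (hcy : c ≤ y) :
    y / y ^ k ≤ (c ^ (k - 1))⁻¹ := by
  have hy : 0 < y := hc.trans_le hcy
  rw [← mul_pow_sub_one hk y, div_mul_cancel_left₀ hy.ne']
  gcongr

lemma exists_isGardingFunctional_trace_le (hk : 2 ≤ k) (hkn : k ≤ n) (hΩ : IsOpen Ω)
    (hfpos : ∀ y ∈ Ω ×ˢ (univ ×ˢ univ), 0 < f y) (hf : C11On f (Ω ×ˢ (univ ×ˢ univ)))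
    (hH : ∀ i j, C11On (fun y => H y i j) (Ω ×ˢ (univ ×ˢ univ)))
    (hHsymm : ∀ y ∈ Ω ×ˢ (univ ×ˢ univ), (H y).IsSymm) (hK : IsCompact K) (hKΩ : K ⊆ Ω) (B : ℝ) :
    ∃ Λ : ℝ, 0 ≤ Λ ∧ ∀ u : (Fin n → ℝ) → ℝ, ContDiffOn ℝ 2 u Ω →
      IsAdmissibleSolution k f H Ω u → (∀ x ∈ K, |u x| ≤ B ∧ ∀ i, |pd i u x| ≤ B) →
      ∀ z ∈ K, ∃ F, IsGardingFunctional k F ∧ (F * augHess H u z).trace = f (oneJet u z) ∧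
        F.trace ≤ Λ * hessSize u z ^ (k - 1) := by
  have hk0 : k ≠ 0 := by lia
  obtain ⟨b, hb, hHb⟩ := exists_abs_apply_oneJet_le hK hKΩ hH B
  obtain ⟨c, hc, hfc⟩ := (isCompact_jetBox hK B).exists_forall_le'
    (hf.1.continuousOn.mono (jetBox_subset hKΩ B)) fun y hy => hfpos y (jetBox_subset hKΩ B hy)
  refine ⟨n * 2 ^ n * (1 + n * b) ^ (k - 1) * (c ^ (k - 1))⁻¹, by positivity,
    fun u hu hsol huB z hz => ?_⟩
  have hA := isSymm_augHess hΩ hu hHsymm (hKΩ hz)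
  have hG := (hsol z (hKΩ hz)).2
  have hfz := hfc _ (oneJet_mem_jetBox hz (huB z hz).1 (huB z hz).2)
  obtain ⟨F, hF, hFz, htrace⟩ := exists_isGardingFunctional hk hkn hA hG
  rw [hsol.rpow_esymmMat_augHess hk0 hfpos (hKΩ hz)] at hFz htrace
  rw [(hsol z (hKΩ hz)).1] at htrace
  have htr : 0 ≤ (augHess H u z).trace := (abs_nonneg _).trans
    (abs_apply_le_trace_of_gammaPlus hk hkn hA hG ⟨0, by lia⟩ ⟨0, by lia⟩)
  have hg := one_le_hessSize u z
  refine ⟨F, hF, hFz, htrace.trans ?_⟩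
  calc n * 2 ^ n * (augHess H u z).trace ^ (k - 1) * (f (oneJet u z) / f (oneJet u z) ^ k)
      ≤ n * 2 ^ n * ((1 + n * b) * hessSize u z) ^ (k - 1) * (c ^ (k - 1))⁻¹ := by
        gcongr
        · exact div_nonneg (hc.le.trans hfz) (pow_nonneg (hc.le.trans hfz) k)
        · exact trace_augHess_le hb (hHb u huB z hz)
        · exact div_pow_le_inv_pow hk0 hc hfz
    _ = _ := by rw [mul_pow]; ring

lemma exists_neg_trace_mul_hess_discreteLaplacian_le (hk : k ≠ 0) (hΩ : IsOpen Ω)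
    (hfpos : ∀ y ∈ Ω ×ˢ (univ ×ˢ univ), 0 < f y) (hf : C11On f (Ω ×ˢ (univ ×ˢ univ)))
    (hH : ∀ i j, C11On (fun y => H y i j) (Ω ×ˢ (univ ×ˢ univ)))
    (hHsymm : ∀ y ∈ Ω ×ˢ (univ ×ˢ univ), (H y).IsSymm) (hK : IsCompact K) (hKΩ : K ⊆ Ω)
    {B : ℝ} (hB : 0 ≤ B) :
    ∃ Λ : ℝ, 0 ≤ Λ ∧ ∀ u : (Fin n → ℝ) → ℝ, ContDiffOn ℝ 2 u Ω →
      IsAdmissibleSolution k f H Ω u → (∀ x ∈ K, |u x| ≤ B ∧ ∀ i, |pd i u x| ≤ B) →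
      ∀ᶠ h : ℝ in nhdsWithin 0 (Ioi 0), ∀ z ∈ K, ∀ F, IsGardingFunctional k F →
        (F * augHess H u z).trace = f (oneJet u z) →
        -(F * hess (discreteLaplacian h u) z).trace ≤ Λ * F.trace *
          (|discreteLaplacian h u z| + ∑ i, |pd i (discreteLaplacian h u) z| +
            hessSize u z ^ 2) := by
  obtain ⟨Λf, hΛf, hfbound⟩ :=
    exists_eventually_abs_discreteLaplacian_comp_oneJet_le hΩ hK hKΩ hf hB
  choose ΛH hΛH hHbound using fun i j =>
    exists_eventually_abs_discreteLaplacian_comp_oneJet_le hΩ hK hKΩ (hH i j) hB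
  refine ⟨Λf + ∑ i, ∑ j, ΛH i j, add_nonneg hΛf (Finset.sum_nonneg fun i _ =>
    Finset.sum_nonneg fun j _ => hΛH i j), fun u hu hsol huB => ?_⟩
  have hHbound' := Filter.eventually_all.2 fun i => Filter.eventually_all.2 fun j =>
    hHbound i j u hu huB
  filter_upwards [hfbound u hu huB, hHbound', eventually_subset_shrunk hΩ hK hKΩ]
    with h hfh hHh hsub z hz F hF hFz
  simp only [pd_discreteLaplacian hΩ (hu.of_le one_le_two) (hsub hz)]
  set T := |discreteLaplacian h u z| + ∑ i, |discreteLaplacian h (pd i u) z| + hessSize u z ^ 2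
  have _ : 0 ≤ T := add_nonneg (add_nonneg (abs_nonneg _) (Finset.sum_nonneg fun i _ =>
    abs_nonneg _)) (sq_nonneg _)
  have hconcave := discreteLaplacian_comp_oneJet_le_trace_mul hk hΩ hfpos hHsymm hu hsol
    (hsub hz) hF hFz
  set E : Matrix (Fin n) (Fin n) ℝ :=
    of fun i j => discreteLaplacian h (fun x => H (oneJet u x) i j) z
  have hE : ∑ i, ∑ j, |E i j| ≤ (∑ i, ∑ j, ΛH i j) * T := by
    simp only [Finset.sum_mul]
    exact Finset.sum_le_sum fun i _ => Finset.sum_le_sum fun j _ => hHh i j z hz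
  have hF0 : 0 ≤ F.trace := zero_le_one.trans hF.one_le_trace
  calc -(F * hess (discreteLaplacian h u) z).trace
      ≤ -discreteLaplacian h (fun x => f (oneJet u x)) z + -(F * E).trace := by linarith
    _ ≤ Λf * T + F.trace * ∑ i, ∑ j, |E i j| :=
        add_le_add ((neg_le_abs _).trans (hfh z hz)) ((neg_le_abs _).trans hF.abs_trace_mul_le)
    _ ≤ F.trace * (Λf * T) + F.trace * ((∑ i, ∑ j, ΛH i j) * T) := by
        gcongr ?_ + _ * ?_
        exact le_mul_of_one_le_left (by positivity) hF.one_le_trace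
    _ = (Λf + ∑ i, ∑ j, ΛH i j) * F.trace * T := by ring

/-- The properties of an approximation `v` of `Δu` on which the maximum principle argument rests:
`v` is comparable with the size of `∇²u`, and it is a subsolution, up to lower order terms, of an
elliptic operator `tr (F ∇² ·)` whose determinant and trace are controlled. -/
structure IsLaplacianSubsolutionAt (k : ℕ) (Λ : ℝ) (u v : (Fin n → ℝ) → ℝ) (z : Fin n → ℝ) :
    Prop where
  le_hessSize : v z ≤ hessSize u z
  hessSize_le : hessSize u z ≤ Λ + n ^ 2 * v z
  exists_functional : ∃ F, IsGardingFunctional k F ∧ F.trace ≤ Λ * hessSize u z ^ (k - 1) ∧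
    -(F * hess v z).trace ≤ Λ * F.trace * (|v z| + ∑ i, |pd i v z| + hessSize u z ^ 2)

theorem exists_eventually_isLaplacianSubsolutionAt (hk : 2 ≤ k) (hkn : k ≤ n) (hΩ : IsOpen Ω)
    (hfpos : ∀ y ∈ Ω ×ˢ (univ ×ˢ univ), 0 < f y) (hf : C11On f (Ω ×ˢ (univ ×ˢ univ)))
    (hH : ∀ i j, C11On (fun y => H y i j) (Ω ×ˢ (univ ×ˢ univ)))
    (hHsymm : ∀ y ∈ Ω ×ˢ (univ ×ˢ univ), (H y).IsSymm) (hK : IsCompact K) (hKΩ : K ⊆ Ω)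
    {B : ℝ} (hB : 0 ≤ B) :
    ∃ Λ : ℝ, 1 ≤ Λ ∧ ∀ u : (Fin n → ℝ) → ℝ, ContDiffOn ℝ 2 u Ω →
      IsAdmissibleSolution k f H Ω u → (∀ x ∈ K, |u x| ≤ B ∧ ∀ i, |pd i u x| ≤ B) →
      ∀ᶠ h : ℝ in nhdsWithin 0 (Ioi 0), K ⊆ shrunk Ω h ∧
        ∀ z ∈ K, IsLaplacianSubsolutionAt k Λ u (discreteLaplacian h u) z := by
  obtain ⟨Λ₁, hΛ₁, hsize⟩ :=
    exists_discreteLaplacian_hessSize_bounds (f := f) hk hkn hΩ hH hHsymm hK hKΩ B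
  obtain ⟨Λ₂, hΛ₂, htrace⟩ :=
    exists_isGardingFunctional_trace_le hk hkn hΩ hfpos hf hH hHsymm hK hKΩ B
  obtain ⟨Λ₃, hΛ₃, hsub⟩ := exists_neg_trace_mul_hess_discreteLaplacian_le (k := k) (by lia) hΩ
    hfpos hf hH hHsymm hK hKΩ hB
  refine ⟨Λ₁ + Λ₂ + Λ₃, by linarith, fun u hu hsol huB => ?_⟩
  filter_upwards [hsize u hu hsol huB, hsub u hu hsol huB, eventually_subset_shrunk hΩ hK hKΩ]
    with h hsizeh hsubh hshrunk
  refine ⟨hshrunk, fun z hz => ⟨(hsizeh z hz).1, (hsizeh z hz).2.trans (by linarith), ?_⟩⟩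
  obtain ⟨F, hF, hFz, hFtrace⟩ := htrace u hu hsol huB z hz
  have hF0 : 0 ≤ F.trace := zero_le_one.trans hF.one_le_trace
  have hg : 1 ≤ hessSize u z := one_le_hessSize u z
  have _ : 0 ≤ ∑ i, |pd i (discreteLaplacian h u) z| := Finset.sum_nonneg fun i _ => abs_nonneg _
  refine ⟨F, hF, hFtrace.trans ?_, (hsubh z hz F hF hFz).trans ?_⟩ <;> gcongr <;> linarith

end Linearisation

section ProductRules

variable {n : ℕ} {a c : (Fin n → ℝ) → ℝ} {z : Fin n → ℝ}

lemma pd_mul (ha : DifferentiableAt ℝ a z) (hc : DifferentiableAt ℝ c z) (i : Fin n) :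
    pd i (fun x => a x * c x) z = pd i a z * c z + a z * pd i c z := by
  unfold pd
  rw [fderiv_fun_mul ha hc]
  simp only [_root_.add_apply, _root_.smul_apply, smul_eq_mul]
  ring

lemma pd_pow_add_one (ha : DifferentiableAt ℝ a z) (m : ℕ) (i : Fin n) :
    pd i (fun x => a x ^ (m + 1)) z = (m + 1) * a z ^ m * pd i a z := by
  unfold pd
  rw [fderiv_fun_pow _ ha]
  simp

lemma differentiableAt_pd (ha : ContDiffAt ℝ 2 a z) (i : Fin n) : DifferentiableAt ℝ (pd i a) z :=
  (differentiableAt_fderiv ha).clm_apply (differentiableAt_const _)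

lemma eventually_differentiableAt (ha : ContDiffAt ℝ 2 a z) :
    ∀ᶠ y in nhds z, DifferentiableAt ℝ a y :=
  (ha.eventually (by simp)).mono fun _ hy => hy.differentiableAt two_ne_zero

lemma hess_mul_apply (ha : ContDiffAt ℝ 2 a z) (hc : ContDiffAt ℝ 2 c z) (i j : Fin n) :
    hess (fun x => a x * c x) z i j =
      a z * hess c z i j + (pd i a z * pd j c z + pd j a z * pd i c z) + c z * hess a z i j := by
  have hpd : pd j (fun x => a x * c x) =ᶠ[nhds z] fun y => pd j a y * c y + a y * pd j c y := by
    filter_upwards [eventually_differentiableAt ha, eventually_differentiableAt hc] with y hay hcy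
    exact pd_mul hay hcy j
  have ha' := ha.differentiableAt two_ne_zero
  have hc' := hc.differentiableAt two_ne_zero
  have hadd := fderiv_fun_add ((differentiableAt_pd ha j).fun_mul hc')
    (ha'.fun_mul (differentiableAt_pd hc j))
  calc hess (fun x => a x * c x) z i j
      = pd i (fun y => pd j a y * c y) z + pd i (fun y => a y * pd j c y) z :=
        DFunLike.congr_fun (hpd.fderiv_eq.trans hadd) _
    _ = pd i (pd j a) z * c z + pd j a z * pd i c z +
          (pd i a z * pd j c z + a z * pd i (pd j c) z) := by
        rw [pd_mul (differentiableAt_pd ha j) hc', pd_mul ha' (differentiableAt_pd hc j)]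
    _ = _ := by
        simp only [hess, of_apply]
        ring

lemma hess_pow_add_two_apply (ha : ContDiffAt ℝ 2 a z) (m : ℕ) (i j : Fin n) :
    hess (fun x => a x ^ (m + 2)) z i j =
      (m + 2) * a z ^ (m + 1) * hess a z i j +
        (m + 2) * (m + 1) * a z ^ m * (pd i a z * pd j a z) := by
  have hpd : pd j (fun x => a x ^ (m + 2)) =ᶠ[nhds z]
      fun y => (m + 2) * (a y ^ (m + 1) * pd j a y) := by
    filter_upwards [eventually_differentiableAt ha] with y hay
    rw [pd_pow_add_one hay (m + 1) j]
    push_cast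
    ring
  have ha' := ha.differentiableAt two_ne_zero
  have hmul := (ha'.fun_pow (m + 1)).fun_mul (differentiableAt_pd ha j)
  calc hess (fun x => a x ^ (m + 2)) z i j
      = (m + 2) * pd i (fun y => a y ^ (m + 1) * pd j a y) z :=
        DFunLike.congr_fun (hpd.fderiv_eq.trans (fderiv_const_mul hmul _)) _
    _ = (m + 2) * ((m + 1) * a z ^ m * pd i a z * pd j a z + a z ^ (m + 1) * pd i (pd j a) z) := by
        rw [pd_mul (ha'.fun_pow (m + 1)) (differentiableAt_pd ha j), pd_pow_add_one ha']
    _ = _ := by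
        simp only [hess, of_apply]
        ring

end ProductRules

section QuadraticCutoff

variable {n : ℕ} {x₁ z : Fin n → ℝ} {r : ℝ}

/-- The cutoff `1 − |x − x₁|² / r²`, vanishing on the sphere of radius `r` around `x₁`. -/
noncomputable def quadraticCutoff (x₁ : Fin n → ℝ) (r : ℝ) (x : Fin n → ℝ) : ℝ :=
  1 - normSq (x - x₁) / r ^ 2

lemma contDiff_quadraticCutoff (x₁ : Fin n → ℝ) (r : ℝ) : ContDiff ℝ 2 (quadraticCutoff x₁ r) := by
  unfold quadraticCutoff normSq
  simp only [Pi.sub_apply]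
  fun_prop

lemma quadraticCutoff_self (x₁ : Fin n → ℝ) (r : ℝ) : quadraticCutoff x₁ r x₁ = 1 := by
  simp [quadraticCutoff, normSq]

lemma quadraticCutoff_le_one (x₁ : Fin n → ℝ) (r : ℝ) (x : Fin n → ℝ) :
    quadraticCutoff x₁ r x ≤ 1 :=
  sub_le_self _ (div_nonneg (Finset.sum_nonneg fun _ _ => sq_nonneg _) (sq_nonneg r))

lemma quadraticCutoff_mul_sq (hr : 0 < r) :
    quadraticCutoff x₁ r z * r ^ 2 = (r - vnorm (z - x₁)) * (r + vnorm (z - x₁)) := by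
  rw [quadraticCutoff, sub_mul, div_mul_cancel₀ _ (by positivity), one_mul, ← vnorm_sq]
  ring

lemma quadraticCutoff_nonneg (hr : 0 < r) (hz : z ∈ euclideanClosedBall x₁ r) :
    0 ≤ quadraticCutoff x₁ r z := by
  have hz : vnorm (z - x₁) ≤ r := hz
  refine nonneg_of_mul_nonneg_left ?_ (pow_pos hr 2)
  rw [quadraticCutoff_mul_sq hr]
  exact mul_nonneg (by linarith) (by linarith [vnorm_nonneg (z - x₁)])

lemma quadraticCutoff_eq_zero_of_mem_frontier (hr : 0 < r)
    (hz : z ∈ frontier (euclideanClosedBall x₁ r)) : quadraticCutoff x₁ r z = 0 := by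
  have hmul := quadraticCutoff_mul_sq (x₁ := x₁) (z := z) hr
  rw [vnorm_sub_eq_of_mem_frontier hz, sub_self, zero_mul] at hmul
  exact (mul_eq_zero.1 hmul).resolve_right (by positivity)

lemma mul_quadraticCutoff_le (hr : 0 < r) :
    r * quadraticCutoff x₁ r z ≤ 2 * (r - vnorm (z - x₁)) := by
  refine le_of_mul_le_mul_left ?_ hr
  linarith [quadraticCutoff_mul_sq (x₁ := x₁) (z := z) hr, sq_nonneg (r - vnorm (z - x₁))]

lemma pd_quadraticCutoff (x₁ : Fin n → ℝ) (r : ℝ) (i : Fin n) (z : Fin n → ℝ) :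
    pd i (quadraticCutoff x₁ r) z = -2 / r ^ 2 * (z i - x₁ i) := by
  have hsum : HasFDerivAt (fun x : Fin n → ℝ => normSq (x - x₁)) (∑ j : Fin n,
      (2 * (z j - x₁ j)) • ContinuousLinearMap.proj (R := ℝ) (φ := fun _ : Fin n => ℝ) j) z :=
    HasFDerivAt.fun_sum fun j _ => by
      simpa using ((hasFDerivAt_apply (𝕜 := ℝ) j z).sub_const (x₁ j)).pow 2
  have hcutoff : HasFDerivAt (quadraticCutoff x₁ r) _ z := (hsum.mul_const (r ^ 2)⁻¹).const_sub 1
  rw [pd, hcutoff.fderiv]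
  simp [Pi.single_apply]
  ring

lemma hess_quadraticCutoff_apply (x₁ : Fin n → ℝ) (r : ℝ) (z : Fin n → ℝ) (i j : Fin n) :
    hess (quadraticCutoff x₁ r) z i j = if i = j then -2 / r ^ 2 else 0 := by
  have hlin := ((hasFDerivAt_apply (𝕜 := ℝ) j z).sub_const (x₁ j)).const_mul (-2 / r ^ 2)
  rw [hess, of_apply, funext (pd_quadraticCutoff x₁ r j), pd, hlin.fderiv]
  simp [Pi.single_apply, eq_comm]

lemma abs_pd_quadraticCutoff_le (hr : 0 < r) (hz : z ∈ euclideanClosedBall x₁ r) (i : Fin n) :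
    |pd i (quadraticCutoff x₁ r) z| ≤ 2 / r := by
  calc |pd i (quadraticCutoff x₁ r) z| = 2 / r ^ 2 * |z i - x₁ i| := by
        rw [pd_quadraticCutoff, abs_mul, neg_div, abs_neg, abs_of_pos (by positivity)]
    _ ≤ 2 / r ^ 2 * r := by
        gcongr
        exact (abs_apply_le_vnorm (z - x₁) i).trans hz
    _ = 2 / r := by field_simp

lemma abs_hess_quadraticCutoff_apply_le (x₁ : Fin n → ℝ) (r : ℝ) (z : Fin n → ℝ) (i j : Fin n) :
    |hess (quadraticCutoff x₁ r) z i j| ≤ 2 / r ^ 2 := by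
  rw [hess_quadraticCutoff_apply]
  split_ifs
  · rw [neg_div, abs_neg, abs_of_nonneg (by positivity)]
  · rw [abs_zero]
    positivity

lemma abs_pd_quadraticCutoff_pow_le (hr : 0 < r) (hz : z ∈ euclideanClosedBall x₁ r) (b : ℕ)
    (i : Fin n) : |pd i (fun x => quadraticCutoff x₁ r x ^ (b + 2)) z| ≤
      2 * (b + 2) / r * quadraticCutoff x₁ r z ^ (b + 1) := by
  have hρ := quadraticCutoff_nonneg hr hz
  have hdiff := (contDiff_quadraticCutoff x₁ r).differentiable two_ne_zero z
  calc |pd i (fun x => quadraticCutoff x₁ r x ^ (b + 2)) z|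
      = (b + 2) * quadraticCutoff x₁ r z ^ (b + 1) * |pd i (quadraticCutoff x₁ r) z| := by
        rw [pd_pow_add_one hdiff (b + 1), abs_mul, abs_of_nonneg (by positivity)]
        push_cast
        ring
    _ ≤ (b + 2) * quadraticCutoff x₁ r z ^ (b + 1) * (2 / r) := by
        gcongr
        exact abs_pd_quadraticCutoff_le hr hz i
    _ = 2 * (b + 2) / r * quadraticCutoff x₁ r z ^ (b + 1) := by ring

lemma abs_hess_quadraticCutoff_pow_apply_le (hr : 0 < r) (hz : z ∈ euclideanClosedBall x₁ r)
    (b : ℕ) (i j : Fin n) : |hess (fun x => quadraticCutoff x₁ r x ^ (b + 2)) z i j| ≤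
      (b + 2) * (4 * b + 6) / r ^ 2 * quadraticCutoff x₁ r z ^ b := by
  have hρ := quadraticCutoff_nonneg hr hz
  set ρ := quadraticCutoff x₁ r
  have hpow : ρ z ^ (b + 1) ≤ ρ z ^ b :=
    pow_le_pow_of_le_one hρ (quadraticCutoff_le_one x₁ r z) (Nat.le_succ b)
  have hfirst : |pd i ρ z * pd j ρ z| ≤ 2 / r * (2 / r) := by
    rw [abs_mul]
    exact mul_le_mul (abs_pd_quadraticCutoff_le hr hz i) (abs_pd_quadraticCutoff_le hr hz j)
      (abs_nonneg _) (by positivity)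
  rw [hess_pow_add_two_apply (contDiff_quadraticCutoff x₁ r).contDiffAt]
  calc |(b + 2) * ρ z ^ (b + 1) * hess ρ z i j +
        (b + 2) * (b + 1) * ρ z ^ b * (pd i ρ z * pd j ρ z)|
      ≤ (b + 2) * ρ z ^ (b + 1) * |hess ρ z i j| +
          (b + 2) * (b + 1) * ρ z ^ b * |pd i ρ z * pd j ρ z| := by
        refine (abs_add_le _ _).trans_eq ?_
        rw [abs_mul, abs_mul _ (pd i ρ z * _),
          abs_of_nonneg (by positivity : (0 : ℝ) ≤ (b + 2) * ρ z ^ (b + 1)),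
          abs_of_nonneg (by positivity : (0 : ℝ) ≤ (b + 2) * (b + 1) * ρ z ^ b)]
    _ ≤ (b + 2) * ρ z ^ b * (2 / r ^ 2) + (b + 2) * (b + 1) * ρ z ^ b * (2 / r * (2 / r)) := by
        gcongr
        exact abs_hess_quadraticCutoff_apply_le x₁ r z i j
    _ = (b + 2) * (4 * b + 6) / r ^ 2 * ρ z ^ b := by ring

end QuadraticCutoff

section Localization

variable {n : ℕ} {x₁ z : Fin n → ℝ} {r : ℝ} {b : ℕ} {v : (Fin n → ℝ) → ℝ}

/-- The localisation `ρ^{b+2} v` of `v` to the Euclidean ball of radius `r` around `x₁`, where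
`ρ = 1 − |x − x₁|² / r²`. -/
noncomputable def localized (x₁ : Fin n → ℝ) (r : ℝ) (b : ℕ) (v : (Fin n → ℝ) → ℝ)
    (x : Fin n → ℝ) : ℝ :=
  quadraticCutoff x₁ r x ^ (b + 2) * v x

lemma localized_self (x₁ : Fin n → ℝ) (r : ℝ) (b : ℕ) (v : (Fin n → ℝ) → ℝ) :
    localized x₁ r b v x₁ = v x₁ := by
  rw [localized, quadraticCutoff_self, one_pow, one_mul]

lemma contDiffOn_localized {V : Set (Fin n → ℝ)} (hv : ContDiffOn ℝ 2 v V) :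
    ContDiffOn ℝ 2 (localized x₁ r b v) V :=
  ((contDiff_quadraticCutoff x₁ r).pow (b + 2)).contDiffOn.mul hv

lemma localized_eq_zero_of_mem_frontier (hr : 0 < r)
    (hz : z ∈ frontier (euclideanClosedBall x₁ r)) : localized x₁ r b v z = 0 := by
  rw [localized, quadraticCutoff_eq_zero_of_mem_frontier hr hz, zero_pow (by lia), zero_mul]

lemma quadraticCutoff_pos_of_mem_upperContactSet (hr : 0 < r)
    (hz : z ∈ upperContactSet (localized x₁ r b v) (euclideanClosedBall x₁ r)) :
    0 < quadraticCutoff x₁ r z := by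
  refine (quadraticCutoff_nonneg hr hz.1).lt_of_ne fun hzero => hz.2.1.ne' ?_
  rw [localized, ← hzero, zero_pow (by lia), zero_mul]

lemma pos_of_mem_upperContactSet_localized (hr : 0 < r)
    (hz : z ∈ upperContactSet (localized x₁ r b v) (euclideanClosedBall x₁ r)) : 0 < v z :=
  pos_of_mul_pos_right hz.2.1 (pow_nonneg (quadraticCutoff_nonneg hr hz.1) _)

lemma abs_pd_localized_le (hr : 0 < r)
    (hz : z ∈ upperContactSet (localized x₁ r b v) (euclideanClosedBall x₁ r)) (i : Fin n) :
    |pd i (localized x₁ r b v) z| ≤ 2 / r * quadraticCutoff x₁ r z ^ (b + 1) * v z := by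
  have hρ := quadraticCutoff_pos_of_mem_upperContactSet hr hz
  have hinterior : ∀ x, vnorm (x - z) < r - vnorm (z - x₁) →
      x ∈ interior (euclideanClosedBall x₁ r) := fun x hx => by
    refine mem_interior_euclideanClosedBall ?_
    rw [← sub_add_sub_cancel x z x₁]
    exact (vnorm_add_le _ _).trans_lt (by linarith)
  have hgrad := vnorm_grad_mul_le_of_mem_upperContactSet (isCompact_euclideanClosedBall x₁ r)
    (fun x hx => (localized_eq_zero_of_mem_frontier hr hx).ge) hz hinterior
  have hmul : |pd i (localized x₁ r b v) z| * (r * quadraticCutoff x₁ r z) ≤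
      2 * localized x₁ r b v z := by
    calc |pd i (localized x₁ r b v) z| * (r * quadraticCutoff x₁ r z)
        ≤ vnorm (grad (localized x₁ r b v) z) * (2 * (r - vnorm (z - x₁))) :=
          mul_le_mul (abs_apply_le_vnorm (grad (localized x₁ r b v) z) i)
            (mul_quadraticCutoff_le hr) (by positivity) (vnorm_nonneg _)
      _ ≤ 2 * localized x₁ r b v z := by linarith
  refine ((le_div_iff₀ (by positivity)).2 hmul).trans_eq ?_
  rw [localized]
  field_simp
  ring

lemma quadraticCutoff_mul_abs_pd_le (hr : 0 < r) (hv : ContDiffAt ℝ 2 v z)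
    (hz : z ∈ upperContactSet (localized x₁ r b v) (euclideanClosedBall x₁ r)) (i : Fin n) :
    quadraticCutoff x₁ r z * |pd i v z| ≤ 2 * (b + 3) / r * v z := by
  have hρ := quadraticCutoff_pos_of_mem_upperContactSet hr hz
  have hv0 := pos_of_mem_upperContactSet_localized hr hz
  have hdiff := (contDiff_quadraticCutoff x₁ r).differentiable two_ne_zero z
  set ρ := quadraticCutoff x₁ r
  have hproduct : ρ z ^ (b + 2) * pd i v z =
      pd i (localized x₁ r b v) z - pd i (fun x => ρ x ^ (b + 2)) z * v z := by
    have hpd := pd_mul (hdiff.fun_pow (b + 2)) (hv.differentiableAt two_ne_zero) i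
    exact eq_sub_of_add_eq' hpd.symm
  refine le_of_mul_le_mul_left ?_ (pow_pos hρ (b + 1))
  calc ρ z ^ (b + 1) * (ρ z * |pd i v z|) = |ρ z ^ (b + 2) * pd i v z| := by
        rw [abs_mul, abs_of_pos (pow_pos hρ (b + 2))]
        ring
    _ ≤ |pd i (localized x₁ r b v) z| + |pd i (fun x => ρ x ^ (b + 2)) z| * v z := by
        rw [hproduct, ← abs_of_pos hv0, ← abs_mul, abs_of_pos hv0]
        exact abs_sub _ _
    _ ≤ 2 / r * ρ z ^ (b + 1) * v z + 2 * (b + 2) / r * ρ z ^ (b + 1) * v z := by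
        gcongr
        · exact abs_pd_localized_le hr hz i
        · exact abs_pd_quadraticCutoff_pow_le hr hz.1 b i
    _ = ρ z ^ (b + 1) * (2 * (b + 3) / r * v z) := by ring

lemma abs_hess_localized_sub_le (hr : 0 < r) (hv : ContDiffAt ℝ 2 v z)
    (hz : z ∈ upperContactSet (localized x₁ r b v) (euclideanClosedBall x₁ r)) (i j : Fin n) :
    |hess (localized x₁ r b v) z i j - quadraticCutoff x₁ r z ^ (b + 2) * hess v z i j| ≤
      6 * (b + 2) * (2 * b + 5) / r ^ 2 * (quadraticCutoff x₁ r z ^ b * v z) := by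
  have hρ := quadraticCutoff_pos_of_mem_upperContactSet hr hz
  have hv0 := pos_of_mem_upperContactSet_localized hr hz
  set ρ := quadraticCutoff x₁ r
  set P := fun x => ρ x ^ (b + 2)
  have hcross : ∀ i j, |pd i P z * pd j v z| ≤
      4 * (b + 2) * (b + 3) / r ^ 2 * (ρ z ^ b * v z) := fun i j => by
    calc |pd i P z * pd j v z| ≤ 2 * (b + 2) / r * ρ z ^ (b + 1) * |pd j v z| := by
          rw [abs_mul]
          gcongr
          exact abs_pd_quadraticCutoff_pow_le hr hz.1 b i
      _ = 2 * (b + 2) / r * ρ z ^ b * (ρ z * |pd j v z|) := by ring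
      _ ≤ 2 * (b + 2) / r * ρ z ^ b * (2 * (b + 3) / r * v z) := by
          refine mul_le_mul_of_nonneg_left ?_ (by positivity)
          exact quadraticCutoff_mul_abs_pd_le hr hv hz j
      _ = 4 * (b + 2) * (b + 3) / r ^ 2 * (ρ z ^ b * v z) := by ring
  have hexpand : hess (localized x₁ r b v) z i j - ρ z ^ (b + 2) * hess v z i j =
      pd i P z * pd j v z + pd j P z * pd i v z + v z * hess P z i j := by
    have hmul := hess_mul_apply ((contDiff_quadraticCutoff x₁ r).pow (b + 2)).contDiffAt hv i j
    exact sub_eq_of_eq_add' (hmul.trans (add_assoc _ _ _))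
  calc |hess (localized x₁ r b v) z i j - ρ z ^ (b + 2) * hess v z i j|
      ≤ |pd i P z * pd j v z| + |pd j P z * pd i v z| + v z * |hess P z i j| := by
        rw [hexpand, ← abs_of_pos hv0, ← abs_mul, abs_of_pos hv0]
        exact abs_add_three _ _ _
    _ ≤ 4 * (b + 2) * (b + 3) / r ^ 2 * (ρ z ^ b * v z) +
          4 * (b + 2) * (b + 3) / r ^ 2 * (ρ z ^ b * v z) +
          v z * ((b + 2) * (4 * b + 6) / r ^ 2 * ρ z ^ b) := by
        gcongr
        · exact hcross i j
        · exact hcross j i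
        · exact abs_hess_quadraticCutoff_pow_apply_le hr hz.1 b i j
    _ = 6 * (b + 2) * (2 * b + 5) / r ^ 2 * (ρ z ^ b * v z) := by ring

lemma quadraticCutoff_pow_mul_lowerOrder_le (hr : 0 < r) (hv : ContDiffAt ℝ 2 v z)
    (hz : z ∈ upperContactSet (localized x₁ r b v) (euclideanClosedBall x₁ r)) :
    quadraticCutoff x₁ r z ^ (b + 2) * (|v z| + ∑ i, |pd i v z|) ≤
      (1 + n * (2 * (b + 3) / r)) * (quadraticCutoff x₁ r z ^ b * v z) := by
  have hρ := quadraticCutoff_pos_of_mem_upperContactSet hr hz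
  have hρ1 := quadraticCutoff_le_one x₁ r z
  have hv0 := pos_of_mem_upperContactSet_localized hr hz
  set ρ := quadraticCutoff x₁ r z
  have hterm : ∀ i, ρ ^ (b + 2) * |pd i v z| ≤ 2 * (b + 3) / r * (ρ ^ b * v z) := fun i => by
    calc ρ ^ (b + 2) * |pd i v z| = ρ ^ (b + 1) * (ρ * |pd i v z|) := by ring
      _ ≤ ρ ^ b * (2 * (b + 3) / r * v z) :=
        mul_le_mul (pow_le_pow_of_le_one hρ.le hρ1 (by lia))
          (quadraticCutoff_mul_abs_pd_le hr hv hz i) (by positivity) (by positivity)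
      _ = 2 * (b + 3) / r * (ρ ^ b * v z) := by ring
  calc ρ ^ (b + 2) * (|v z| + ∑ i, |pd i v z|)
      = ρ ^ (b + 2) * v z + ∑ i, ρ ^ (b + 2) * |pd i v z| := by
        rw [mul_add, Finset.mul_sum, abs_of_pos hv0]
    _ ≤ ρ ^ b * v z + ∑ _i : Fin n, 2 * (b + 3) / r * (ρ ^ b * v z) := by
        gcongr ?_ * _ + ∑ i, ?_
        · exact pow_le_pow_of_le_one hρ.le hρ1 (by lia)
        · exact hterm _
    _ = (1 + n * (2 * (b + 3) / r)) * (ρ ^ b * v z) := by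
        rw [Finset.sum_const, Finset.card_univ, Fintype.card_fin, nsmul_eq_mul]
        ring

/-- The constant with which the localisation `ρ^{b+2} v` inherits, on its upper contact set, the
differential inequality of `v` with constant `Λ`. -/
noncomputable def localizationConst (n : ℕ) (Λ r : ℝ) (b : ℕ) : ℝ :=
  Λ * (1 + n * (2 * (b + 3) / r)) + n ^ 2 * (6 * (b + 2) * (2 * b + 5) / r ^ 2)

lemma localizationConst_pos {Λ : ℝ} (hΛ : 0 < Λ) (hr : 0 < r) : 0 < localizationConst n Λ r b := by
  unfold localizationConst
  positivity

lemma IsGardingFunctional.trace_mul_neg_hess_localized_le {k : ℕ} {F : Matrix (Fin n) (Fin n) ℝ}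
    (hF : IsGardingFunctional k F) {Λ g : ℝ} (hΛ : 0 ≤ Λ) (hr : 0 < r) (hv : ContDiffAt ℝ 2 v z)
    (hsub : -(F * hess v z).trace ≤ Λ * F.trace * (|v z| + ∑ i, |pd i v z| + g ^ 2))
    (hz : z ∈ upperContactSet (localized x₁ r b v) (euclideanClosedBall x₁ r)) :
    (F * -hess (localized x₁ r b v) z).trace ≤ localizationConst n Λ r b * F.trace *
      (quadraticCutoff x₁ r z ^ b * v z + quadraticCutoff x₁ r z ^ (b + 2) * g ^ 2) := by
  have hρ := quadraticCutoff_pos_of_mem_upperContactSet hr hz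
  have _ := pos_of_mem_upperContactSet_localized hr hz
  have hF0 : 0 ≤ F.trace := zero_le_one.trans hF.one_le_trace
  have hlower := quadraticCutoff_pow_mul_lowerOrder_le hr hv hz
  have herror := abs_hess_localized_sub_le hr hv hz
  set ρ := quadraticCutoff x₁ r z
  set c₁ : ℝ := 2 * (b + 3) / r with hc₁
  set c₂ : ℝ := 6 * (b + 2) * (2 * b + 5) / r ^ 2 with hc₂
  set N := hess (localized x₁ r b v) z - ρ ^ (b + 2) • hess v z
  have hN : ∑ i, ∑ j, |N i j| ≤ n ^ 2 * (c₂ * (ρ ^ b * v z)) := by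
    calc ∑ i, ∑ j, |N i j| ≤ ∑ _i : Fin n, ∑ _j : Fin n, c₂ * (ρ ^ b * v z) :=
          Finset.sum_le_sum fun i _ => Finset.sum_le_sum fun j _ => herror i j
      _ = n ^ 2 * (c₂ * (ρ ^ b * v z)) := by
          simp only [Finset.sum_const, Finset.card_univ, Fintype.card_fin, nsmul_eq_mul]
          ring
  have hsplit : (F * -hess (localized x₁ r b v) z).trace =
      ρ ^ (b + 2) * -(F * hess v z).trace + -(F * N).trace := by
    simp only [N, mul_neg, mul_sub, trace_neg, trace_sub, Matrix.mul_smul, trace_smul, smul_eq_mul]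
    ring
  calc (F * -hess (localized x₁ r b v) z).trace
      ≤ ρ ^ (b + 2) * (Λ * F.trace * (|v z| + ∑ i, |pd i v z| + g ^ 2)) +
          F.trace * ∑ i, ∑ j, |N i j| := by
        rw [hsplit]
        gcongr
        exact (neg_le_abs _).trans hF.abs_trace_mul_le
    _ = Λ * F.trace * (ρ ^ (b + 2) * (|v z| + ∑ i, |pd i v z|) + ρ ^ (b + 2) * g ^ 2) +
          F.trace * ∑ i, ∑ j, |N i j| := by ring
    _ ≤ Λ * F.trace * ((1 + n * c₁) * (ρ ^ b * v z) + ρ ^ (b + 2) * g ^ 2) +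
          F.trace * (n ^ 2 * (c₂ * (ρ ^ b * v z))) := by gcongr
    _ ≤ localizationConst n Λ r b * F.trace * (ρ ^ b * v z + ρ ^ (b + 2) * g ^ 2) := by
        rw [localizationConst, ← hc₁, ← hc₂]
        have hcross : 0 ≤ (Λ * (n * c₁) + n ^ 2 * c₂) * F.trace * (ρ ^ (b + 2) * g ^ 2) := by
          positivity
        linarith

end Localization

section Interpolation

variable {m x y θ : ℝ}

lemma rpow_one_sub_mul_rpow (hm : 0 < m) (θ : ℝ) : m ^ (1 - θ) * m ^ θ = m := by
  rw [← Real.rpow_add hm, sub_add_cancel, Real.rpow_one]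

lemma le_rpow_one_sub_mul_rpow (hx : 0 < x) (hxm : x ≤ m) (hxy : x ≤ y) (hθ : 0 ≤ θ)
    (hθ' : θ ≤ 1) : x ≤ m ^ (1 - θ) * y ^ θ := by
  rw [← rpow_one_sub_mul_rpow hx θ]
  have _ : 0 ≤ 1 - θ := sub_nonneg.2 hθ'
  have _ : 0 ≤ m := hx.le.trans hxm
  gcongr

lemma pow_mul_le_rpow_one_sub_mul_rpow {ρ v : ℝ} (hρ : 0 < ρ) (hv : 0 < v) (b : ℕ)
    (hm : ρ ^ (b + 2) * v ≤ m) :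
    ρ ^ b * v ≤ m ^ (1 - 2 / (b + 2) : ℝ) * v ^ (2 / (b + 2) : ℝ) := by
  have hθ : (0 : ℝ) ≤ 1 - 2 / (b + 2) := by
    rw [sub_nonneg, div_le_one (by positivity)]
    linarith [b.cast_nonneg (α := ℝ)]
  have hρb : (ρ ^ (b + 2)) ^ (1 - 2 / (b + 2) : ℝ) = ρ ^ b := by
    rw [← Real.rpow_natCast ρ (b + 2), ← Real.rpow_mul hρ.le, ← Real.rpow_natCast]
    congr 1
    push_cast
    field_simp
    ring
  calc ρ ^ b * v = (ρ ^ (b + 2) * v) ^ (1 - 2 / (b + 2) : ℝ) * v ^ (2 / (b + 2) : ℝ) := by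
        rw [Real.mul_rpow (by positivity) hv.le, hρb, mul_assoc, rpow_one_sub_mul_rpow hv]
    _ ≤ m ^ (1 - 2 / (b + 2) : ℝ) * v ^ (2 / (b + 2) : ℝ) := by gcongr

lemma pow_mul_add_pow_mul_sq_le {ρ v g L : ℝ} {b : ℕ} (hρ : 0 < ρ) (hρ' : ρ ≤ 1) (hv : 0 < v)
    (hg : 1 ≤ g) (hvg : v ≤ g) (hL : 1 ≤ L) (hm : 0 ≤ m) (hvm : ρ ^ (b + 2) * v ≤ m)
    (hgm : ρ ^ (b + 2) * g ≤ L * m) :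
    ρ ^ b * v + ρ ^ (b + 2) * g ^ 2 ≤
      (1 + L) * (m ^ (1 - 2 / (b + 2) : ℝ) * g ^ (1 + 2 / (b + 2) : ℝ)) := by
  have hg0 : 0 < g := by linarith
  have hfirst := pow_mul_le_rpow_one_sub_mul_rpow hρ hv b hvm
  set θ : ℝ := 2 / (b + 2)
  have hθ : 0 ≤ θ := by positivity
  have hθ' : θ ≤ 1 := div_le_one_of_le₀ (by linarith [b.cast_nonneg (α := ℝ)]) (by positivity)
  have hgθ : g ^ (1 + θ) = g * g ^ θ := by rw [Real.rpow_add hg0, Real.rpow_one]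
  have hLθ : L ^ (1 - θ) ≤ L := Real.rpow_le_self_of_one_le hL (by linarith)
  have hρg : ρ ^ (b + 2) * g ≤ (L * m) ^ (1 - θ) * g ^ θ :=
    le_rpow_one_sub_mul_rpow (by positivity) hgm
      (mul_le_of_le_one_left hg0.le (pow_le_one₀ hρ.le hρ')) hθ hθ'
  calc ρ ^ b * v + ρ ^ (b + 2) * g ^ 2 = ρ ^ b * v + ρ ^ (b + 2) * g * g := by ring
    _ ≤ m ^ (1 - θ) * g ^ (1 + θ) + L * m ^ (1 - θ) * g ^ θ * g := by
        gcongr ?_ + ?_ * g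
        · refine hfirst.trans ?_
          gcongr
          exact (Real.rpow_le_rpow hv.le hvg hθ).trans
            (Real.rpow_le_rpow_of_exponent_le hg (by linarith))
        · refine hρg.trans ?_
          rw [Real.mul_rpow (by linarith) hm]
          gcongr
    _ = (1 + L) * (m ^ (1 - θ) * g ^ (1 + θ)) := by
        rw [hgθ]
        ring

lemma le_rpow_of_div_pow_le_mul {n : ℕ} {A c Q : ℝ} (hn : n ≠ 0) (hm : 0 < m) (hc : 0 < c)
    (hθ : 0 < θ) (h : (m / c) ^ n ≤ (A * m ^ (1 - θ)) ^ n * Q) :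
    m ≤ ((A * c) ^ n * Q) ^ (1 / (n * θ)) := by
  have hmθ : (m ^ θ) ^ n ≤ (A * c) ^ n * Q := by
    refine le_of_mul_le_mul_left ?_ (pow_pos (Real.rpow_pos_of_pos hm (1 - θ)) n)
    calc (m ^ (1 - θ)) ^ n * (m ^ θ) ^ n = m ^ n := by
          rw [← mul_pow, rpow_one_sub_mul_rpow hm]
      _ ≤ (A * m ^ (1 - θ)) ^ n * Q * c ^ n := by rwa [div_pow, div_le_iff₀ (by positivity)] at h
      _ = (m ^ (1 - θ)) ^ n * ((A * c) ^ n * Q) := by ring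
  calc m = ((m ^ θ) ^ n) ^ (1 / (n * θ)) := by
        rw [← Real.rpow_natCast, ← Real.rpow_mul (by positivity), ← Real.rpow_mul hm.le]
        field_simp
        exact (Real.rpow_one m).symm
    _ ≤ ((A * c) ^ n * Q) ^ (1 / (n * θ)) := by gcongr

end Interpolation

lemma exists_nat_mul_add_two_div_le {n k p : ℝ} (hp : k * n < p) :
    ∃ b : ℕ, n * (k + 2 / (b + 2)) ≤ p := by
  obtain ⟨b, hb⟩ := exists_nat_ge (2 * n / (p - k * n))
  refine ⟨b, ?_⟩
  rw [div_le_iff₀ (sub_pos.2 hp)] at hb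
  have : 2 * n / (b + 2) ≤ p - k * n := by
    rw [div_le_iff₀ (by positivity)]
    linarith
  calc n * (k + 2 / (b + 2)) = k * n + 2 * n / (b + 2) := by ring
    _ ≤ p := by linarith

section LocalizedMaximum

variable {n k b : ℕ} {Λ r p : ℝ} {u v : (Fin n → ℝ) → ℝ} {V : Set (Fin n → ℝ)}
  {x₁ y₀ z : Fin n → ℝ}

lemma IsGardingFunctional.trace_mul_nonneg (hn : n ≠ 0) {F N : Matrix (Fin n) (Fin n) ℝ}
    (hF : IsGardingFunctional k F) (hN : N.PosSemidef) : 0 ≤ (F * N).trace := by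
  by_contra! hneg
  have hF0 : 0 < F.trace := zero_lt_one.trans_le hF.one_le_trace
  set s : ℝ := -(F * N).trace / F.trace with hs
  have hpos : (N + s • (1 : Matrix (Fin n) (Fin n) ℝ)).PosDef :=
    PosDef.posSemidef_add hN (PosDef.one.smul (div_pos (neg_pos.2 hneg) hF0))
  have htrace : (F * (N + s • (1 : Matrix (Fin n) (Fin n) ℝ))).trace = 0 := by
    rw [mul_add, trace_add, Matrix.mul_smul, mul_one, trace_smul, smul_eq_mul, hs,
      div_mul_cancel₀ _ hF0.ne', add_neg_cancel]
  have hdet := hF.det_le_trace_mul_pow hpos.posSemidef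
  rw [htrace, zero_pow hn] at hdet
  exact hpos.det_pos.not_ge hdet

/-- The constant `A` in the bound `|det ∇²w| ≤ (A m^{1-θ} |∇²u|^{k+θ})^n` for the localisation
`w = ρ^{b+2} v`, where `m = max w` and `θ = 2 / (b + 2)`. -/
noncomputable def detConst (n : ℕ) (Λ r : ℝ) (b : ℕ) : ℝ :=
  localizationConst n Λ r b * Λ * (1 + (Λ + n ^ 2))

lemma detConst_nonneg (hΛ : 1 ≤ Λ) (hr : 0 < r) : 0 ≤ detConst n Λ r b := by
  have := localizationConst_pos (n := n) (b := b) (zero_lt_one.trans_le hΛ) hr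
  unfold detConst
  positivity

lemma IsLaplacianSubsolutionAt.lowerOrder_le (hsub : IsLaplacianSubsolutionAt k Λ u v z)
    (hΛ : 1 ≤ Λ) (hr : 0 < r)
    (hz : z ∈ upperContactSet (localized x₁ r b v) (euclideanClosedBall x₁ r)) {m : ℝ}
    (hm : 1 ≤ m) (hzm : localized x₁ r b v z ≤ m) :
    quadraticCutoff x₁ r z ^ b * v z + quadraticCutoff x₁ r z ^ (b + 2) * hessSize u z ^ 2 ≤
      (1 + (Λ + n ^ 2)) * (m ^ (1 - 2 / (b + 2) : ℝ) * hessSize u z ^ (1 + 2 / (b + 2) : ℝ)) := by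
  have hρ := quadraticCutoff_pos_of_mem_upperContactSet hr hz
  have hρ' := quadraticCutoff_le_one x₁ r z
  refine pow_mul_add_pow_mul_sq_le hρ hρ' (pos_of_mem_upperContactSet_localized hr hz)
    (one_le_hessSize u z) hsub.le_hessSize (by nlinarith) (by linarith) hzm ?_
  set ρ := quadraticCutoff x₁ r z
  calc ρ ^ (b + 2) * hessSize u z ≤ ρ ^ (b + 2) * (Λ + n ^ 2 * v z) := by
        gcongr
        exact hsub.hessSize_le
    _ = ρ ^ (b + 2) * Λ + n ^ 2 * (ρ ^ (b + 2) * v z) := by ring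
    _ ≤ m * Λ + n ^ 2 * m := by
        gcongr
        · exact (pow_le_one₀ hρ.le hρ').trans hm
        · exact hzm
    _ = (Λ + n ^ 2) * m := by ring

lemma IsLaplacianSubsolutionAt.exists_trace_mul_neg_hess_localized_le
    (hsub : IsLaplacianSubsolutionAt k Λ u v z) (hk : 1 ≤ k) (hΛ : 1 ≤ Λ) (hr : 0 < r)
    (hv : ContDiffAt ℝ 2 v z)
    (hz : z ∈ upperContactSet (localized x₁ r b v) (euclideanClosedBall x₁ r)) {m : ℝ}
    (hm : 1 ≤ m) (hzm : localized x₁ r b v z ≤ m) :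
    ∃ F, IsGardingFunctional k F ∧ (F * -hess (localized x₁ r b v) z).trace ≤
      detConst n Λ r b * m ^ (1 - 2 / (b + 2) : ℝ) * hessSize u z ^ (k + 2 / (b + 2) : ℝ) := by
  obtain ⟨F, hF, hFtrace, hFv⟩ := hsub.exists_functional
  have hlower := hsub.lowerOrder_le hΛ hr hz hm hzm
  have hconst := localizationConst_pos (n := n) (b := b) (zero_lt_one.trans_le hΛ) hr
  have hg : 0 < hessSize u z := zero_lt_one.trans_le (one_le_hessSize u z)
  have hρ := quadraticCutoff_pos_of_mem_upperContactSet hr hz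
  have _ := pos_of_mem_upperContactSet_localized hr hz
  refine ⟨F, hF, (hF.trace_mul_neg_hess_localized_le (by linarith) hr hv hFv hz).trans ?_⟩
  set g := hessSize u z
  have hpow : g ^ (k - 1) * g ^ (1 + 2 / (b + 2) : ℝ) = g ^ (k + 2 / (b + 2) : ℝ) := by
    rw [← Real.rpow_natCast, ← Real.rpow_add hg, Nat.cast_sub hk, Nat.cast_one]
    congr 1
    ring
  calc localizationConst n Λ r b * F.trace *
        (quadraticCutoff x₁ r z ^ b * v z + quadraticCutoff x₁ r z ^ (b + 2) * g ^ 2)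
      ≤ localizationConst n Λ r b * (Λ * g ^ (k - 1)) *
          ((1 + (Λ + n ^ 2)) * (m ^ (1 - 2 / (b + 2) : ℝ) * g ^ (1 + 2 / (b + 2) : ℝ))) := by
        gcongr
    _ = detConst n Λ r b * m ^ (1 - 2 / (b + 2) : ℝ) *
          (g ^ (k - 1) * g ^ (1 + 2 / (b + 2) : ℝ)) := by
        rw [detConst]
        ring
    _ = _ := by rw [hpow]

lemma posSemidef_neg_hess_localized (hr : 0 < r) (hv : ContDiffAt ℝ 2 v z)
    (hz : z ∈ upperContactSet (localized x₁ r b v) (euclideanClosedBall x₁ r)) :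
    (-hess (localized x₁ r b v) z).PosSemidef :=
  posSemidef_neg_hess_of_mem_upperContactSet
    (((contDiff_quadraticCutoff x₁ r).pow (b + 2)).contDiffAt.mul hv) hz
    (mem_interior_of_pos (isCompact_euclideanClosedBall x₁ r).isClosed
      (fun _ hx => (localized_eq_zero_of_mem_frontier hr hx).le) hz.1 hz.2.1)

lemma IsLaplacianSubsolutionAt.abs_det_hess_localized_le
    (hsub : IsLaplacianSubsolutionAt k Λ u v z) (hn : n ≠ 0) (hk : 1 ≤ k) (hΛ : 1 ≤ Λ)
    (hr : 0 < r) (hp : n * (k + 2 / (b + 2)) ≤ p) (hv : ContDiffAt ℝ 2 v z)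
    (hz : z ∈ upperContactSet (localized x₁ r b v) (euclideanClosedBall x₁ r)) {m : ℝ}
    (hm : 1 ≤ m) (hzm : localized x₁ r b v z ≤ m) :
    |(hess (localized x₁ r b v) z).det| ≤
      (detConst n Λ r b * m ^ (1 - 2 / (b + 2) : ℝ)) ^ n * hessSize u z ^ p := by
  obtain ⟨F, hF, htrace⟩ :=
    hsub.exists_trace_mul_neg_hess_localized_le hk hΛ hr hv hz hm hzm
  have hneg := posSemidef_neg_hess_localized hr hv hz
  have hg := one_le_hessSize u z
  have hconst := detConst_nonneg (n := n) (b := b) hΛ hr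
  set N := hess (localized x₁ r b v) z
  calc |N.det| = (-N).det := by
        rw [← abs_of_nonneg hneg.det_nonneg, det_neg, abs_mul, abs_pow, abs_neg, abs_one, one_pow,
          one_mul]
    _ ≤ (F * -N).trace ^ n := hF.det_le_trace_mul_pow hneg
    _ ≤ (detConst n Λ r b * m ^ (1 - 2 / (b + 2) : ℝ) *
          hessSize u z ^ (k + 2 / (b + 2) : ℝ)) ^ n :=
        pow_le_pow_left₀ (hF.trace_mul_nonneg hn hneg) htrace n
    _ ≤ _ := by
        rw [mul_pow, ← Real.rpow_natCast (hessSize u z ^ _), ← Real.rpow_mul (by linarith)]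
        gcongr
        linarith

/-- If `max w > 1`, the ABP estimate for `w = localized x₁ r b v` bounds `(max w)^n` by a constant
times `(max w)^{n(1-θ)}`. -/
lemma localized_le_of_isLaplacianSubsolutionAt (hn : 1 ≤ n) (hk : 1 ≤ k) (hΛ : 1 ≤ Λ)
    (hr : 0 < r) (hp : n * (k + 2 / (b + 2)) ≤ p) (hV : IsOpen V) (hv : ContDiffOn ℝ 2 v V)
    (hball : euclideanClosedBall x₁ r ⊆ V)
    (hsub : ∀ z ∈ euclideanClosedBall x₁ r, IsLaplacianSubsolutionAt k Λ u v z) {Q : ℝ}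
    (hQ : 0 ≤ Q)
    (hint : ∫⁻ z in euclideanClosedBall x₁ r, ENNReal.ofReal (hessSize u z ^ p) ≤
      ENNReal.ofReal Q) (hy₀ : y₀ ∈ euclideanClosedBall x₁ r)
    (hmax : IsMaxOn (localized x₁ r b v) (euclideanClosedBall x₁ r) y₀)
    (hm : 1 ≤ localized x₁ r b v y₀) :
    localized x₁ r b v y₀ ≤
      ((detConst n Λ r b * (r * n)) ^ n * Q) ^ (1 / (n * (2 / (b + 2))) : ℝ) := by
  have _ : (0 : ℝ) < n := by exact_mod_cast hn
  have hconst := detConst_nonneg (n := n) (b := b) hΛ hr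
  have hw : ContDiffOn ℝ 2 (localized x₁ r b v) V := contDiffOn_localized hv
  have hD := isCompact_euclideanClosedBall x₁ r
  set w := localized x₁ r b v
  set D := euclideanClosedBall x₁ r
  refine le_rpow_of_div_pow_le_mul (by lia) (by linarith) (by positivity) (by positivity) ?_
  have hdiam : ∀ x ∈ D, dist y₀ x ≤ 2 * r := fun x hx => by
    have hclosed := euclideanClosedBall_subset_closedBall x₁ r
    linarith [dist_triangle_right y₀ x x₁, mem_closedBall.1 (hclosed hy₀),
      mem_closedBall.1 (hclosed hx)]
  set A := detConst n Λ r b * w y₀ ^ (1 - 2 / (b + 2) : ℝ)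
  have hA : 0 ≤ A ^ n := by positivity
  rw [← ENNReal.ofReal_le_ofReal_iff (by positivity)]
  calc ENNReal.ofReal ((w y₀ / (r * n)) ^ n)
      = ENNReal.ofReal ((2 * w y₀ / (n * (2 * r))) ^ n) := by
        congr 2
        field_simp
    _ ≤ ∫⁻ z in upperContactSet w D, ENNReal.ofReal |(hess w z).det| :=
        ofReal_pow_le_setLIntegral_abs_det_hess hn hV hw hD hball
          (fun _ hx => (localized_eq_zero_of_mem_frontier hr hx).le) (by positivity) hdiam hy₀
          (by linarith)
    _ ≤ ∫⁻ z in upperContactSet w D, ENNReal.ofReal (A ^ n) * ENNReal.ofReal (hessSize u z ^ p) :=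
        setLIntegral_mono' (measurableSet_upperContactSet hV (hw.of_le one_le_two) hD.isClosed
          hball) fun z hz => by
            rw [← ENNReal.ofReal_mul hA]
            exact ENNReal.ofReal_le_ofReal ((hsub z hz.1).abs_det_hess_localized_le (by lia) hk hΛ
              hr hp (hv.contDiffAt (hV.mem_nhds (hball hz.1))) hz hm (hmax hz.1))
    _ ≤ ENNReal.ofReal (A ^ n * Q) := by
        rw [lintegral_const_mul' _ _ ENNReal.ofReal_ne_top, ENNReal.ofReal_mul hA]
        gcongr
        exact (lintegral_mono_set fun _ hz => hz.1).trans hint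

lemma exists_le_of_isLaplacianSubsolutionAt (hn : 1 ≤ n) (hk : 1 ≤ k) (hp : k * n < p)
    (hΛ : 1 ≤ Λ) (hr : 0 < r) {K : ENNReal} (hK : K ≠ ⊤) :
    ∃ C : ℝ, ∀ (u v : (Fin n → ℝ) → ℝ) (V : Set (Fin n → ℝ)) (x₁ : Fin n → ℝ), IsOpen V →
      ContDiffOn ℝ 2 v V → euclideanClosedBall x₁ r ⊆ V →
      (∀ z ∈ euclideanClosedBall x₁ r, IsLaplacianSubsolutionAt k Λ u v z) →
      ∫⁻ z in euclideanClosedBall x₁ r, ENNReal.ofReal (hessSize u z ^ p) ≤ K → v x₁ ≤ C := by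
  obtain ⟨b, hb⟩ := exists_nat_mul_add_two_div_le hp
  refine ⟨max 1 (((detConst n Λ r b * (r * n)) ^ n * K.toReal) ^ (1 / (n * (2 / (b + 2))) : ℝ)),
    fun u v V x₁ hV hv hball hsub hint => ?_⟩
  have hx₁ := self_mem_euclideanClosedBall x₁ hr.le
  obtain ⟨y₀, hy₀, hmax⟩ := (isCompact_euclideanClosedBall x₁ r).exists_isMaxOn ⟨x₁, hx₁⟩
    ((contDiffOn_localized (x₁ := x₁) (r := r) (b := b) hv).continuousOn.mono hball)
  rw [← localized_self x₁ r b v]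
  refine (hmax hx₁).trans (le_max_iff.2 ?_)
  refine (le_total (localized x₁ r b v y₀) 1).imp_right fun hm => ?_
  exact localized_le_of_isLaplacianSubsolutionAt hn hk hΛ hr hb hV hv hball hsub
    ENNReal.toReal_nonneg (hint.trans_eq (ENNReal.ofReal_toReal hK).symm) hy₀ hmax hm

end LocalizedMaximum

theorem interior_hessian_estimate_sigmak_generalH_general
    {n : ℕ} (k : ℕ) (hk : 2 ≤ k) (hkn : k ≤ n)
    (Ω : Set (Fin n → ℝ)) (hΩ : IsOpen Ω)
    (p : ℝ) (hp : (k * n : ℝ) < p)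
    (f : ((Fin n → ℝ) × ℝ × (Fin n → ℝ)) → ℝ)
    (hfpos : ∀ y ∈ Ω ×ˢ ((univ : Set ℝ) ×ˢ (univ : Set (Fin n → ℝ))), 0 < f y)
    (hf : C11On f (Ω ×ˢ ((univ : Set ℝ) ×ˢ (univ : Set (Fin n → ℝ)))))
    (H : ((Fin n → ℝ) × ℝ × (Fin n → ℝ)) → Matrix (Fin n) (Fin n) ℝ)
    (hH : ∀ i j : Fin n,
      C11On (fun y => H y i j) (Ω ×ˢ ((univ : Set ℝ) ×ˢ (univ : Set (Fin n → ℝ)))))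
    (hHsymm : ∀ y ∈ Ω ×ˢ ((univ : Set ℝ) ×ˢ (univ : Set (Fin n → ℝ))), (H y).IsSymm)
    (x₀ : Fin n → ℝ) (R : ℝ) (hR : 0 < R)
    (hball : closure (ball x₀ (2 * R)) ⊆ Ω) (M : ℝ) :
    ∃ C : ℝ, ∀ u : (Fin n → ℝ) → ℝ, ContDiffOn ℝ 2 u Ω → IsAdmissibleSolution k f H Ω u →
      W2pNorm p u (ball x₀ (2 * R)) ≤ M → ∀ x ∈ ball x₀ R, matNorm (hess u x) ≤ C := by
  have hn : (1 : ℝ) ≤ n := by exact_mod_cast (by lia : 1 ≤ n)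
  have hk' : (1 : ℝ) ≤ k := by exact_mod_cast one_le_two.trans hk
  have hnp : (n : ℝ) < p := (le_mul_of_one_le_left (by linarith) hk').trans_lt hp
  obtain ⟨B, hB, hbound⟩ :=
    exists_abs_le_of_W2pNorm_le (hn.trans hnp.le) hnp hΩ x₀ (by positivity) hball M
  obtain ⟨K, hK, hint⟩ := exists_setLIntegral_hessSize_rpow_le (hn.trans hnp.le) hΩ
    measurableSet_ball isBounded_ball hball M
  have hKB : closedBall x₀ (3 * R / 2) ⊆ ball x₀ (2 * R) := closedBall_subset_ball (by linarith)
  obtain ⟨Λ, hΛ, hsub⟩ := exists_eventually_isLaplacianSubsolutionAt hk hkn hΩ hfpos hf hH hHsymm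
    (isCompact_closedBall x₀ (3 * R / 2)) (hKB.trans (subset_closure.trans hball)) hB
  obtain ⟨C, hC⟩ := exists_le_of_isLaplacianSubsolutionAt (by lia) (by lia) hp hΛ (half_pos hR) hK
  refine ⟨Λ + n ^ 2 * C, fun u hu hsol hM x hx => ?_⟩
  obtain ⟨h, hshrunk, hsub⟩ := (hsub u hu hsol fun x hx => hbound u hu hM x (hKB hx)).exists
  have hDK : euclideanClosedBall x (R / 2) ⊆ closedBall x₀ (3 * R / 2) :=
    (euclideanClosedBall_subset_closedBall x _).trans
      (closedBall_subset_closedBall' (by linarith [mem_ball.1 hx]))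
  have hCx := hC u (discreteLaplacian h u) (shrunk Ω h) x (isOpen_shrunk hΩ h)
    (contDiffOn_discreteLaplacian h hu) (hDK.trans hshrunk) (fun z hz => hsub z (hDK hz))
    ((lintegral_mono_set (hDK.trans hKB)).trans (hint u hu hM))
  have hgx := (hsub x (hDK (self_mem_euclideanClosedBall x (by positivity)))).hessSize_le
  exact (matNorm_hess_le_hessSize u x).trans (hgx.trans (by gcongr))

/-- Interior Hessian estimate for `σ_k` augmented Hessian equations
with general `H` under stronger integrability (a priori form of Theorem 6.1). -/
theorem interior_hessian_estimate_sigmak_generalH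
    {n : ℕ} (hn : 3 ≤ n) (k : ℕ) (hk3 : 3 ≤ k) (hkn : k ≤ n)
    (Ω : Set (Fin n → ℝ)) (hΩ : IsOpen Ω)
    (p : ℝ) (hp : (k * n : ℝ) < p)
    (f : ((Fin n → ℝ) × ℝ × (Fin n → ℝ)) → ℝ)
    (hfpos : ∀ y ∈ Ω ×ˢ ((univ : Set ℝ) ×ˢ (univ : Set (Fin n → ℝ))), 0 < f y)
    (hf : C11On f (Ω ×ˢ ((univ : Set ℝ) ×ˢ (univ : Set (Fin n → ℝ)))))
    (H : ((Fin n → ℝ) × ℝ × (Fin n → ℝ)) → Matrix (Fin n) (Fin n) ℝ)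
    (hH : ∀ i j : Fin n,
      C11On (fun y => H y i j) (Ω ×ˢ ((univ : Set ℝ) ×ˢ (univ : Set (Fin n → ℝ)))))
    (hHsymm : ∀ y ∈ Ω ×ˢ ((univ : Set ℝ) ×ˢ (univ : Set (Fin n → ℝ))), (H y).IsSymm)
    (x₀ : Fin n → ℝ) (R : ℝ) (hR : 0 < R)
    (hball : closure (ball x₀ (2 * R)) ⊆ Ω)
    (M : ℝ) (hM : 0 < M) :
    ∃ C : ℝ, ∀ u : (Fin n → ℝ) → ℝ,
      ContDiffOn ℝ 2 u Ω →
      (∀ x ∈ Ω,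
        esymmMat k (hess u x - H (x, u x, grad u x))
          = f (x, u x, grad u x) ^ k ∧
        GammaPlus k (hess u x - H (x, u x, grad u x))) →
      W2pNorm p u (ball x₀ (2 * R)) ≤ M →
      ∀ x ∈ ball x₀ R, matNorm (hess u x) ≤ C := by
  exact interior_hessian_estimate_sigmak_generalH_general k (by lia) hkn Ω hΩ p hp f hfpos hf H hH
    hHsymm x₀ R hR hball M
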